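/- arXiv:1904.01423 — 2 statements merged into one kernel-verified Lean document; each statement's English description precedes it below -/
import Mathlib

section
/- Let σ : Σ⁺ → Σ⁺ be a topologically mixing one-sided subshift of finite type with finite alphabet, G a countable group, and T_ψ the group extension determined by a map ψ depending on two coordinates. If T_ψ is transitive, then h_Gur(T_ψ) = h_Gur(T_{ψ^ab}) if and only if G is amenable. -/
/-!
STATEMENT 2: For a topologically mixing one-sided subshift of finite type with finite
alphabet, a countable group `G` and a transitive group extension `T_ψ` (with `ψ` depending
on two coordinates), the Gurevič entropies satisfy
`h_Gur(T_ψ) = h_Gur(T_{ψ^ab})` if and only if `G` is amenable.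
-/

open Filter

namespace DS

/-- The one-sided shift space determined by a 0-1 transition matrix `A` on the alphabet `S`. -/
def Space {S : Type*} (A : S → S → Bool) : Type _ :=
  {x : ℕ → S // ∀ n : ℕ, A (x n) (x (n + 1)) = true}

variable {S : Type*} {A : S → S → Bool}

/-- The (one-sided) shift map. -/
def shift (x : Space A) : Space A :=
  ⟨fun n => x.1 (n + 1), fun n => x.2 (n + 1)⟩

/-- Aperiodicity of the transition matrix: some power of `A` has all entries positive,
i.e. there is `N ≥ 1` such that any two symbols are joined by an admissible word of
length `N`.  (For subshifts of finite type this is topological mixing.) -/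
def Aperiodic (A : S → S → Bool) : Prop :=
  ∃ N : ℕ, 0 < N ∧ ∀ i j : S, ∃ w : ℕ → S,
    w 0 = i ∧ w N = j ∧ ∀ k < N, A (w k) (w (k + 1)) = true

/-- `ψ` depends only on the first two coordinates. -/
def TwoCoord {G : Type*} (ψ : Space A → G) : Prop :=
  ∀ x y : Space A, x.1 0 = y.1 0 → x.1 1 = y.1 1 → ψ x = ψ y

variable {G : Type*} [Group G]

/-- The cocycle `ψⁿ(x) = ψ(x) ψ(σx) ⋯ ψ(σ^{n-1}x)`. -/
def cocycle (ψ : Space A → G) : ℕ → Space A → G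
  | 0, _ => 1
  | n + 1, x => ψ x * cocycle ψ n (shift x)

/-- The group extension `T_ψ(x,g) = (σ x, g ψ(x))`. -/
def T (ψ : Space A → G) (p : Space A × G) : Space A × G :=
  (shift p.1, p.2 * ψ p.1)

/-- Topological transitivity of the group extension `T_ψ` (density of some orbit in the
product of the shift space, with its product topology over the discrete alphabet, and the
discrete group: the orbit enters every cylinder-times-group-element set). -/
def TransitiveExt (ψ : Space A → G) : Prop :=
  ∃ p : Space A × G, ∀ (m : ℕ) (y : Space A) (g : G), ∃ n : ℕ,
    (∀ j < m, ((T ψ)^[n] p).1.1 j = y.1 j) ∧ ((T ψ)^[n] p).2 = g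

/-- Gurevič entropy of the group extension: the exponential growth rate of the number of
periodic points `σⁿ x = x` with trivial cocycle `ψⁿ(x) = e`. -/
noncomputable def hGur (ψ : Space A → G) : ℝ :=
  Filter.atTop.limsup fun n : ℕ =>
    Real.log (Nat.card {x : Space A // shift^[n] x = x ∧ cocycle ψ n x = 1}) / n

/-- Amenability of `G`: existence of a Banach mean, i.e. a linear functional on the
bounded real-valued functions on `G` which is `G`-invariant and lies between `inf` and
`sup`. -/
def Amenable (G : Type*) [Group G] : Prop :=
  ∃ m : (G → ℝ) → ℝ,
    (∀ x y : G → ℝ, m (x + y) = m x + m y) ∧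
    (∀ (c : ℝ) (x : G → ℝ), m (c • x) = c * m x) ∧
    (∀ x : G → ℝ, Bornology.IsBounded (Set.range x) →
      (∀ g : G, m (fun h => x (h * g)) = m x) ∧
      sInf (Set.range x) ≤ m x ∧ m x ≤ sSup (Set.range x))

end DS

open DS

/-!
Let `c` be the transition matrix and `L` the operator
`(L f)(s, g) = ∑ t, c s t * f (t, g * φ s t)` on functions on `S × G`, where `φ` labels the edges by
the values of `ψ`. The exponential of the Gurevič entropy is the smallest `r` for which `L` has a
positive function `H` with `L H ≤ r H`.

If `G` is amenable, averaging `log H (s, g * γ) - log H (s, g)` over `g` with an invariant mean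
gives, by Jensen's inequality, such a function of the form `χ g * v s` with `χ` a character of `G`.
Since `χ` factors through `Gᵃᵇ`, it also bounds the entropy of the abelianized extension.

Conversely, `Gᵃᵇ` is amenable, so for `r` the exponential of the entropy of the abelianized
extension there are such `χ` and `v`. Conjugating `L` by `χ` and by Perron–Frobenius eigenvectors,
and dividing by `r`, turns it into a contraction of `ℓ²` without changing the diagonal of its powers
beyond the factor `r ^ n`. If the entropies agree, this diagonal does not decay exponentially, hence
`G` has almost invariant vectors in `ℓ²` and is amenable by Kesten's argument.
-/

open scoped Matrix lp

namespace SubshiftExtension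

section PositiveOperators

variable {X : Type*} {L : (X → ℝ) →L[ℝ] (X → ℝ)} {r q : ℝ} {H : X → ℝ}

/-- The matrix entry `Lⁿ(x, y)` of the `n`-th power of an operator on `ℝ^X`, that is, the value
at `x` of `Lⁿ` applied to the indicator function of `y`. Continuity of `L` for the product topology
says that every row of this possibly infinite matrix is finite. -/
noncomputable def kernel (L : (X → ℝ) →L[ℝ] (X → ℝ)) (n : ℕ) (x y : X) : ℝ :=
  (L ^ n) (Set.indicator {y} 1) x

/-- Irreducibility of the matrix of an operator on `ℝ^X`, in the sense of Perron–Frobenius theory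
(compare `Matrix.isIrreducible_iff_exists_pow_pos`). -/
def IsIrreducible (L : (X → ℝ) →L[ℝ] (X → ℝ)) : Prop :=
  ∀ x y, ∃ n > 0, 0 < kernel L n x y

lemma monotone_pow (hL : Monotone L) (n : ℕ) : Monotone (L ^ n) := by
  rw [FunLike.coe_pow_eq_iterate]
  exact hL.iterate n

lemma kernel_nonneg (hL : Monotone L) (n : ℕ) (x y : X) : 0 ≤ kernel L n x y :=
  (monotone_iff_map_nonneg _).1 (monotone_pow hL n) _
    (fun _ => Set.indicator_nonneg (fun _ _ => zero_le_one) _) x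

lemma kernel_mul_le_pow_apply (hL : Monotone L) (hH : 0 ≤ H) (n : ℕ) (x y : X) :
    kernel L n x y * H y ≤ (L ^ n) H x := by
  have hle : H y • Set.indicator {y} 1 ≤ H := by
    intro z
    by_cases hz : z = y
    · simp [hz]
    · simpa [hz] using hH z
  calc kernel L n x y * H y = (L ^ n) (H y • Set.indicator {y} 1) x := by
        rw [map_smul, Pi.smul_apply, smul_eq_mul, mul_comm, kernel]
    _ ≤ (L ^ n) H x := monotone_pow hL n hle x

lemma kernel_mul_kernel_le (hL : Monotone L) (n k : ℕ) (x y z : X) :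
    kernel L n x y * kernel L k y z ≤ kernel L (n + k) x z :=
  calc kernel L n x y * kernel L k y z
      ≤ (L ^ n) ((L ^ k) (Set.indicator {z} 1)) x :=
        kernel_mul_le_pow_apply hL (fun w => kernel_nonneg hL k w z) n x y
    _ = kernel L (n + k) x z := by rw [kernel, pow_add]; rfl

lemma pow_apply_le (hL : Monotone L) (hr : 0 ≤ r) (hH : L H ≤ r • H) (n : ℕ) :
    (L ^ n) H ≤ r ^ n • H := by
  induction n with
  | zero => simp
  | succ n ih =>
    calc (L ^ (n + 1)) H = (L ^ n) (L H) := by rw [pow_succ]; rfl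
      _ ≤ (L ^ n) (r • H) := monotone_pow hL n hH
      _ = r • (L ^ n) H := map_smul _ _ _
      _ ≤ r • r ^ n • H := smul_le_smul_of_nonneg_left ih hr
      _ = r ^ (n + 1) • H := by rw [smul_smul, pow_succ']

lemma kernel_mul_le (hL : Monotone L) (hr : 0 ≤ r) (hH0 : 0 ≤ H) (hH : L H ≤ r • H) (n : ℕ)
    (x y : X) : kernel L n x y * H y ≤ r ^ n * H x :=
  (kernel_mul_le_pow_apply hL hH0 n x y).trans (pow_apply_le hL hr hH n x)

open Asymptotics in
lemma IsIrreducible.kernel_isBigO (hirr : IsIrreducible L) (hL : Monotone L) (hq : 0 < q) {x : X}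
    (h : (kernel L · x x) =O[atTop] (q ^ ·)) (y z : X) : (kernel L · y z) =O[atTop] (q ^ ·) := by
  obtain ⟨k, -, hk⟩ := hirr x y
  obtain ⟨l, -, hl⟩ := hirr z x
  obtain ⟨C, -, hC⟩ := bound_of_isBigO_nat_atTop h
  refine IsBigO.of_bound (C * q ^ (k + l) / (kernel L k x y * kernel L l z x))
    (Eventually.of_forall fun n => ?_)
  have hloop : kernel L k x y * kernel L n y z * kernel L l z x ≤ kernel L (k + n + l) x x :=
    (mul_le_mul_of_nonneg_right (kernel_mul_kernel_le hL k n x y z) hl.le).trans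
      (kernel_mul_kernel_le hL (k + n) l x z x)
  have hgrowth : kernel L (k + n + l) x x ≤ C * q ^ (k + n + l) := by
    simpa [abs_of_nonneg, kernel_nonneg hL, hq.le] using
      hC (x := k + n + l) (pow_ne_zero _ hq.ne')
  rw [Real.norm_of_nonneg (kernel_nonneg hL n y z), Real.norm_of_nonneg (pow_nonneg hq.le n),
    div_mul_eq_mul_div, le_div_iff₀ (mul_pos hk hl)]
  calc kernel L n y z * (kernel L k x y * kernel L l z x)
      = kernel L k x y * kernel L n y z * kernel L l z x := by ring
    _ ≤ C * q ^ (k + n + l) := hloop.trans hgrowth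
    _ = C * q ^ (k + l) * q ^ n := by ring

/-- The witness is the Green function `∑ₙ r⁻ⁿ Lⁿ(·, z)`. -/
lemma exists_superharmonic_of_lt (hirr : IsIrreducible L) (hL : Monotone L) (hq : 0 < q)
    (hqr : q < r) {z : X} (h : (kernel L · z z) =O[atTop] (q ^ ·)) :
    ∃ H : X → ℝ, (∀ x, 0 < H x) ∧ L H ≤ r • H := by
  have hr : 0 < r := hq.trans hqr
  set f : ℕ → X → ℝ := fun n => r⁻¹ ^ n • (L ^ n) (Set.indicator {z} 1)
  have hf0 (n : ℕ) (x : X) : 0 ≤ f n x :=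
    mul_nonneg (pow_nonneg (inv_nonneg.2 hr.le) n) (kernel_nonneg hL n x z)
  have hfx (x : X) : Summable fun n => f n x := by
    have hgeom : Summable fun n => (q / r) ^ n :=
      summable_geometric_of_lt_one (div_nonneg hq.le hr.le) ((div_lt_one hr).2 hqr)
    refine summable_of_isBigO_nat hgeom ?_
    have hmul := (Asymptotics.isBigO_refl (fun n : ℕ => r⁻¹ ^ n) atTop).mul
      (hirr.kernel_isBigO hL hq h x z)
    exact hmul.congr_right fun n => by rw [← mul_pow, div_eq_inv_mul]
  have hf : Summable f := Pi.summable.2 hfx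
  refine ⟨∑' n, f n, fun x => ?_, ?_⟩
  · obtain ⟨n, -, hn⟩ := hirr x z
    rw [tsum_apply hf]
    exact (hfx x).tsum_pos (fun n => hf0 n x) n (mul_pos (pow_pos (inv_pos.2 hr) n) hn)
  · have hstep (n : ℕ) : L (f n) = r • f (n + 1) := by
      simp only [f, map_smul, smul_smul, pow_succ' r⁻¹, pow_succ' L, mul_inv_cancel_left₀ hr.ne']
      rfl
    calc L (∑' n, f n) = r • ∑' n, f (n + 1) := by
          rw [L.map_tsum hf, tsum_congr hstep, tsum_const_smul'' r]
      _ ≤ r • ∑' n, f n := by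
          refine smul_le_smul_of_nonneg_left ?_ hr.le
          rw [hf.tsum_eq_zero_add]
          exact le_add_of_nonneg_left (hf0 0)

lemma exists_superharmonic_apply_eq_one {z : X} (h : ∃ H : X → ℝ, (∀ x, 0 < H x) ∧ L H ≤ r • H) :
    ∃ H : X → ℝ, (∀ x, 0 < H x) ∧ H z = 1 ∧ L H ≤ r • H := by
  obtain ⟨H, hH0, hH⟩ := h
  refine ⟨(H z)⁻¹ • H, fun x => mul_pos (inv_pos.2 (hH0 z)) (hH0 x),
    inv_mul_cancel₀ (hH0 z).ne', ?_⟩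
  rw [map_smul, smul_comm]
  exact smul_le_smul_of_nonneg_left hH (inv_nonneg.2 (hH0 z).le)

/-- Normalised superharmonic functions for `rₙ ↓ r` lie in a compact box by the Harnack inequality
`kernel_mul_le`, so they have a limit point. -/
theorem exists_superharmonic (hirr : IsIrreducible L) (hL : Monotone L) (hr : 0 ≤ r) {z : X}
    (h : ∀ q > r, (kernel L · z z) =O[atTop] (q ^ ·)) :
    ∃ H : X → ℝ, (∀ x, 0 < H x) ∧ L H ≤ r • H := by
  set ρ : ℕ → ℝ := fun j => r + 1 / ((j : ℝ) + 1)
  have hρ (j : ℕ) : r < ρ j := lt_add_of_pos_right r Nat.one_div_pos_of_nat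
  have hρ0 (j : ℕ) : 0 ≤ ρ j := hr.trans (hρ j).le
  have hρ1 (j : ℕ) : ρ j ≤ r + 1 :=
    add_le_add_right (div_le_one_of_le₀ (le_add_of_nonneg_left j.cast_nonneg) (by positivity)) r
  have hlim : Tendsto ρ atTop (nhds r) := by
    simpa only [add_zero] using
      (tendsto_const_nhds (x := r)).add (tendsto_one_div_add_atTop_nhds_zero_nat (𝕜 := ℝ))
  have hex (j : ℕ) : ∃ H : X → ℝ, (∀ x, 0 < H x) ∧ H z = 1 ∧ L H ≤ ρ j • H := by
    obtain ⟨q, hq, hqρ⟩ := exists_between (hρ j)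
    exact exists_superharmonic_apply_eq_one
      (exists_superharmonic_of_lt hirr hL (hr.trans_lt hq) hqρ (h q hq))
  choose H hH0 hHz hH using hex
  have hharnack (j n : ℕ) (x y : X) : kernel L n x y * H j y ≤ (r + 1) ^ n * H j x :=
    (kernel_mul_le hL (hρ0 j) (fun w => (hH0 j w).le) (hH j) n x y).trans
      (mul_le_mul_of_nonneg_right (pow_le_pow_left₀ (hρ0 j) (hρ1 j) n) (hH0 j x).le)
  have hr1 : 0 < r + 1 := hr.trans_lt (lt_add_one r)
  choose k _ hk using fun x => hirr x z
  choose l _ hl using fun x => hirr z x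
  set lower : X → ℝ := fun x => kernel L (k x) x z / (r + 1) ^ k x
  set upper : X → ℝ := fun x => (r + 1) ^ l x / kernel L (l x) z x
  have hbox (j : ℕ) : H j ∈ Set.univ.pi fun x => Set.Icc (lower x) (upper x) := by
    refine fun x _ => ⟨?_, ?_⟩
    · rw [div_le_iff₀' (by positivity)]
      simpa [hHz] using hharnack j (k x) x z
    · rw [le_div_iff₀' (hl x)]
      simpa [hHz] using hharnack j (l x) z x
  obtain ⟨H', hH', hconv⟩ := (isCompact_univ_pi fun x => isCompact_Icc).ultrafilter_le_nhds
    ((hyperfilter ℕ).map H) (le_principal_iff.2 (mem_map.2 (Eventually.of_forall hbox)))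
  have hle : (hyperfilter ℕ : Filter ℕ) ≤ atTop := Nat.hyperfilter_le_atTop
  refine ⟨H', fun x => ?_, ?_⟩
  · exact (div_pos (hk x) (pow_pos hr1 _)).trans_le (hH' x trivial).1
  · exact le_of_tendsto_of_tendsto' ((L.continuous.tendsto H').comp hconv)
      ((hlim.mono_left hle).smul hconv) hH

section DoobTransform

variable {L' : (X → ℝ) →L[ℝ] (X → ℝ)} {F : X → ℝ} {l : ℝ}

lemma kernel_doob (hF : ∀ x, F x ≠ 0) (h : ∀ f, L' f = l • (F * L (f / F))) (n : ℕ) (x y : X) :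
    kernel L' n x y = l ^ n * (F x / F y) * kernel L n x y := by
  have hpow (f : X → ℝ) : (L' ^ n) f = l ^ n • (F * (L ^ n) (f / F)) := by
    induction n with
    | zero =>
      ext x
      simp [mul_div_cancel₀ (f x) (hF x)]
    | succ n ih =>
      have hcancel : F * (L ^ n) (f / F) / F = (L ^ n) (f / F) :=
        funext fun x => mul_div_cancel_left₀ _ (hF x)
      calc (L' ^ (n + 1)) f = L' ((L' ^ n) f) := by rw [pow_succ']; rfl
        _ = l ^ (n + 1) • (F * L (F * (L ^ n) (f / F) / F)) := by
          rw [ih, map_smul, h, smul_smul, pow_succ]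
        _ = l ^ (n + 1) • (F * (L ^ (n + 1)) (f / F)) := by
          rw [hcancel, pow_succ' L]
          rfl
  have hdiv : Set.indicator {y} 1 / F = (F y)⁻¹ • Set.indicator {y} (1 : X → ℝ) := by
    ext z
    by_cases hz : z = y <;> simp [hz]
  rw [kernel, hpow, hdiv, map_smul, kernel]
  simp only [Pi.smul_apply, Pi.mul_apply, smul_eq_mul]
  ring

lemma IsIrreducible.doob (hirr : IsIrreducible L) (hF : ∀ x, 0 < F x) (hl : 0 < l)
    (h : ∀ f, L' f = l • (F * L (f / F))) : IsIrreducible L' := by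
  intro x y
  obtain ⟨n, hn, hpos⟩ := hirr x y
  refine ⟨n, hn, ?_⟩
  rw [kernel_doob (fun x => (hF x).ne') h]
  exact mul_pos (mul_pos (pow_pos hl n) (div_pos (hF x) (hF y))) hpos

end DoobTransform

end PositiveOperators

section TransferOperators

variable {S G K : Type*} [Group G] [Group K] {c : Matrix S S ℝ} {φ : S → S → G}
  {χ : G →* {x : ℝ // 0 < x}} {r : ℝ} {v : S → ℝ}

/-- The weights `c` twisted by a positive character `χ` of the group of labels. -/
def twist (c : Matrix S S ℝ) (φ : S → S → G) (χ : G →* {x : ℝ // 0 < x}) : Matrix S S ℝ :=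
  .of fun s t => c s t * χ (φ s t)

lemma twist_nonneg (hc : ∀ s t, 0 ≤ c s t) (s t : S) : 0 ≤ twist c φ χ s t :=
  mul_nonneg (hc s t) (χ (φ s t)).2.le

variable [Fintype S]

/-- The transfer operator, over the edges of a weighted graph on `S` with weights `c`, of the group
extension defined by the edge labels `φ`: its kernel counts weighted paths in `S` together with the
product of the labels along them. -/
noncomputable def transferOp (c : Matrix S S ℝ) (φ : S → S → G) :
    (S × G → ℝ) →L[ℝ] (S × G → ℝ) where
  toFun f p := ∑ t, c p.1 t * f (t, p.2 * φ p.1 t)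
  map_add' f₁ f₂ := by
    ext p
    simp only [Pi.add_apply, mul_add, Finset.sum_add_distrib]
  map_smul' a f := by
    ext p
    simp only [Pi.smul_apply, smul_eq_mul, Finset.mul_sum, RingHom.id_apply, mul_left_comm]
  cont := by fun_prop

lemma transferOp_apply (f : S × G → ℝ) (s : S) (g : G) :
    transferOp c φ f (s, g) = ∑ t, c s t * f (t, g * φ s t) := rfl

lemma monotone_transferOp (hc : ∀ s t, 0 ≤ c s t) : Monotone (transferOp c φ) :=
  fun _ _ h p => Finset.sum_le_sum fun t _ => mul_le_mul_of_nonneg_left (h _) (hc p.1 t)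

lemma kernel_transferOp_succ (n : ℕ) (s : S) (g : G) (q : S × G) :
    kernel (transferOp c φ) (n + 1) (s, g) q =
      ∑ u, c s u * kernel (transferOp c φ) n (u, g * φ s u) q := by
  rw [kernel, pow_succ']
  rfl

lemma kernel_transferOp_mul_left (n : ℕ) (a : G) (s t : S) (g h : G) :
    kernel (transferOp c φ) n (s, a * g) (t, a * h) = kernel (transferOp c φ) n (s, g) (t, h) := by
  classical
  induction n generalizing s g with
  | zero => simp [kernel, Pi.single_apply]
  | succ n ih => simp only [kernel_transferOp_succ, mul_assoc, ih]

lemma exists_edge_of_kernel_pos (hc : ∀ s t, 0 ≤ c s t) {n : ℕ} {s : S} {g : G} {q : S × G}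
    (h : 0 < kernel (transferOp c φ) (n + 1) (s, g) q) :
    ∃ u, 0 < c s u ∧ 0 < kernel (transferOp c φ) n (u, g * φ s u) q := by
  rw [kernel_transferOp_succ] at h
  obtain ⟨u, -, hu⟩ := Finset.exists_lt_of_sum_lt (by simpa using h :
    ∑ _ ∈ (Finset.univ : Finset S), (0 : ℝ) < _)
  exact ⟨u, pos_of_mul_pos_left hu (kernel_nonneg (monotone_transferOp hc) _ _ _),
    pos_of_mul_pos_right hu (hc s u)⟩

lemma kernel_transferOp_le_pow [DecidableEq S] (hc : ∀ s t, 0 ≤ c s t) (n : ℕ) (s t : S)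
    (g h : G) : kernel (transferOp c φ) n (s, g) (t, h) ≤ (c ^ n) s t := by
  induction n generalizing s g with
  | zero =>
    by_cases hst : s = t
    · simp only [hst, pow_zero, Matrix.one_apply_eq]
      exact Set.indicator_le_self' (fun _ _ => zero_le_one) _
    · simp [kernel, hst]
  | succ n ih =>
    rw [kernel_transferOp_succ, pow_succ', Matrix.mul_apply]
    exact Finset.sum_le_sum fun u _ => mul_le_mul_of_nonneg_left (ih u _) (hc s u)

lemma kernel_transferOp_le_map (hc : ∀ s t, 0 ≤ c s t) (f : G →* K) (n : ℕ) (s t : S) (g h : G) :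
    kernel (transferOp c φ) n (s, g) (t, h) ≤
      kernel (transferOp c fun s t => f (φ s t)) n (s, f g) (t, f h) := by
  classical
  induction n generalizing s g with
  | zero =>
    by_cases hgh : (s, g) = (t, h)
    · obtain ⟨rfl, rfl⟩ := Prod.mk.inj hgh
      simp [kernel]
    · calc kernel (transferOp c φ) 0 (s, g) (t, h) = 0 := by simp [kernel, hgh]
        _ ≤ _ := kernel_nonneg (monotone_transferOp hc) 0 _ _
  | succ n ih =>
    simp only [kernel_transferOp_succ, ← map_mul]
    exact Finset.sum_le_sum fun u _ => mul_le_mul_of_nonneg_left (ih u _) (hc s u)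

lemma IsIrreducible.map (hirr : IsIrreducible (transferOp c φ)) (hc : ∀ s t, 0 ≤ c s t)
    {f : G →* K} (hf : Function.Surjective f) :
    IsIrreducible (transferOp c fun s t => f (φ s t)) := by
  rintro ⟨s, a⟩ ⟨t, b⟩
  obtain ⟨g, rfl⟩ := hf a
  obtain ⟨h, rfl⟩ := hf b
  obtain ⟨n, hn, hpos⟩ := hirr (s, g) (t, h)
  exact ⟨n, hn, hpos.trans_le (kernel_transferOp_le_map hc f n s t g h)⟩

lemma transferOp_character_mul_le (hv : twist c φ χ *ᵥ v ≤ r • v) :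
    transferOp c φ (fun p => χ p.2 * v p.1) ≤ r • fun p => χ p.2 * v p.1 := by
  rintro ⟨s, g⟩
  calc ∑ t, c s t * (χ (g * φ s t) * v t) = χ g * (twist c φ χ *ᵥ v) s := by
        simp only [Matrix.mulVec, dotProduct, twist, Matrix.of_apply, Finset.mul_sum, map_mul,
          Positive.val_mul]
        exact Finset.sum_congr rfl fun t _ => by ring
    _ ≤ χ g * (r * v s) := mul_le_mul_of_nonneg_left (hv s) (χ g).2.le
    _ = r * (χ g * v s) := by ring

lemma transferOp_twist_doob {d : S → ℝ} (hd : ∀ s, d s ≠ 0) (l : ℝ) (f : S × G → ℝ) :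
    transferOp (.of fun s t => l * (d s * twist c φ χ s t / d t)) φ f =
      l • ((fun p => d p.1 / χ p.2) * transferOp c φ (f / fun p => d p.1 / χ p.2)) := by
  ext ⟨s, g⟩
  have hχ (g : G) : (χ g : ℝ) ≠ 0 := (χ g).2.ne'
  simp only [transferOp_apply, Pi.smul_apply, Pi.mul_apply, Pi.div_apply, smul_eq_mul,
    Finset.mul_sum, twist, Matrix.of_apply, map_mul, Positive.val_mul]
  refine Finset.sum_congr rfl fun t _ => ?_
  field_simp [hd, hχ]

lemma isIrreducible_twist (hirr : IsIrreducible (transferOp c φ)) (hc : ∀ s t, 0 ≤ c s t) :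
    (twist c φ χ).IsIrreducible := by
  classical
  refine (Matrix.isIrreducible_iff_exists_pow_pos (twist_nonneg hc)).2 fun s t => ?_
  have htwist : transferOp (twist c φ χ) φ =
      transferOp (.of fun s t => 1 * (1 * twist c φ χ s t / 1)) φ := by
    simp only [one_mul, div_one]
    rfl
  have hirr' := hirr.doob (fun p => div_pos one_pos (χ p.2).2) one_pos fun f =>
    (congrArg (· f) htwist).trans (transferOp_twist_doob (fun _ => one_ne_zero) 1 f)
  obtain ⟨n, hn, hpos⟩ := hirr' (s, 1) (t, 1)
  exact ⟨n, hn, hpos.trans_le (kernel_transferOp_le_pow (twist_nonneg hc) n s t 1 1)⟩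

end TransferOperators

section PerronFrobenius

variable {S : Type*} [Fintype S] {M : Matrix S S ℝ} {r : ℝ} {v : S → ℝ}

lemma kernel_toLin' [DecidableEq S] (n : ℕ) (s t : S) :
    kernel (M.toLin'.toContinuousLinearMap) n s t = (M ^ n) s t := by
  have hpow : (M.toLin'.toContinuousLinearMap) ^ n = (M ^ n).toLin'.toContinuousLinearMap := by
    ext1 f
    rw [FunLike.coe_pow_eq_iterate, Matrix.toLin'_pow, LinearMap.coe_toContinuousLinearMap',
      LinearMap.coe_toContinuousLinearMap', Module.End.coe_pow]
  have hsingle : Set.indicator {t} 1 = Pi.single t (1 : ℝ) := by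
    ext u
    simp [Set.indicator_apply, Pi.single_apply]
  rw [kernel, hpow, hsingle, LinearMap.coe_toContinuousLinearMap', Matrix.toLin'_apply,
    Matrix.mulVec_single_one, Matrix.col_apply]

theorem exists_left_subeigenvector (hM : M.IsIrreducible) (hr : 0 ≤ r) (hv0 : ∀ s, 0 < v s)
    (hv : M *ᵥ v ≤ r • v) : ∃ w : S → ℝ, (∀ s, 0 < w s) ∧ w ᵥ* M ≤ r • w := by
  classical
  rcases isEmpty_or_nonempty S with _ | ⟨⟨z⟩⟩
  · exact ⟨0, isEmptyElim, isEmptyElim⟩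
  set L : Matrix S S ℝ → ((S → ℝ) →L[ℝ] (S → ℝ)) := fun N => N.toLin'.toContinuousLinearMap
  have hL {N : Matrix S S ℝ} (hN : ∀ s t, 0 ≤ N s t) : Monotone (L N) :=
    (monotone_iff_map_nonneg _).2 fun _ hf s =>
      Finset.sum_nonneg fun t _ => mul_nonneg (hN s t) (hf t)
  have hirr : IsIrreducible (L Mᵀ) := fun s t => by
    simpa only [L, kernel_toLin'] using
      (Matrix.isIrreducible_iff_exists_pow_pos hM.transpose.nonneg).1 hM.transpose s t
  have hgrowth (n : ℕ) : kernel (L Mᵀ) n z z ≤ r ^ n := by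
    have h := kernel_mul_le (hL hM.nonneg) hr (fun s => (hv0 s).le) hv n z z
    rw [kernel_toLin', ← Matrix.transpose_pow, Matrix.transpose_apply, ← kernel_toLin']
    exact le_of_mul_le_mul_right h (hv0 z)
  obtain ⟨w, hw0, hw⟩ := exists_superharmonic hirr (hL hM.transpose.nonneg) hr (z := z)
    fun q hq => Asymptotics.IsBigO.of_bound' <| Eventually.of_forall fun n => by
      rw [Real.norm_of_nonneg (kernel_nonneg (hL hM.transpose.nonneg) n z z),
        Real.norm_of_nonneg (pow_nonneg (hr.trans hq.le) n)]
      exact (hgrowth n).trans (pow_le_pow_left₀ hr hq.le n)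
  refine ⟨w, hw0, ?_⟩
  rwa [← Matrix.mulVec_transpose]

end PerronFrobenius

section Means

variable {G : Type*}

/-- The space of bounded real-valued functions on `G`. -/
def BoundedFun (G : Type*) : Submodule ℝ (G → ℝ) where
  carrier := {x | ∃ C, ∀ g, |x g| ≤ C}
  zero_mem' := ⟨0, fun _ => by simp⟩
  add_mem' := fun ⟨C, hC⟩ ⟨D, hD⟩ =>
    ⟨C + D, fun g => (abs_add_le _ _).trans (add_le_add (hC g) (hD g))⟩
  smul_mem' := fun a _ ⟨C, hC⟩ =>
    ⟨|a| * C, fun g => (abs_mul a _).trans_le (mul_le_mul_of_nonneg_left (hC g) (abs_nonneg a))⟩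

/-- A mean on `G`: a linear functional bounded above by the supremum, hence also bounded below by
the infimum. -/
def IsMean (m : BoundedFun G →ₗ[ℝ] ℝ) : Prop :=
  ∀ (x : BoundedFun G) (c : ℝ), (∀ g, x.1 g ≤ c) → m x ≤ c

variable {m : BoundedFun G →ₗ[ℝ] ℝ}

lemma IsMean.le_apply (hm : IsMean m) {x : BoundedFun G} {c : ℝ} (h : ∀ g, c ≤ x.1 g) :
    c ≤ m x := by
  have hneg := hm (-x) (-c) fun g => neg_le_neg (h g)
  rw [map_neg] at hneg
  exact neg_le_neg_iff.1 hneg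

lemma IsMean.abs_apply_le (hm : IsMean m) {x : BoundedFun G} {C : ℝ} (h : ∀ g, |x.1 g| ≤ C) :
    |m x| ≤ C :=
  abs_le.2 ⟨hm.le_apply fun g => (abs_le.1 (h g)).1, hm x C fun g => (abs_le.1 (h g)).2⟩

/-- Jensen's inequality for the exponential function, from its tangents at the points `m (y i)`. -/
lemma IsMean.sum_exp_le (hm : IsMean m) {ι : Type*} [Fintype ι] {c : ι → ℝ} (hc : ∀ i, 0 ≤ c i)
    {y : ι → BoundedFun G} {r : ℝ} (h : ∀ g, ∑ i, c i * Real.exp ((y i).1 g) ≤ r) :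
    ∑ i, c i * Real.exp (m (y i)) ≤ r := by
  set b : ι → ℝ := fun i => c i * Real.exp (m (y i))
  have hb (i : ι) : 0 ≤ b i := mul_nonneg (hc i) (Real.exp_pos _).le
  have htangent (i : ι) (g : G) :
      b i * (y i).1 g ≤ c i * Real.exp ((y i).1 g) - (b i - b i * m (y i)) := by
    have hexp := mul_le_mul_of_nonneg_left (Real.add_one_le_exp ((y i).1 g - m (y i))) (hb i)
    have hprod : b i * Real.exp ((y i).1 g - m (y i)) = c i * Real.exp ((y i).1 g) := by
      rw [mul_assoc, ← Real.exp_add, add_sub_cancel]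
    linarith
  have hmean : m (∑ i, b i • y i) ≤ r - ∑ i, (b i - b i * m (y i)) := by
    refine hm _ _ fun g => ?_
    calc (∑ i, b i • y i : BoundedFun G).1 g = ∑ i, b i * (y i).1 g := by
          simp [Finset.sum_apply]
      _ ≤ ∑ i, (c i * Real.exp ((y i).1 g) - (b i - b i * m (y i))) :=
          Finset.sum_le_sum fun i _ => htangent i g
      _ ≤ r - ∑ i, (b i - b i * m (y i)) := by
          rw [Finset.sum_sub_distrib]
          exact sub_le_sub_right (h g) _
  simp only [map_sum, map_smul, smul_eq_mul, Finset.sum_sub_distrib] at hmean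
  linarith

lemma isMean_proj (g : G) : IsMean (LinearMap.proj g ∘ₗ (BoundedFun G).subtype) :=
  fun _ _ h => h g

variable [Group G]

/-- Right translation of bounded functions. -/
def translate (γ : G) : BoundedFun G →ₗ[ℝ] BoundedFun G :=
  (LinearMap.funLeft ℝ ℝ (· * γ)).restrict fun _ ⟨C, hC⟩ => ⟨C, fun g => hC (g * γ)⟩

lemma translate_apply (γ : G) (x : BoundedFun G) (g : G) : (translate γ x).1 g = x.1 (g * γ) := rfl

lemma translate_translate (γ δ : G) (x : BoundedFun G) :
    translate γ (translate δ x) = translate (γ * δ) x :=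
  Subtype.ext <| funext fun g => by simp only [translate_apply, mul_assoc]

lemma IsMean.comp_translate (hm : IsMean m) (γ : G) : IsMean (m ∘ₗ translate γ) :=
  fun _ c h => hm _ c fun g => h (g * γ)

theorem amenable_iff_exists_isMean :
    Amenable G ↔ ∃ m : BoundedFun G →ₗ[ℝ] ℝ, IsMean m ∧ ∀ γ x, m (translate γ x) = m x := by
  constructor
  · rintro ⟨m, hadd, hsmul, hm⟩
    have hbdd (x : BoundedFun G) : Bornology.IsBounded (Set.range x.1) :=
      isBounded_iff_forall_norm_le.2 (x.2.imp fun _ hC => Set.forall_mem_range.2 hC)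
    refine ⟨⟨⟨fun x => m x, fun x y => hadd x y⟩, fun c x => hsmul c x⟩, fun x c h => ?_, ?_⟩
    · exact (hm x (hbdd x)).2.2.trans (csSup_le (Set.range_nonempty _) (Set.forall_mem_range.2 h))
    · exact fun γ x => (hm x (hbdd x)).1 γ
  · rintro ⟨m, hm, hinv⟩
    obtain ⟨m', hm'⟩ := LinearMap.exists_extend m
    refine ⟨m', map_add m', map_smul m', fun x hx => ?_⟩
    set x' : BoundedFun G :=
      ⟨x, (isBounded_iff_forall_norm_le.1 hx).imp fun _ hC g => hC _ (Set.mem_range_self g)⟩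
    have hext (y : BoundedFun G) : m' y = m y := DFunLike.congr_fun hm' y
    have hx' : m' x = m x' := hext x'
    refine ⟨fun γ => (hext (translate γ x')).trans ((hinv γ x').trans hx'.symm), ?_, ?_⟩
    all_goals rw [hx']
    · exact hm.le_apply fun g => csInf_le hx.bddBelow (Set.mem_range_self g)
    · exact hm _ _ fun g => le_csSup hx.bddAbove (Set.mem_range_self g)

/-- Approximate invariance of a mean under the translations by the elements of `F`. -/
def IsAlmostInvariant (m : BoundedFun G →ₗ[ℝ] ℝ) (F : Finset G) (ε : ℝ) : Prop :=
  ∀ γ ∈ F, ∀ (x : BoundedFun G) (C : ℝ), (∀ g, |x.1 g| ≤ C) → |m (translate γ x) - m x| ≤ ε * C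

theorem amenable_of_isAlmostInvariant
    (h : ∀ (F : Finset G) (ε : ℝ), 0 < ε → ∃ m, IsMean m ∧ IsAlmostInvariant m F ε) :
    Amenable G := by
  classical
  choose m hm hinv using fun i : Finset G × ℕ =>
    h i.1 (1 / ((i.2 : ℝ) + 1)) Nat.one_div_pos_of_nat
  choose C hC using fun x : BoundedFun G => x.2
  set U : Ultrafilter (Finset G × ℕ) := Ultrafilter.of atTop
  have hbox (i : Finset G × ℕ) :
      (fun x => m i x) ∈ Set.univ.pi fun x => Set.Icc (-C x) (C x) :=
    fun x _ => Set.mem_Icc.2 (abs_le.1 ((hm i).abs_apply_le (hC x)))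
  obtain ⟨f, -, hf⟩ := (isCompact_univ_pi fun x => isCompact_Icc).ultrafilter_le_nhds
    (U.map fun i x => m i x) (le_principal_iff.2 (mem_map.2 (Eventually.of_forall hbox)))
  have hlim : Tendsto (fun i x => m i x) U (nhds f) := hf
  have hlimx (x : BoundedFun G) : Tendsto (fun i => m i x) U (nhds (f x)) :=
    tendsto_pi_nhds.1 hlim x
  refine amenable_iff_exists_isMean.2 ⟨linearMapOfTendsto f m hlim, fun x c hx => ?_, fun γ x => ?_⟩
  · exact le_of_tendsto' (hlimx x) fun i => hm i x c hx
  · have hsnd : Tendsto Prod.snd (U : Filter (Finset G × ℕ)) atTop :=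
      tendsto_snd.mono_left ((Ultrafilter.of_le atTop).trans prod_atTop_atTop_eq.ge)
    have hsmall : Tendsto (fun i : Finset G × ℕ => 1 / ((i.2 : ℝ) + 1) * C x) U (nhds (0 * C x)) :=
      (tendsto_one_div_add_atTop_nhds_zero_nat.comp hsnd).mul_const _
    have hmem : ∀ᶠ i in (U : Filter (Finset G × ℕ)), γ ∈ i.1 :=
      Ultrafilter.of_le atTop <| (eventually_ge_atTop ({γ}, 0)).mono fun i hi =>
        hi.1 (Finset.mem_singleton_self γ)
    have habs := le_of_tendsto_of_tendsto ((hlimx (translate γ x)).sub (hlimx x)).abs hsmall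
      (hmem.mono fun i hi => hinv i γ hi x (C x) (hC x))
    rw [zero_mul] at habs
    exact sub_eq_zero.1 (abs_nonpos_iff.1 habs)

end Means

section CommutativeGroups

variable {G : Type*} [CommGroup G] {m : BoundedFun G →ₗ[ℝ] ℝ}

/-- Averaging a mean over the translations by `1, γ, …, γᴺ⁻¹` makes it almost invariant under `γ`,
without spoiling its invariance properties. -/
lemma IsMean.exists_isAlmostInvariant_insert [DecidableEq G] (hm : IsMean m) {F : Finset G} {ε : ℝ}
    (hε : 0 < ε) (hF : IsAlmostInvariant m F ε) (γ : G) :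
    ∃ m', IsMean m' ∧ IsAlmostInvariant m' (insert γ F) ε := by
  obtain ⟨N, hN⟩ := exists_nat_gt (2 / ε)
  have hN0 : (0 : ℝ) < N := (div_pos two_pos hε).trans hN
  set m' : BoundedFun G →ₗ[ℝ] ℝ :=
    (N : ℝ)⁻¹ • ∑ i ∈ Finset.range N, m ∘ₗ translate (γ ^ i)
  have hm' (x : BoundedFun G) :
      m' x = (N : ℝ)⁻¹ * ∑ i ∈ Finset.range N, m (translate (γ ^ i) x) := by
    simp [m', LinearMap.sum_apply]
  refine ⟨m', fun x c h => ?_, fun δ hδ x C hC => ?_⟩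
  · rw [hm', inv_mul_le_iff₀ hN0]
    simpa using Finset.sum_le_card_nsmul (Finset.range N) _ c fun i _ =>
      hm.comp_translate (γ ^ i) x c h
  have hdiff : m' (translate δ x) - m' x = (N : ℝ)⁻¹ * ∑ i ∈ Finset.range N,
      (m (translate δ (translate (γ ^ i) x)) - m (translate (γ ^ i) x)) := by
    simp only [hm', translate_translate, mul_comm δ, Finset.sum_sub_distrib, mul_sub]
  rw [hdiff, abs_mul, abs_of_pos (inv_pos.2 hN0), inv_mul_le_iff₀ hN0]
  rcases Finset.mem_insert.1 hδ with rfl | hδF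
  · have htelescope : ∑ i ∈ Finset.range N,
        (m (translate δ (translate (δ ^ i) x)) - m (translate (δ ^ i) x)) =
          m (translate (δ ^ N) x) - m (translate (δ ^ 0) x) := by
      rw [← Finset.sum_range_sub (fun i => m (translate (δ ^ i) x))]
      simp only [translate_translate, pow_succ']
    have hbound (i : ℕ) : |m (translate (δ ^ i) x)| ≤ C := (hm.comp_translate _).abs_apply_le hC
    have hC0 : 0 ≤ C := (abs_nonneg _).trans (hbound 0)
    calc |∑ i ∈ Finset.range N,
          (m (translate δ (translate (δ ^ i) x)) - m (translate (δ ^ i) x))|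
        ≤ C + C := by
          rw [htelescope]
          exact (abs_sub _ _).trans (add_le_add (hbound N) (hbound 0))
      _ = 2 * C := (two_mul C).symm
      _ ≤ N * ε * C := mul_le_mul_of_nonneg_right ((div_lt_iff₀ hε).1 hN).le hC0
      _ = N * (ε * C) := mul_assoc _ _ _
  · refine (Finset.abs_sum_le_sum_abs _ _).trans ?_
    simpa using Finset.sum_le_card_nsmul (Finset.range N) _ (ε * C) fun i _ =>
      hF δ hδF (translate (γ ^ i) x) C fun g => hC _

theorem amenable_of_commGroup : Amenable G := by
  classical
  refine amenable_of_isAlmostInvariant fun F ε hε => ?_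
  induction F using Finset.induction_on with
  | empty => exact ⟨_, isMean_proj 1, fun _ h => absurd h (Finset.notMem_empty _)⟩
  | insert γ F _ ih =>
    obtain ⟨m, hm, hF⟩ := ih
    exact hm.exists_isAlmostInvariant_insert hε hF γ

end CommutativeGroups

section Characters

variable {S G : Type*} [Fintype S] [Group G] {c : Matrix S S ℝ} {φ : S → S → G} {r : ℝ}
  {H : S × G → ℝ}

lemma exists_abs_log_sub_log_le (hirr : IsIrreducible (transferOp c φ)) (hc : ∀ s t, 0 ≤ c s t)
    (hr : 0 ≤ r) (hH0 : ∀ p, 0 < H p) (hH : transferOp c φ H ≤ r • H) (s t : S) (γ : G) :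
    ∃ C, ∀ g, |Real.log (H (t, g * γ)) - Real.log (H (s, g))| ≤ C := by
  have hlog (s t : S) (γ δ : G) :
      ∃ C, ∀ g, Real.log (H (t, g * δ)) - Real.log (H (s, g * γ)) ≤ C := by
    obtain ⟨n, -, hn⟩ := hirr (s, γ) (t, δ)
    refine ⟨Real.log (r ^ n / kernel (transferOp c φ) n (s, γ) (t, δ)), fun g => ?_⟩
    have hharnack := kernel_mul_le (monotone_transferOp hc) hr (fun p => (hH0 p).le) hH n
      (s, g * γ) (t, g * δ)
    rw [kernel_transferOp_mul_left] at hharnack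
    rw [← Real.log_div (hH0 _).ne' (hH0 _).ne']
    refine Real.log_le_log (div_pos (hH0 _) (hH0 _)) ?_
    rwa [div_le_div_iff₀ (hH0 _) hn, mul_comm (H _)]
  obtain ⟨C, hC⟩ := hlog s t 1 γ
  obtain ⟨D, hD⟩ := hlog t s γ 1
  simp only [mul_one] at hC hD
  refine ⟨max C D, fun g => abs_sub_le_iff.2 ⟨(hC g).trans (le_max_left C D), ?_⟩⟩
  exact (hD g).trans (le_max_right C D)

/-- The averages `Y s t γ` of the functions `g ↦ log (H (t, g * γ) / H (s, g))` under an invariant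
mean form an additive cocycle, from which the character is read off. -/
theorem exists_character (hG : Amenable G) (hirr : IsIrreducible (transferOp c φ))
    (hc : ∀ s t, 0 ≤ c s t) (hr : 0 ≤ r) (hH0 : ∀ p, 0 < H p) (hH : transferOp c φ H ≤ r • H) :
    ∃ (χ : G →* {x : ℝ // 0 < x}) (v : S → ℝ),
      (∀ s, 0 < v s) ∧ twist c φ χ *ᵥ v ≤ r • v := by
  obtain ⟨m, hm, hinv⟩ := amenable_iff_exists_isMean.1 hG
  rcases isEmpty_or_nonempty S with _ | ⟨⟨z⟩⟩
  · exact ⟨1, 0, isEmptyElim, isEmptyElim⟩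
  set y : S → S → G → BoundedFun G := fun s t γ =>
    ⟨fun g => Real.log (H (t, g * γ)) - Real.log (H (s, g)),
      exists_abs_log_sub_log_le hirr hc hr hH0 hH s t γ⟩
  set Y : S → S → G → ℝ := fun s t γ => m (y s t γ)
  have hY (s t u : S) (γ δ : G) : Y s u (γ * δ) = Y s t γ + Y t u δ := by
    have hcocycle : y s u (γ * δ) = y s t γ + translate γ (y t u δ) := by
      refine Subtype.ext (funext fun g => ?_)
      simp only [y, Submodule.coe_add, Pi.add_apply, translate_apply, mul_assoc]
      ring
    simp only [Y, hcocycle, map_add, hinv]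
  have hexp (s : S) : ∑ t, c s t * Real.exp (Y s t (φ s t)) ≤ r := by
    refine hm.sum_exp_le (hc s) fun g => ?_
    have hlog (t : S) : c s t * Real.exp ((y s t (φ s t)).1 g) =
        c s t * H (t, g * φ s t) / H (s, g) := by
      rw [Real.exp_sub, Real.exp_log (hH0 _), Real.exp_log (hH0 _), mul_div_assoc]
    rw [Finset.sum_congr rfl fun t _ => hlog t, ← Finset.sum_div, div_le_iff₀ (hH0 _)]
    exact hH (s, g)
  refine ⟨MonoidHom.mk' (fun γ => ⟨Real.exp (Y z z γ), Real.exp_pos _⟩) fun γ δ => Subtype.ext ?_,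
    fun s => Real.exp (Y z s 1), fun s => Real.exp_pos _, fun s => ?_⟩
  · simp only [hY z z z, Real.exp_add, Positive.val_mul]
  · have hpath (t : S) : Y z z (φ s t) + Y z t 1 = Y s t (φ s t) + Y z s 1 := by
      rw [← hY, add_comm, ← hY, one_mul, mul_one]
    calc ∑ t, c s t * Real.exp (Y z z (φ s t)) * Real.exp (Y z t 1)
        = (∑ t, c s t * Real.exp (Y s t (φ s t))) * Real.exp (Y z s 1) := by
          simp only [Finset.sum_mul, mul_assoc, ← Real.exp_add, hpath]
      _ ≤ r * Real.exp (Y z s 1) := mul_le_mul_of_nonneg_right (hexp s) (Real.exp_pos _).le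

end Characters

section AlmostFixedVectors

variable {E : Type*} [NormedAddCommGroup E] [InnerProductSpace ℝ E]

lemma exists_lt_two_mul_of_not_isBigO {a : ℕ → ℝ} (ha0 : ∀ n, 0 ≤ a n) (ha : Antitone a)
    (hgrowth : ∀ τ : ℝ, 0 < τ → τ < 1 → ¬ a =O[atTop] (τ ^ ·)) {m : ℕ} (hm : 0 < m) :
    ∃ N, a N < 2 * a (N + m) := by
  by_contra! hhalf
  set τ : ℝ := (1 / 2) ^ (m⁻¹ : ℝ)
  have hτ0 : 0 < τ := by positivity
  have hτ1 : τ < 1 := Real.rpow_lt_one (by norm_num) (by norm_num) (by positivity)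
  have hτm : τ ^ m = 1 / 2 := Real.rpow_inv_natCast_pow (by norm_num) hm.ne'
  have hdecay (n : ℕ) : a n ≤ 2 * a 0 * τ ^ n := by
    induction n using Nat.strong_induction_on with
    | _ n ih =>
      rcases lt_or_ge n m with hnm | hmn
      · have hτn : 1 / 2 ≤ τ ^ n := hτm ▸ pow_le_pow_of_le_one hτ0.le hτ1.le hnm.le
        calc a n ≤ 2 * a 0 * (1 / 2) := by linarith [ha (Nat.zero_le n)]
          _ ≤ 2 * a 0 * τ ^ n :=
            mul_le_mul_of_nonneg_left hτn (mul_nonneg zero_le_two (ha0 0))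
      · obtain ⟨k, rfl⟩ := Nat.exists_eq_add_of_le' hmn
        calc a (k + m) ≤ a k * (1 / 2) := by linarith [hhalf k]
          _ ≤ 2 * a 0 * τ ^ k * τ ^ m := by
            rw [hτm]
            exact mul_le_mul_of_nonneg_right (ih k (Nat.lt_add_of_pos_right hm)) (by norm_num)
          _ = 2 * a 0 * τ ^ (k + m) := by rw [pow_add, mul_assoc]
  refine hgrowth τ hτ0 hτ1 (.of_bound (2 * a 0) (Eventually.of_forall fun n => ?_))
  rw [Real.norm_of_nonneg (ha0 n), Real.norm_of_nonneg (pow_nonneg hτ0.le n)]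
  exact hdecay n

lemma sum_norm_sq_le_norm_sum_sq {ι : Type*} (s : Finset ι) {f : ι → E}
    (hf : ∀ i j, 0 ≤ inner ℝ (f i) (f j)) : ∑ i ∈ s, ‖f i‖ ^ 2 ≤ ‖∑ i ∈ s, f i‖ ^ 2 := by
  rw [← real_inner_self_eq_norm_sq, sum_inner]
  refine Finset.sum_le_sum fun i hi => ?_
  rw [inner_sum, ← real_inner_self_eq_norm_sq]
  exact Finset.single_le_sum (fun j _ => hf i j) hi

lemma sum_pow_apply_sub_apply {R M : Type*} [Semiring R] [AddCommGroup M] [Module R M]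
    (T : M →ₗ[R] M) (u : M) (N m : ℕ) :
    ∑ i ∈ Finset.range m, (T ^ (N + i)) u - T (∑ i ∈ Finset.range m, (T ^ (N + i)) u) =
      (T ^ N) u - (T ^ (N + m)) u := by
  have hsucc (i : ℕ) : T ((T ^ (N + i)) u) = (T ^ (N + (i + 1))) u := by
    rw [← add_assoc, pow_succ']
    rfl
  simp only [map_sum, hsucc]
  rw [← Finset.sum_sub_distrib, Finset.sum_range_sub' fun i => (T ^ (N + i)) u, add_zero]

lemma mul_norm_sq_le_norm_sum_pow_apply_sq {T : E →ₗ[ℝ] E} {u : E}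
    (hanti : Antitone fun n => ‖(T ^ n) u‖) (hpos : ∀ i j, 0 ≤ inner ℝ ((T ^ i) u) ((T ^ j) u))
    (N m : ℕ) :
    m * ‖(T ^ (N + m)) u‖ ^ 2 ≤ ‖∑ i ∈ Finset.range m, (T ^ (N + i)) u‖ ^ 2 := by
  refine le_trans ?_ (sum_norm_sq_le_norm_sum_sq (Finset.range m) fun i j => hpos (N + i) (N + j))
  have hterm (i : ℕ) (hi : i ∈ Finset.range m) : ‖(T ^ (N + m)) u‖ ^ 2 ≤ ‖(T ^ (N + i)) u‖ ^ 2 :=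
    pow_le_pow_left₀ (norm_nonneg _) (hanti (Nat.add_le_add_left (Finset.mem_range.1 hi).le N)) 2
  simpa using Finset.card_nsmul_le_sum _ _ _ hterm

/-- The vector is a sum of `m` consecutive iterates `Tⁿ u` whose norms differ by at most a factor of
two: positivity of the inner products makes its norm at least of order `√m ‖Tⁿ u‖`, whereas `1 - T`
telescopes. -/
lemma exists_mul_norm_sub_apply_sq_le {T : E →ₗ[ℝ] E} {u : E}
    (hanti : Antitone fun n => ‖(T ^ n) u‖) (hpos : ∀ i j, 0 ≤ inner ℝ ((T ^ i) u) ((T ^ j) u))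
    {N m : ℕ} (hm : 0 < m) (hN : ‖(T ^ N) u‖ < 2 * ‖(T ^ (N + m)) u‖) :
    ∃ f ≠ 0, m * ‖f - T f‖ ^ 2 ≤ 16 * ‖f‖ ^ 2 := by
  set b : ℝ := ‖(T ^ N) u‖
  set b' : ℝ := ‖(T ^ (N + m)) u‖
  have hb0 : 0 ≤ b := norm_nonneg _
  have hb' : 0 < b' := by linarith
  set f : E := ∑ i ∈ Finset.range m, (T ^ (N + i)) u
  have hlower : m * b' ^ 2 ≤ ‖f‖ ^ 2 := mul_norm_sq_le_norm_sum_pow_apply_sq hanti hpos N m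
  have hupper : ‖f - T f‖ ≤ 4 * b' := by
    rw [sum_pow_apply_sub_apply]
    linarith [norm_sub_le ((T ^ N) u) ((T ^ (N + m)) u)]
  refine ⟨f, fun hf0 => ?_, ?_⟩
  · rw [hf0, norm_zero, zero_pow two_ne_zero] at hlower
    exact hlower.not_gt (by positivity)
  · calc m * ‖f - T f‖ ^ 2 ≤ m * (4 * b') ^ 2 := by gcongr
      _ = 16 * (m * b' ^ 2) := by ring
      _ ≤ 16 * ‖f‖ ^ 2 := by gcongr

theorem exists_norm_sub_apply_le {T : E →ₗ[ℝ] E} (hT : ∀ x, ‖T x‖ ≤ ‖x‖) {u : E}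
    (hpos : ∀ i j, 0 ≤ inner ℝ ((T ^ i) u) ((T ^ j) u))
    (hgrowth : ∀ τ : ℝ, 0 < τ → τ < 1 → ¬ (fun n => ‖(T ^ n) u‖) =O[atTop] (τ ^ ·))
    {ε : ℝ} (hε : 0 < ε) : ∃ f ≠ 0, ‖f - T f‖ ≤ ε * ‖f‖ := by
  have hanti : Antitone fun n => ‖(T ^ n) u‖ := antitone_nat_of_succ_le fun n => by
    rw [pow_succ']
    exact hT _
  obtain ⟨m, hm⟩ := exists_nat_gt (16 / ε ^ 2)
  have hm0 : (0 : ℝ) < m := (by positivity : 0 < 16 / ε ^ 2).trans hm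
  have hm1 : 0 < m := Nat.cast_pos.1 hm0
  obtain ⟨N, hN⟩ := exists_lt_two_mul_of_not_isBigO (fun n => norm_nonneg _) hanti hgrowth hm1
  obtain ⟨f, hf0, hf⟩ := exists_mul_norm_sub_apply_sq_le hanti hpos hm1 hN
  refine ⟨f, hf0, abs_le_of_sq_le_sq' (le_of_mul_le_mul_left ?_ hm0) (by positivity) |>.2⟩
  calc m * ‖f - T f‖ ^ 2 ≤ 16 * ‖f‖ ^ 2 := hf
    _ ≤ m * ε ^ 2 * ‖f‖ ^ 2 :=
      mul_le_mul_of_nonneg_right ((div_lt_iff₀ (pow_pos hε 2)).1 hm).le (sq_nonneg _)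
    _ = m * (ε * ‖f‖) ^ 2 := by ring

end AlmostFixedVectors

section BlockOperators

variable {S E : Type*} [Fintype S] [NormedAddCommGroup E] [InnerProductSpace ℝ E]
  {a : Matrix S S ℝ} {U : S → S → E →ₗᵢ[ℝ] E} {p : S → ℝ}

/-- The operator on `E^S` whose matrix has the multiple `a s t • U s t` of an isometry as its
`(s, t)` entry. -/
noncomputable def blockOp (a : Matrix S S ℝ) (U : S → S → E →ₗᵢ[ℝ] E) :
    PiLp 2 (fun _ : S => E) →ₗ[ℝ] PiLp 2 (fun _ : S => E) where
  toFun f := WithLp.toLp 2 fun s => ∑ t, a s t • U s t (f t)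
  map_add' f₁ f₂ := by
    ext s
    simp [Finset.sum_add_distrib]
  map_smul' c f := by
    ext s
    simp [Finset.smul_sum, smul_comm c]

lemma blockOp_apply (f : PiLp 2 fun _ : S => E) (s : S) :
    blockOp a U f s = ∑ t, a s t • U s t (f t) := rfl

/-- A positive vector witnessing, by the Schur test, that the matrix `a` is a contraction of
`ℓ²`. -/
structure IsSchurVector (a : Matrix S S ℝ) (p : S → ℝ) : Prop where
  nonneg : ∀ s t, 0 ≤ a s t
  pos : ∀ s, 0 < p s
  mulVec_le : a *ᵥ p ≤ p
  vecMul_le : p ᵥ* a ≤ p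

lemma IsSchurVector.energy_term_nonneg (hp : IsSchurVector a p) (f' f : PiLp 2 fun _ : S => E)
    (s t : S) : 0 ≤ a s t * p s * p t * ‖(p s)⁻¹ • f' s - U s t ((p t)⁻¹ • f t)‖ ^ 2 :=
  mul_nonneg (mul_nonneg (mul_nonneg (hp.nonneg s t) (hp.pos s).le) (hp.pos t).le) (sq_nonneg _)

lemma IsSchurVector.energy_le (hp : IsSchurVector a p) (f' f : PiLp 2 fun _ : S => E) :
    ∑ s, ∑ t, a s t * p s * p t * ‖(p s)⁻¹ • f' s - U s t ((p t)⁻¹ • f t)‖ ^ 2 ≤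
      ‖f'‖ ^ 2 + ‖f‖ ^ 2 - 2 * inner ℝ f' (blockOp a U f) := by
  have hpne (s : S) : p s ≠ 0 := (hp.pos s).ne'
  have hexpand (s t : S) :
      a s t * p s * p t * ‖(p s)⁻¹ • f' s - U s t ((p t)⁻¹ • f t)‖ ^ 2 =
        ‖f' s‖ ^ 2 / p s * (a s t * p t) + ‖f t‖ ^ 2 / p t * (p s * a s t) -
          2 * (a s t * inner ℝ (f' s) (U s t (f t))) := by
    rw [norm_sub_sq_real, map_smul, norm_smul, norm_smul, inner_smul_left, inner_smul_right,
      LinearIsometry.norm_map, Real.norm_of_nonneg (inv_nonneg.2 (hp.pos s).le),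
      Real.norm_of_nonneg (inv_nonneg.2 (hp.pos t).le), conj_trivial]
    field_simp [hpne s, hpne t]
    ring
  have hrow : ∑ s, ∑ t, ‖f' s‖ ^ 2 / p s * (a s t * p t) ≤ ‖f'‖ ^ 2 := by
    rw [PiLp.norm_sq_eq_of_L2]
    refine Finset.sum_le_sum fun s _ => ?_
    rw [← Finset.mul_sum]
    exact (mul_le_mul_of_nonneg_left (hp.mulVec_le s)
      (div_nonneg (sq_nonneg _) (hp.pos s).le)).trans_eq (div_mul_cancel₀ _ (hpne s))
  have hcol : ∑ s, ∑ t, ‖f t‖ ^ 2 / p t * (p s * a s t) ≤ ‖f‖ ^ 2 := by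
    rw [Finset.sum_comm, PiLp.norm_sq_eq_of_L2]
    refine Finset.sum_le_sum fun t _ => ?_
    rw [← Finset.mul_sum]
    exact (mul_le_mul_of_nonneg_left (hp.vecMul_le t)
      (div_nonneg (sq_nonneg _) (hp.pos t).le)).trans_eq (div_mul_cancel₀ _ (hpne t))
  have hcross : ∑ s, ∑ t, 2 * (a s t * inner ℝ (f' s) (U s t (f t))) =
      2 * inner ℝ f' (blockOp a U f) := by
    simp only [PiLp.inner_apply, blockOp_apply, inner_sum, inner_smul_right, Finset.mul_sum]
  simp only [hexpand, Finset.sum_sub_distrib, Finset.sum_add_distrib, hcross]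
  linarith

lemma IsSchurVector.norm_blockOp_le (hp : IsSchurVector a p) (f : PiLp 2 fun _ : S => E) :
    ‖blockOp a U f‖ ≤ ‖f‖ := by
  have henergy := hp.energy_le (U := U) (blockOp a U f) f
  have hnonneg : 0 ≤ ∑ s, ∑ t, a s t * p s * p t *
      ‖(p s)⁻¹ • blockOp a U f s - U s t ((p t)⁻¹ • f t)‖ ^ 2 :=
    Finset.sum_nonneg fun s _ => Finset.sum_nonneg fun t _ => hp.energy_term_nonneg _ f s t
  rw [real_inner_self_eq_norm_sq] at henergy
  exact abs_le_of_sq_le_sq' (by linarith) (norm_nonneg f) |>.2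

lemma IsSchurVector.mul_norm_sub_sq_le (hp : IsSchurVector a p) {f : PiLp 2 fun _ : S => E} {ε : ℝ}
    (hf : ‖f - blockOp a U f‖ ≤ ε * ‖f‖) (s t : S) :
    a s t * p s * p t * ‖(p s)⁻¹ • f s - U s t ((p t)⁻¹ • f t)‖ ^ 2 ≤ 2 * ε * ‖f‖ ^ 2 := by
  have hinner : inner ℝ f (f - blockOp a U f) ≤ ‖f‖ * (ε * ‖f‖) :=
    (real_inner_le_norm _ _).trans (mul_le_mul_of_nonneg_left hf (norm_nonneg f))
  rw [inner_sub_right, real_inner_self_eq_norm_sq] at hinner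
  calc a s t * p s * p t * ‖(p s)⁻¹ • f s - U s t ((p t)⁻¹ • f t)‖ ^ 2
      ≤ ∑ s, ∑ t, a s t * p s * p t * ‖(p s)⁻¹ • f s - U s t ((p t)⁻¹ • f t)‖ ^ 2 :=
        (Finset.single_le_sum (fun t _ => hp.energy_term_nonneg f f s t)
          (Finset.mem_univ t)).trans
          (Finset.single_le_sum (f := fun s => ∑ t, _)
            (fun s _ => Finset.sum_nonneg fun t _ => hp.energy_term_nonneg f f s t)
            (Finset.mem_univ s))
    _ ≤ ‖f‖ ^ 2 + ‖f‖ ^ 2 - 2 * inner ℝ f (blockOp a U f) := hp.energy_le f f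
    _ ≤ 2 * ε * ‖f‖ ^ 2 := by linarith

lemma norm_sq_le_sum_sq_mul (hp : ∀ s, 0 < p s) (f : PiLp 2 fun _ : S => E) :
    ‖f‖ ^ 2 ≤ (∑ s, p s ^ 2) * ‖fun s => (p s)⁻¹ • f s‖ ^ 2 := by
  rw [PiLp.norm_sq_eq_of_L2, Finset.sum_mul]
  refine Finset.sum_le_sum fun s _ => ?_
  have hs := norm_le_pi_norm (fun s => (p s)⁻¹ • f s) s
  rw [norm_smul, norm_inv, Real.norm_of_nonneg (hp s).le, inv_mul_le_iff₀ (hp s)] at hs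
  rw [← mul_pow]
  exact pow_le_pow_left₀ (norm_nonneg _) hs 2

theorem exists_norm_sub_isometry_le (hp : IsSchurVector a p) {u : PiLp 2 fun _ : S => E}
    (hpos : ∀ i j, 0 ≤ inner ℝ ((blockOp a U ^ i) u) ((blockOp a U ^ j) u))
    (hgrowth : ∀ τ : ℝ, 0 < τ → τ < 1 → ¬ (fun n => ‖(blockOp a U ^ n) u‖) =O[atTop] (τ ^ ·))
    {δ : ℝ} (hδ : 0 < δ) :
    ∃ h : S → E, h ≠ 0 ∧ ∀ s t, 0 < a s t → ‖h s - U s t (h t)‖ ≤ δ * ‖h‖ := by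
  set P : ℝ := ∑ s, p s ^ 2
  have hsmall : ∀ᶠ ε in nhdsWithin 0 (Set.Ioi 0), ∀ s t, 0 < a s t →
      2 * ε * P ≤ a s t * p s * p t * δ ^ 2 := by
    refine eventually_all.2 fun s => eventually_all.2 fun t =>
      eventually_imp_distrib_left.2 fun ha => ?_
    have hlim : Tendsto (fun ε => 2 * ε * P) (nhdsWithin 0 (Set.Ioi 0)) (nhds (2 * 0 * P)) :=
      ((tendsto_id.const_mul 2).mul_const P).mono_left nhdsWithin_le_nhds
    have hbound : 2 * 0 * P < a s t * p s * p t * δ ^ 2 := by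
      simpa using mul_pos (mul_pos (mul_pos ha (hp.pos s)) (hp.pos t)) (pow_pos hδ 2)
    exact (hlim.eventually_lt_const hbound).mono fun _ => le_of_lt
  obtain ⟨ε, hεδ, hε⟩ := (hsmall.and self_mem_nhdsWithin).exists
  obtain ⟨f, hf0, hf⟩ := exists_norm_sub_apply_le hp.norm_blockOp_le hpos hgrowth hε
  refine ⟨fun s => (p s)⁻¹ • f s, fun h0 => hf0 ?_, fun s t ha => ?_⟩
  · ext s
    exact (smul_eq_zero.1 (congrFun h0 s)).resolve_left (inv_ne_zero (hp.pos s).ne')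
  · have hw : 0 < a s t * p s * p t := mul_pos (mul_pos ha (hp.pos s)) (hp.pos t)
    refine abs_le_of_sq_le_sq' (le_of_mul_le_mul_left ?_ hw) (by positivity) |>.2
    calc a s t * p s * p t * ‖(p s)⁻¹ • f s - U s t ((p t)⁻¹ • f t)‖ ^ 2
        ≤ 2 * ε * ‖f‖ ^ 2 := hp.mul_norm_sub_sq_le hf s t
      _ ≤ 2 * ε * (P * ‖fun s => (p s)⁻¹ • f s‖ ^ 2) :=
          mul_le_mul_of_nonneg_left (norm_sq_le_sum_sq_mul hp.pos f)
            (mul_nonneg zero_le_two (le_of_lt hε))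
      _ ≤ a s t * p s * p t * (δ * ‖fun s => (p s)⁻¹ • f s‖) ^ 2 := by
          rw [← mul_assoc, mul_pow, ← mul_assoc]
          exact mul_le_mul_of_nonneg_right (hεδ s t ha) (sq_nonneg _)

end BlockOperators

section AlmostInvariantVectors

variable {S G E : Type*} [Fintype S] [Group G] [NormedAddCommGroup E] [InnerProductSpace ℝ E]
  {a : Matrix S S ℝ} {φ : S → S → G} {p : S → ℝ} {R : G →* (E →ₗᵢ[ℝ] E)}

/-- An isometric representation has almost invariant vectors if every finite set of group elements
moves some nonzero vector by an arbitrarily small proportion of its norm. -/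
def HasAlmostInvariantVectors (R : G →* (E →ₗᵢ[ℝ] E)) : Prop :=
  ∀ (F : Finset G) (ε : ℝ), 0 < ε → ∃ ξ : E, ξ ≠ 0 ∧ ∀ γ ∈ F, ‖R γ ξ - ξ‖ ≤ ε * ‖ξ‖

lemma norm_sub_le_of_kernel_pos (ha : ∀ s t, 0 ≤ a s t) {h : S → E} {δ : ℝ}
    (hh : ∀ s t, 0 < a s t → ‖h s - R (φ s t) (h t)‖ ≤ δ) {n : ℕ} {s t : S} {g k : G}
    (hpos : 0 < kernel (transferOp a φ) n (s, g) (t, k)) :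
    ‖R g (h s) - R k (h t)‖ ≤ n * δ := by
  induction n generalizing s g with
  | zero =>
    have heq : (s, g) = (t, k) := by
      by_contra hne
      simp [kernel, hne] at hpos
    obtain ⟨rfl, rfl⟩ := Prod.mk.inj heq
    simp
  | succ n ih =>
    obtain ⟨u, hedge, hrest⟩ := exists_edge_of_kernel_pos ha hpos
    have hstep : ‖R g (h s) - R (g * φ s u) (h u)‖ ≤ δ := by
      rw [map_mul, LinearIsometry.coe_mul, Function.comp_apply, ← map_sub, LinearIsometry.norm_map]
      exact hh s u hedge
    calc ‖R g (h s) - R k (h t)‖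
        ≤ ‖R g (h s) - R (g * φ s u) (h u)‖ + ‖R (g * φ s u) (h u) - R k (h t)‖ :=
          norm_sub_le_norm_sub_add_norm_sub _ _ _
      _ ≤ δ + n * δ := add_le_add hstep (ih hrest)
      _ = (n + 1 : ℕ) * δ := by push_cast; ring

theorem hasAlmostInvariantVectors_of_irreducible (ha : ∀ s t, 0 ≤ a s t)
    (hirr : IsIrreducible (transferOp a φ))
    (h : ∀ δ : ℝ, 0 < δ → ∃ h : S → E, h ≠ 0 ∧
      ∀ s t, 0 < a s t → ‖h s - R (φ s t) (h t)‖ ≤ δ * ‖h‖) :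
    HasAlmostInvariantVectors R := by
  intro F ε hε
  choose n _ hn using fun x : S × G => hirr (x.1, x.2) (x.1, 1)
  obtain ⟨N, hN⟩ := ((Set.finite_univ (α := S)).prod F.finite_toSet).image n |>.bddAbove
  obtain ⟨h, hh0, hh⟩ := h (ε / (N + 1)) (by positivity)
  obtain ⟨s₀, -⟩ := Function.ne_iff.1 hh0
  have : Nonempty S := ⟨s₀⟩
  obtain ⟨s, hs⟩ := Finite.exists_max fun s => ‖h s‖
  have hmax : ‖h‖ = ‖h s‖ :=
    le_antisymm ((pi_norm_le_iff_of_nonempty _).2 hs) (norm_le_pi_norm h s)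
  refine ⟨h s, fun hs0 => hh0 ?_, fun γ hγ => ?_⟩
  · rwa [hs0, norm_zero, norm_eq_zero] at hmax
  · have hpath := norm_sub_le_of_kernel_pos ha hh (hn (s, γ))
    rw [map_one, LinearIsometry.coe_one, id_eq, hmax] at hpath
    have hnN : n (s, γ) ≤ N := hN ⟨_, ⟨Set.mem_univ s, hγ⟩, rfl⟩
    calc ‖R γ (h s) - h s‖ ≤ n (s, γ) * (ε / (N + 1) * ‖h s‖) := hpath
      _ ≤ (N + 1) * (ε / (N + 1) * ‖h s‖) := by gcongr; linarith [(Nat.cast_le (α := ℝ)).2 hnN]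
      _ = ε * ‖h s‖ := by field_simp

end AlmostInvariantVectors

section RegularRepresentation

variable {G : Type*}

/-- Pointwise multiplication of square summable functions by bounded ones. -/
noncomputable def boundedMul : BoundedFun G →ₗ[ℝ] ℓ²(G, ℝ) →ₗ[ℝ] ℓ²(G, ℝ) :=
  .mk₂ ℝ (fun x f => ⟨fun g => x.1 g * f g, by
      obtain ⟨C, hC⟩ := x.2
      refine Memℓp.mono' (lp.memℓp (C • f)) fun g => ?_
      simpa [abs_mul] using
        mul_le_mul_of_nonneg_right ((hC g).trans (le_abs_self C)) (abs_nonneg (f g))⟩)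
    (fun x y f => by ext g; exact add_mul _ _ _)
    (fun c x f => by ext g; exact mul_assoc _ _ _)
    (fun x f₁ f₂ => by ext g; exact mul_add _ _ _)
    (fun c x f => by ext g; exact mul_left_comm _ _ _)

lemma boundedMul_apply (x : BoundedFun G) (f : ℓ²(G, ℝ)) (g : G) :
    boundedMul x f g = x.1 g * f g := rfl

/-- The functional `x ↦ ∑ x |ξ|²` defined by a square summable function `ξ`. -/
noncomputable def vectorState (ξ : ℓ²(G, ℝ)) : BoundedFun G →ₗ[ℝ] ℝ :=
  innerₗ _ ξ ∘ₗ boundedMul.flip ξ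

lemma isMean_vectorState {ξ : ℓ²(G, ℝ)} (hξ : ‖ξ‖ = 1) : IsMean (vectorState ξ) := by
  intro x c hx
  have hc : inner ℝ ξ (c • ξ) = c := by
    rw [real_inner_smul_right, real_inner_self_eq_norm_sq, hξ, one_pow, mul_one]
  refine hc ▸ hasSum_le (fun g => ?_) (lp.hasSum_inner ξ (boundedMul x ξ))
    (lp.hasSum_inner ξ (c • ξ))
  have hxg := mul_le_mul_of_nonneg_right (hx g) (mul_self_nonneg (ξ g))
  simp only [boundedMul_apply, lp.coeFn_smul, Pi.smul_apply, smul_eq_mul, RCLike.inner_apply,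
    conj_trivial]
  linarith

variable [Group G]

/-- The right regular representation of `G` on `ℓ²(G)`. -/
noncomputable def rightRegular : G →* (ℓ²(G, ℝ) →ₗᵢ[ℝ] ℓ²(G, ℝ)) where
  toFun γ :=
    { toFun f := ⟨fun g => f (g * γ), by
        refine (memℓp_gen_iff (by norm_num)).2 ?_
        exact ((Equiv.mulRight γ).summable_iff).2 ((memℓp_gen_iff (by norm_num)).1 (lp.memℓp f))⟩
      map_add' _ _ := rfl
      map_smul' _ _ := rfl
      norm_map' f := by
        have h2 : 0 < (2 : ENNReal).toReal := by norm_num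
        refine (Real.rpow_left_inj (norm_nonneg _) (norm_nonneg _) h2.ne').1 ?_
        exact (lp.norm_rpow_eq_tsum h2 _).trans <|
          ((Equiv.mulRight γ).tsum_eq fun g => ‖f g‖ ^ (2 : ENNReal).toReal).trans
            (lp.norm_rpow_eq_tsum h2 f).symm }
  map_one' := by
    ext f g
    exact congrArg f (mul_one g)
  map_mul' γ δ := by
    ext f g
    exact congrArg f (mul_assoc g γ δ).symm

lemma rightRegular_apply (γ : G) (f : ℓ²(G, ℝ)) (g : G) : rightRegular γ f g = f (g * γ) := rfl

lemma norm_boundedMul_le {x : BoundedFun G} {C : ℝ} (hx : ∀ g, |x.1 g| ≤ C) (f : ℓ²(G, ℝ)) :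
    ‖boundedMul x f‖ ≤ C * ‖f‖ := by
  have hC : 0 ≤ C := (abs_nonneg _).trans (hx 1)
  rw [← Real.norm_of_nonneg hC, ← norm_smul]
  refine lp.norm_mono two_ne_zero fun g => ?_
  rw [boundedMul_apply, lp.coeFn_smul, Pi.smul_apply, smul_eq_mul, norm_mul, norm_mul,
    Real.norm_of_nonneg hC]
  exact mul_le_mul_of_nonneg_right (hx g) (norm_nonneg _)

lemma rightRegular_boundedMul (γ : G) (x : BoundedFun G) (f : ℓ²(G, ℝ)) :
    rightRegular γ (boundedMul x f) = boundedMul (translate γ x) (rightRegular γ f) := rfl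

lemma abs_vectorState_translate_sub_le {ξ : ℓ²(G, ℝ)} (hξ : ‖ξ‖ = 1) (γ : G) {x : BoundedFun G}
    {C : ℝ} (hx : ∀ g, |x.1 g| ≤ C) :
    |vectorState ξ (translate γ x) - vectorState ξ x| ≤ 2 * ‖rightRegular γ ξ - ξ‖ * C := by
  set η := rightRegular γ ξ
  set y := translate γ x
  have hη : ‖η‖ = 1 := (LinearIsometry.norm_map _ _).trans hξ
  have hy (f : ℓ²(G, ℝ)) : ‖boundedMul y f‖ ≤ C * ‖f‖ := norm_boundedMul_le (fun g => hx (g * γ)) f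
  have hinv : vectorState ξ x = inner ℝ η (boundedMul y η) := by
    rw [← rightRegular_boundedMul, LinearIsometry.inner_map_map]
    rfl
  have hsplit : vectorState ξ y - vectorState ξ x =
      inner ℝ (ξ - η) (boundedMul y ξ) + inner ℝ η (boundedMul y (ξ - η)) := by
    rw [hinv, map_sub, inner_sub_left, inner_sub_right]
    simp only [vectorState, LinearMap.comp_apply, innerₗ_apply_apply, LinearMap.flip_apply]
    ring
  calc |vectorState ξ y - vectorState ξ x|
      ≤ |inner ℝ (ξ - η) (boundedMul y ξ)| + |inner ℝ η (boundedMul y (ξ - η))| :=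
        hsplit ▸ abs_add_le _ _
    _ ≤ ‖ξ - η‖ * (C * ‖ξ‖) + ‖η‖ * (C * ‖ξ - η‖) := by
        gcongr
        · exact (abs_real_inner_le_norm _ _).trans (by gcongr; exact hy ξ)
        · exact (abs_real_inner_le_norm _ _).trans (by gcongr; exact hy (ξ - η))
    _ = 2 * ‖η - ξ‖ * C := by
        rw [hξ, hη, norm_sub_rev η ξ]
        ring

theorem amenable_of_hasAlmostInvariantVectors
    (h : HasAlmostInvariantVectors (rightRegular : G →* (ℓ²(G, ℝ) →ₗᵢ[ℝ] ℓ²(G, ℝ)))) :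
    Amenable G := by
  refine amenable_of_isAlmostInvariant fun F ε hε => ?_
  obtain ⟨ξ, hξ0, hξ⟩ := h F (ε / 2) (half_pos hε)
  have hunit : ‖‖ξ‖⁻¹ • ξ‖ = 1 := norm_smul_inv_norm hξ0
  refine ⟨vectorState (‖ξ‖⁻¹ • ξ), isMean_vectorState hunit, fun γ hγ x C hx => ?_⟩
  refine (abs_vectorState_translate_sub_le hunit γ hx).trans
    (mul_le_mul_of_nonneg_right ?_ ((abs_nonneg _).trans (hx 1)))
  have hmove : ‖ξ‖⁻¹ * ‖rightRegular γ ξ - ξ‖ ≤ ε / 2 := by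
    rw [inv_mul_le_iff₀ (norm_pos_iff.2 hξ0), mul_comm]
    exact hξ γ hγ
  rw [map_smul, ← smul_sub, norm_smul, norm_inv, norm_norm]
  linarith

end RegularRepresentation

section Kesten

variable {S G : Type*} [Fintype S] [Group G] {a : Matrix S S ℝ} {φ : S → S → G} {p : S → ℝ}

/-- The unit vector of `ℓ²(S × G)`, realised as `ℓ²(G)^S`, at the point `(z, 1)`. -/
noncomputable def pointMass [DecidableEq S] [DecidableEq G] (z : S) :
    PiLp 2 fun _ : S => ℓ²(G, ℝ) :=
  WithLp.toLp 2 (Pi.single z (lp.single 2 1 1))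

lemma blockOp_pow_pointMass_apply [DecidableEq S] [DecidableEq G] (z : S) (n : ℕ) (s : S) (g : G) :
    (blockOp a (fun s t => rightRegular (φ s t)) ^ n) (pointMass z) s g =
      kernel (transferOp a φ) n (s, g) (z, 1) := by
  induction n generalizing s g with
  | zero =>
    by_cases hs : s = z
    · subst hs
      by_cases hg : g = 1 <;> simp [kernel, pointMass, hg]
    · simp [kernel, pointMass, hs]
  | succ n ih =>
    rw [pow_succ', Module.End.mul_apply, blockOp_apply, lp.coeFn_sum, Finset.sum_apply,
      kernel_transferOp_succ]
    refine Finset.sum_congr rfl fun t _ => ?_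
    rw [lp.coeFn_smul, Pi.smul_apply, rightRegular_apply, ih, smul_eq_mul]

theorem amenable_of_not_isBigO (hp : IsSchurVector a p) (hirr : IsIrreducible (transferOp a φ))
    {z : S} (hgrowth : ∀ τ : ℝ, 0 < τ → τ < 1 →
      ¬ (fun n => kernel (transferOp a φ) n (z, 1) (z, 1)) =O[atTop] (τ ^ ·)) :
    Amenable G := by
  classical
  have hker := kernel_nonneg (monotone_transferOp (φ := φ) hp.nonneg)
  refine amenable_of_hasAlmostInvariantVectors
    (hasAlmostInvariantVectors_of_irreducible hp.nonneg hirr fun δ hδ =>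
      exists_norm_sub_isometry_le hp (u := pointMass z) (fun i j => ?_) (fun τ hτ0 hτ1 hO => ?_) hδ)
  · simp only [PiLp.inner_apply, lp.inner_eq_tsum, blockOp_pow_pointMass_apply,
      RCLike.inner_apply, conj_trivial]
    exact Finset.sum_nonneg fun s _ => tsum_nonneg fun g => mul_nonneg (hker _ _ _) (hker _ _ _)
  · refine hgrowth τ hτ0 hτ1 (.trans (.of_norm_le fun n => ?_) hO)
    rw [← blockOp_pow_pointMass_apply]
    exact (lp.norm_apply_le_norm two_ne_zero _ _).trans (PiLp.norm_apply_le _ _)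

end Kesten

section GrowthRates

variable {a : ℕ → ℕ} {K : ℕ} {q : ℝ}

lemma log_natCast_div_nonneg (a : ℕ → ℕ) (n : ℕ) : 0 ≤ Real.log (a n) / n :=
  div_nonneg (Real.log_natCast_nonneg _) n.cast_nonneg

lemma monotone_log_natCast : Monotone fun n : ℕ => Real.log n := fun m n hmn => by
  rcases m.eq_zero_or_pos with rfl | hm
  · simpa using Real.log_natCast_nonneg n
  · exact Real.log_le_log (Nat.cast_pos.2 hm) (Nat.cast_le.2 hmn)

lemma log_div_le_log_of_le_pow {x : ℝ} (hx : 0 ≤ x) (hq : 1 ≤ q) {n : ℕ} (hn : 0 < n)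
    (h : x ≤ q ^ n) : Real.log x / n ≤ Real.log q := by
  rw [div_le_iff₀' (Nat.cast_pos.2 hn), ← Real.log_pow]
  rcases hx.eq_or_lt with rfl | hx
  · rw [Real.log_zero]
    exact Real.log_nonneg (one_le_pow₀ hq)
  · exact Real.log_le_log hx h

lemma isBoundedUnder_log_div (ha : ∀ n, 0 < n → a n ≤ K ^ n) :
    IsBoundedUnder (· ≤ ·) atTop fun n => Real.log (a n) / n := by
  refine isBoundedUnder_of_eventually_le (a := Real.log (K + 1)) ?_
  filter_upwards [eventually_gt_atTop 0] with n hn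
  refine log_div_le_log_of_le_pow (Nat.cast_nonneg _) (by simp) hn ?_
  calc (a n : ℝ) ≤ (K : ℝ) ^ n := mod_cast ha n hn
    _ ≤ (K + 1) ^ n := pow_le_pow_left₀ K.cast_nonneg (by simp) n

lemma isBigO_of_limsup_log_div_lt (ha : ∀ n, 0 < n → a n ≤ K ^ n) (hq : 0 < q)
    (h : limsup (fun n => Real.log (a n) / n) atTop < Real.log q) :
    (fun n => (a n : ℝ)) =O[atTop] (q ^ ·) := by
  refine .of_bound 1 ?_
  filter_upwards [eventually_lt_of_limsup_lt h (isBoundedUnder_log_div ha), eventually_gt_atTop 0]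
    with n hlog hn
  rw [Real.norm_natCast, Real.norm_of_nonneg (pow_nonneg hq.le n), one_mul]
  rcases (a n).eq_zero_or_pos with h0 | hpos
  · rw [h0, Nat.cast_zero]
    exact pow_nonneg hq.le n
  · rw [div_lt_iff₀' (Nat.cast_pos.2 hn), ← Real.log_pow] at hlog
    exact ((Real.log_lt_log_iff (Nat.cast_pos.2 hpos) (pow_pos hq n)).1 hlog).le

lemma limsup_log_div_le_of_isBigO (hq : 1 ≤ q) (h : (fun n => (a n : ℝ)) =O[atTop] (q ^ ·)) :
    limsup (fun n => Real.log (a n) / n) atTop ≤ Real.log q := by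
  obtain ⟨C, hC, hbound⟩ := h.exists_nonneg
  have hlim : Tendsto (fun n : ℕ => Real.log (C + 1) / n + Real.log q) atTop
      (nhds (0 + Real.log q)) :=
    (tendsto_const_div_atTop_nhds_zero_nat _).add_const _
  rw [zero_add] at hlim
  refine (limsup_le_limsup ?_ ?_ hlim.isBoundedUnder_le).trans_eq hlim.limsup_eq
  · filter_upwards [hbound.bound, eventually_gt_atTop 0] with n hn hn0
    rw [Real.norm_natCast, Real.norm_of_nonneg (by positivity)] at hn
    have hCq : 1 ≤ (C + 1) * q ^ n := one_le_mul_of_one_le_of_one_le (by simpa) (one_le_pow₀ hq)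
    have hlog : Real.log (a n) ≤ Real.log ((C + 1) * q ^ n) := by
      rcases (a n).eq_zero_or_pos with h0 | hpos
      · simpa [h0] using Real.log_nonneg hCq
      · exact Real.log_le_log (Nat.cast_pos.2 hpos)
          (hn.trans (mul_le_mul_of_nonneg_right (by simp) (by positivity)))
    rw [Real.log_mul (by positivity) (by positivity), Real.log_pow] at hlog
    rw [div_add' _ _ _ (by positivity)]
    exact div_le_div_of_nonneg_right (hlog.trans_eq (by ring)) n.cast_nonneg
  · exact (isBoundedUnder_of ⟨0, log_natCast_div_nonneg a⟩).isCoboundedUnder_le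

end GrowthRates

section Subshift

variable {S G K : Type*} {A : S → S → Bool}

lemma iterate_shift_apply (n k : ℕ) (x : Space A) : (shift^[n] x).1 k = x.1 (k + n) := by
  induction n generalizing x with
  | zero => rfl
  | succ n ih =>
    rw [Function.iterate_succ_apply, ih]
    exact congrArg x.1 (by omega)

/-- The symbols occurring in the subshift; they are the vertices of the graph whose infinite paths
are the points of the subshift. -/
def Symbols (A : S → S → Bool) : Type _ := {s : S // ∃ x : Space A, x.1 0 = s}

noncomputable instance [Fintype S] : Fintype (Symbols A) :=
  Fintype.ofInjective (Subtype.val : Symbols A → S) Subtype.val_injective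

/-- The `n`-th symbol of a point, as a vertex. -/
def symbol (x : Space A) (n : ℕ) : Symbols A :=
  ⟨x.1 n, shift^[n] x, by rw [iterate_shift_apply, zero_add]⟩

lemma symbol_eq_symbol_iff {x y : Space A} {m n : ℕ} :
    symbol x m = symbol y n ↔ x.1 m = y.1 n := Subtype.ext_iff

lemma symbol_iterate_shift (m n : ℕ) (x : Space A) :
    symbol (shift^[m] x) n = symbol x (n + m) :=
  Subtype.ext (iterate_shift_apply m n x)

/-- The transition matrix, restricted to the symbols which occur, as a real matrix. -/
def adjacency (A : S → S → Bool) : Matrix (Symbols A) (Symbols A) ℝ :=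
  .of fun s t => if A s.1 t.1 then 1 else 0

lemma adjacency_nonneg (s t : Symbols A) : 0 ≤ adjacency A s t := by
  rw [adjacency, Matrix.of_apply]
  split <;> norm_num

/-- The cocycle `ψ` is given by the labels `φ` of the edges traversed by a point. -/
def IsEdgeLabel (φ : Symbols A → Symbols A → G) (ψ : Space A → G) : Prop :=
  ∀ x, ψ x = φ (symbol x 0) (symbol x 1)

lemma IsEdgeLabel.map {φ : Symbols A → Symbols A → G} {ψ : Space A → G} (hφ : IsEdgeLabel φ ψ)
    (f : G → K) : IsEdgeLabel (fun s t => f (φ s t)) fun x => f (ψ x) :=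
  fun x => congrArg f (hφ x)

variable [Group G] [Group K] {φ : Symbols A → Symbols A → G} {ψ : Space A → G}

lemma cocycle_map (f : G →* K) (ψ : Space A → G) (n : ℕ) (x : Space A) :
    cocycle (fun x => f (ψ x)) n x = f (cocycle ψ n x) := by
  induction n generalizing x with
  | zero => exact f.map_one.symm
  | succ n ih => rw [cocycle, cocycle, ih, map_mul]

lemma cocycle_add (ψ : Space A → G) (m n : ℕ) (x : Space A) :
    cocycle ψ (m + n) x = cocycle ψ m x * cocycle ψ n (shift^[m] x) := by
  induction m generalizing x with
  | zero => rw [zero_add, cocycle, one_mul, Function.iterate_zero_apply]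
  | succ m ih =>
    rw [Nat.add_right_comm, cocycle, ih, cocycle, mul_assoc, Function.iterate_succ_apply]

lemma exists_isEdgeLabel (hψ : TwoCoord ψ) : ∃ φ, IsEdgeLabel φ ψ := by
  classical
  refine ⟨fun s t => if h : ∃ y : Space A, symbol y 0 = s ∧ symbol y 1 = t then ψ h.choose else 1,
    fun x => ?_⟩
  have hx : ∃ y : Space A, symbol y 0 = symbol x 0 ∧ symbol y 1 = symbol x 1 := ⟨x, rfl, rfl⟩
  refine Eq.trans ?_ (dif_pos hx).symm
  exact hψ _ _ (congrArg Subtype.val hx.choose_spec.1).symm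
    (congrArg Subtype.val hx.choose_spec.2).symm

/-- The product of the labels of the first `n` edges of a sequence of vertices. -/
def labelProd (φ : Symbols A → Symbols A → G) : ℕ → (ℕ → Symbols A) → G
  | 0, _ => 1
  | n + 1, w => φ (w 0) (w 1) * labelProd φ n fun k => w (k + 1)

lemma labelProd_congr {n : ℕ} {w w' : ℕ → Symbols A} (h : ∀ k ≤ n, w k = w' k) :
    labelProd φ n w = labelProd φ n w' := by
  induction n generalizing w w' with
  | zero => rfl
  | succ n ih =>
    rw [labelProd, labelProd, h 0 (by omega), h 1 (by omega), ih fun k hk => h (k + 1) (by omega)]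

lemma IsEdgeLabel.cocycle_eq (hφ : IsEdgeLabel φ ψ) (n : ℕ) (x : Space A) :
    cocycle ψ n x = labelProd φ n (symbol x) := by
  induction n generalizing x with
  | zero => rfl
  | succ n ih => exact congrArg₂ (· * ·) (hφ x) (ih (shift x))

/-- The paths of length `n` from `p` to `q` in the graph of the group extension, recorded by their
vertices in `Symbols A` and continued by a constant sequence. -/
def pathSet (φ : Symbols A → Symbols A → G) (n : ℕ) (p q : Symbols A × G) : Set (ℕ → Symbols A) :=
  {w | w 0 = p.1 ∧ (∀ k < n, A (w k).1 (w (k + 1)).1 = true) ∧ (∀ k ≥ n, w k = q.1) ∧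
    p.2 * labelProd φ n w = q.2}

/-- Splitting off the first edge of a path. -/
def pathSetSuccEquiv (n : ℕ) (s : Symbols A) (g : G) (q : Symbols A × G) :
    pathSet φ (n + 1) (s, g) q ≃
      Σ u : {u : Symbols A // A s.1 u.1 = true}, pathSet φ n (u.1, g * φ s u.1) q where
  toFun w := ⟨⟨w.1 1, by simpa only [w.2.1] using w.2.2.1 0 n.succ_pos⟩,
    fun k => w.1 (k + 1), rfl, fun k hk => w.2.2.1 (k + 1) (Nat.succ_lt_succ hk),
    fun k hk => w.2.2.2.1 (k + 1) (Nat.succ_le_succ hk), by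
      simpa only [labelProd, w.2.1, mul_assoc] using w.2.2.2.2⟩
  invFun w := ⟨fun | 0 => s | k + 1 => w.2.1 k, rfl,
    fun
      | 0, _ => by simpa only [w.2.2.1] using w.1.2
      | k + 1, hk => w.2.2.2.1 k (Nat.lt_of_succ_lt_succ hk),
    fun
      | k + 1, hk => w.2.2.2.2.1 k (Nat.le_of_succ_le_succ hk),
    by simpa only [labelProd, w.2.2.1, mul_assoc] using w.2.2.2.2.2⟩
  left_inv w := Subtype.ext <| funext fun
    | 0 => w.2.1.symm
    | _ + 1 => rfl
  right_inv := by
    rintro ⟨⟨u, hu⟩, w, hw⟩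
    obtain rfl : w 0 = u := hw.1
    rfl

lemma apply_mod_of_iterate_shift_eq {n : ℕ} {x : Space A} (hx : shift^[n] x = x) (k : ℕ) :
    x.1 (k % n) = x.1 k := by
  have hperiodic : Function.Periodic x.1 n := fun k => by rw [← iterate_shift_apply, hx]
  exact hperiodic.map_mod_nat k

lemma symbol_of_iterate_shift_eq {n : ℕ} {x : Space A} (hx : shift^[n] x = x) :
    symbol x n = symbol x 0 := by
  have h := apply_mod_of_iterate_shift_eq hx n
  rw [Nat.mod_self] at h
  exact Subtype.ext h.symm

lemma apply_mod_of_apply_eq {V : Type*} {w : ℕ → V} {n : ℕ} (hw : w n = w 0) {k : ℕ} (hk : k ≤ n) :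
    w (k % n) = w k := by
  rcases hk.eq_or_lt with rfl | hk
  · rw [Nat.mod_self, hw]
  · rw [Nat.mod_eq_of_lt hk]

lemma apply_succ_mod_of_apply_eq {V : Type*} {w : ℕ → V} {n : ℕ} (hn : 0 < n) (hw : w n = w 0)
    (k : ℕ) : w ((k + 1) % n) = w (k % n + 1) := by
  rw [← Nat.mod_add_mod]
  exact apply_mod_of_apply_eq hw (Nat.mod_lt k hn)

/-- The point obtained by repeating a closed path of length `n`. -/
def unroll {n : ℕ} (hn : 0 < n) (w : ℕ → Symbols A) (hw : w n = w 0)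
    (hedge : ∀ k < n, A (w k).1 (w (k + 1)).1 = true) : Space A :=
  ⟨fun k => (w (k % n)).1, fun k => by
    simp only [apply_succ_mod_of_apply_eq hn hw]
    exact hedge _ (Nat.mod_lt k hn)⟩

lemma symbol_unroll {n : ℕ} (hn : 0 < n) {w : ℕ → Symbols A} (hw : w n = w 0)
    (hedge : ∀ k < n, A (w k).1 (w (k + 1)).1 = true) {k : ℕ} (hk : k ≤ n) :
    symbol (unroll hn w hw hedge) k = w k :=
  Subtype.ext (congrArg Subtype.val (apply_mod_of_apply_eq hw hk))

lemma iterate_shift_unroll {n : ℕ} (hn : 0 < n) {w : ℕ → Symbols A} (hw : w n = w 0)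
    (hedge : ∀ k < n, A (w k).1 (w (k + 1)).1 = true) :
    shift^[n] (unroll hn w hw hedge) = unroll hn w hw hedge := by
  refine Subtype.ext <| funext fun k => ?_
  rw [iterate_shift_apply]
  exact congrArg (fun l => (w l).1) (Nat.add_mod_right k n)

lemma symbol_min_mem_pathSet (hφ : IsEdgeLabel φ ψ) (n : ℕ) (x : Space A) (g : G) :
    (fun k => symbol x (min k n)) ∈
      pathSet φ n (symbol x 0, g) (symbol x n, g * cocycle ψ n x) := by
  refine ⟨by simp only [Nat.zero_min], fun k hk => ?_, fun k hk => ?_, ?_⟩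
  · simp only [min_eq_left hk.le, min_eq_left (Nat.succ_le_of_lt hk)]
    exact x.2 k
  · simp only [min_eq_right hk]
  · rw [hφ.cocycle_eq]
    exact congrArg (g * ·) (labelProd_congr fun k hk => by rw [min_eq_left hk])

lemma apply_eq_of_mem_pathSet {n : ℕ} {s : Symbols A} {g h : G} {w : ℕ → Symbols A}
    (hw : w ∈ pathSet φ n (s, g) (s, h)) : w n = w 0 :=
  (hw.2.2.1 n le_rfl).trans hw.1.symm

/-- The points of period `n` on the fibre over `e` of the group extension. -/
abbrev PeriodicPoint (ψ : Space A → G) (n : ℕ) : Type _ :=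
  {x : Space A // shift^[n] x = x ∧ cocycle ψ n x = 1}

/-- Periodic points correspond to closed paths. -/
def periodicPointEquiv (hφ : IsEdgeLabel φ ψ) {n : ℕ} (hn : 0 < n) (s : Symbols A) :
    {x : PeriodicPoint ψ n // symbol x.1 0 = s} ≃ pathSet φ n (s, 1) (s, 1) where
  toFun x := ⟨fun k => symbol x.1.1 (min k n), by
    simpa only [x.1.2.2, symbol_of_iterate_shift_eq x.1.2.1, x.2, mul_one] using
      symbol_min_mem_pathSet hφ n x.1.1 1⟩
  invFun w :=
    have hw : w.1 n = w.1 0 := apply_eq_of_mem_pathSet w.2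
    ⟨⟨unroll hn w.1 hw w.2.2.1, iterate_shift_unroll hn hw w.2.2.1, by
      rw [hφ.cocycle_eq, labelProd_congr fun k hk => symbol_unroll hn hw w.2.2.1 hk]
      simpa only [one_mul] using w.2.2.2.2⟩,
      (symbol_unroll hn hw w.2.2.1 n.zero_le).trans w.2.1⟩
  left_inv x := Subtype.ext <| Subtype.ext <| Subtype.ext <| funext fun k => by
    refine Eq.trans ?_ (apply_mod_of_iterate_shift_eq x.1.2.1 k)
    exact congrArg x.1.1.1 (min_eq_left (Nat.mod_lt k hn).le)
  right_inv w := Subtype.ext <| funext fun k => by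
    have hw : w.1 n = w.1 0 := apply_eq_of_mem_pathSet w.2
    refine (symbol_unroll hn hw w.2.2.1 (min_le_right k n)).trans ?_
    rcases le_total k n with hk | hk
    · rw [min_eq_left hk]
    · rw [min_eq_right hk, w.2.2.2.1 n le_rfl, w.2.2.2.1 k hk]

lemma injective_periodicPoint_apply (ψ : Space A → G) {n : ℕ} (hn : 0 < n) :
    Function.Injective fun (x : PeriodicPoint ψ n) (i : Fin n) => x.1.1 i := by
  refine fun x y hxy => Subtype.ext <| Subtype.ext <| funext fun k => ?_
  rw [← apply_mod_of_iterate_shift_eq x.2.1, ← apply_mod_of_iterate_shift_eq y.2.1]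
  exact congrFun hxy ⟨k % n, Nat.mod_lt k hn⟩

section Finite

variable [Finite S]

instance (n : ℕ) (p q : Symbols A × G) : Finite (pathSet φ n p q) := by
  have : Finite (Symbols A) := Subtype.finite
  refine Finite.of_injective (fun w (i : Fin n) => w.1 i) fun w w' h =>
    Subtype.ext (funext fun k => ?_)
  rcases lt_or_ge k n with hk | hk
  · exact congrFun h ⟨k, hk⟩
  · rw [w.2.2.2.1 k hk, w'.2.2.2.1 k hk]

lemma natCard_periodicPoint_le (ψ : Space A → G) {n : ℕ} (hn : 0 < n) :
    Nat.card (PeriodicPoint ψ n) ≤ Nat.card S ^ n := by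
  simpa [Nat.card_fun] using
    Nat.card_le_card_of_injective _ (injective_periodicPoint_apply ψ hn)

lemma hGur_le_hGur_map (f : G →* K) (ψ : Space A → G) : hGur ψ ≤ hGur fun x => f (ψ x) := by
  refine limsup_le_limsup ?_ (isBoundedUnder_of ⟨0, log_natCast_div_nonneg _⟩).isCoboundedUnder_le
    (isBoundedUnder_log_div fun _ => natCard_periodicPoint_le _)
  filter_upwards [eventually_gt_atTop 0] with n hn
  have : Finite (PeriodicPoint (fun x => f (ψ x)) n) :=
    .of_injective _ (injective_periodicPoint_apply _ hn)
  refine div_le_div_of_nonneg_right (monotone_log_natCast ?_) n.cast_nonneg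
  exact Nat.card_le_card_of_injective
    (Subtype.map id fun x hx => ⟨hx.1, (cocycle_map f ψ n x).trans (by rw [hx.2, map_one])⟩)
    (Subtype.map_injective _ Function.injective_id)

end Finite

variable [Fintype S]

theorem natCard_pathSet (n : ℕ) (p q : Symbols A × G) :
    (Nat.card (pathSet φ n p q) : ℝ) = kernel (transferOp (adjacency A) φ) n p q := by
  classical
  obtain ⟨s, g⟩ := p
  induction n generalizing s g with
  | zero =>
    by_cases hpq : (s, g) = q
    · subst hpq
      have hconst : pathSet φ 0 (s, g) (s, g) = {fun _ => s} := by
        ext w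
        exact ⟨fun hw => funext fun k => hw.2.2.1 k k.zero_le, by
          rintro rfl
          simp [pathSet, labelProd]⟩
      simp [hconst, kernel]
    · have hempty : pathSet φ 0 (s, g) q = ∅ := by
        refine Set.eq_empty_of_forall_notMem fun w ⟨h0, _, hq, hg⟩ => hpq ?_
        exact Prod.ext (h0.symm.trans (hq 0 le_rfl)) ((mul_one g).symm.trans hg)
      simp [hempty, kernel, hpq]
  | succ n ih =>
    rw [Nat.card_congr (pathSetSuccEquiv n s g q), Nat.card_sigma, kernel_transferOp_succ,
      Nat.cast_sum]
    simp only [ih, adjacency, Matrix.of_apply, ite_mul, one_mul, zero_mul, ← Finset.sum_filter]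
    exact (Finset.sum_subtype _ (by simp) fun u => kernel _ n (u, g * φ s u) q).symm

theorem natCard_periodicPoint (hφ : IsEdgeLabel φ ψ) {n : ℕ} (hn : 0 < n) :
    (Nat.card (PeriodicPoint ψ n) : ℝ) =
      ∑ s, kernel (transferOp (adjacency A) φ) n (s, 1) (s, 1) := by
  have : Finite (PeriodicPoint ψ n) := .of_injective _ (injective_periodicPoint_apply ψ hn)
  rw [← Nat.card_congr (Equiv.sigmaFiberEquiv fun x : PeriodicPoint ψ n => symbol x.1 0),
    Nat.card_sigma, Nat.cast_sum]
  refine Finset.sum_congr rfl fun s _ => ?_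
  rw [Nat.card_congr (periodicPointEquiv hφ hn s), natCard_pathSet]

theorem isBigO_kernel_of_hGur_lt (hφ : IsEdgeLabel φ ψ) {q : ℝ} (hq : 0 < q)
    (h : hGur ψ < Real.log q) (p : Symbols A × G) :
    (kernel (transferOp (adjacency A) φ) · p p) =O[atTop] (q ^ ·) := by
  refine .trans (.of_bound 1 ?_)
    (isBigO_of_limsup_log_div_lt (fun _ => natCard_periodicPoint_le ψ) hq h)
  filter_upwards [eventually_gt_atTop 0] with n hn
  have hnonneg := kernel_nonneg (monotone_transferOp (φ := φ) adjacency_nonneg) n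
  rw [Real.norm_of_nonneg (hnonneg p p), Real.norm_natCast, one_mul, natCard_periodicPoint hφ hn]
  calc kernel (transferOp (adjacency A) φ) n p p
      = kernel (transferOp (adjacency A) φ) n (p.1, 1) (p.1, 1) := by
        rw [← kernel_transferOp_mul_left n p.2 p.1 p.1 1 1, mul_one]
    _ ≤ _ := Finset.single_le_sum (f := fun s => kernel _ n (s, 1) (s, 1))
        (fun s _ => hnonneg (s, 1) (s, 1)) (Finset.mem_univ p.1)

theorem hGur_le_log_of_isBigO (hφ : IsEdgeLabel φ ψ) {q : ℝ} (hq : 1 ≤ q)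
    (h : ∀ s, (kernel (transferOp (adjacency A) φ) · (s, 1) (s, 1)) =O[atTop] (q ^ ·)) :
    hGur ψ ≤ Real.log q := by
  have hsum := Asymptotics.IsBigO.sum fun s (_ : s ∈ Finset.univ) => h s
  refine limsup_log_div_le_of_isBigO hq (hsum.congr' ?_ .rfl)
  filter_upwards [eventually_gt_atTop 0] with n hn
  rw [Finset.sum_apply]
  exact (natCard_periodicPoint hφ hn).symm

/-- The kernels of the transfer operator of the extension are natural numbers. -/
lemma one_le_of_isBigO_kernel (hirr : IsIrreducible (transferOp (adjacency A) φ)) {q : ℝ}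
    (hq : 0 ≤ q) {p : Symbols A × G}
    (h : (kernel (transferOp (adjacency A) φ) · p p) =O[atTop] (q ^ ·)) : 1 ≤ q := by
  have hmono := monotone_transferOp (φ := φ) adjacency_nonneg
  obtain ⟨H, hH0, hH⟩ := exists_superharmonic hirr hmono hq fun q' hq' =>
    h.trans (isBigO_pow_pow_of_le_left hq hq'.le)
  obtain ⟨n, hn, hpos⟩ := hirr p p
  rw [← natCard_pathSet, Nat.cast_pos] at hpos
  have hle := kernel_mul_le hmono hq (fun x => (hH0 x).le) hH n p p
  rw [mul_le_mul_iff_left₀ (hH0 p), ← natCard_pathSet] at hle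
  exact (one_le_pow_iff_of_nonneg hq hn.ne').1 ((Nat.one_le_cast.2 hpos).trans hle)

end Subshift

section Transitivity

variable {S G : Type*} {A : S → S → Bool} [Group G] {ψ : Space A → G}

lemma iterate_T (ψ : Space A → G) (n : ℕ) (x : Space A) (g : G) :
    (T ψ)^[n] (x, g) = (shift^[n] x, g * cocycle ψ n x) := by
  induction n generalizing x g with
  | zero => exact congrArg (x, ·) (mul_one g).symm
  | succ n ih =>
    rw [Function.iterate_succ_apply, T, ih, mul_assoc]
    rfl

lemma transitiveExt_iff : TransitiveExt ψ ↔ ∃ (x : Space A) (g₀ : G),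
    ∀ (m : ℕ) (y : Space A) (g : G), ∃ n : ℕ,
      (∀ j < m, symbol x (j + n) = symbol y j) ∧ g₀ * cocycle ψ n x = g := by
  simp only [TransitiveExt, Prod.exists, iterate_T, symbol_eq_symbol_iff, iterate_shift_apply]

lemma surjective_shift_of_transitiveExt [Nontrivial G] (htrans : TransitiveExt ψ) :
    Function.Surjective (shift : Space A → Space A) := by
  obtain ⟨x, g₀, hx⟩ := transitiveExt_iff.1 htrans
  intro y
  obtain ⟨g, h, hgh⟩ := exists_pair_ne G
  have hpos : ∃ n > 0, symbol x n = symbol y 0 := by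
    obtain ⟨m, hm, hmg⟩ := hx 1 y g
    obtain ⟨n, hn, hnh⟩ := hx 1 y h
    have hmn : m ≠ n := by
      rintro rfl
      exact hgh (hmg.symm.trans hnh)
    rcases m.eq_zero_or_pos with rfl | hm0
    · exact ⟨n, by omega, by simpa using hn 0 one_pos⟩
    · exact ⟨m, hm0, by simpa using hm 0 one_pos⟩
  obtain ⟨n, hn, hxy⟩ := hpos
  have hedge := x.2 (n - 1)
  rw [Nat.sub_add_cancel hn, symbol_eq_symbol_iff.1 hxy] at hedge
  exact ⟨⟨fun | 0 => x.1 (n - 1) | k + 1 => y.1 k, fun | 0 => hedge | k + 1 => y.2 k⟩, rfl⟩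

variable {φ : Symbols A → Symbols A → G}

lemma exists_ge_symbol_eq (hφ : IsEdgeLabel φ ψ)
    (hshift : Function.Surjective (shift : Space A → Space A)) {x : Space A} {g₀ : G}
    (hx : ∀ (m : ℕ) (y : Space A) (g : G), ∃ n : ℕ,
      (∀ j < m, symbol x (j + n) = symbol y j) ∧ g₀ * cocycle ψ n x = g)
    (N : ℕ) (t : Symbols A) (h : G) :
    ∃ n ≥ N, symbol x n = t ∧ g₀ * cocycle ψ n x = h := by
  obtain ⟨z, hz⟩ := t.2
  obtain ⟨y, rfl⟩ := hshift.iterate N z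
  obtain ⟨n, hn, hng⟩ := hx (N + 1) y (h * (cocycle ψ N y)⁻¹)
  have hsymbol : ∀ k ≤ N, symbol (shift^[n] x) k = symbol y k := fun k hk => by
    rw [symbol_iterate_shift, hn k (Nat.lt_succ_of_le hk)]
  refine ⟨n + N, N.le_add_left n, ?_, ?_⟩
  · rw [add_comm, hn N N.lt_succ_self, ← zero_add N, ← symbol_iterate_shift]
    exact Subtype.ext hz
  · rw [cocycle_add, ← mul_assoc, hng, hφ.cocycle_eq N (shift^[n] x), labelProd_congr hsymbol,
      ← hφ.cocycle_eq, inv_mul_cancel_right]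

variable [Fintype S]

lemma kernel_orbit_pos (hφ : IsEdgeLabel φ ψ) (n : ℕ) (x : Space A) (g : G) :
    0 < kernel (transferOp (adjacency A) φ) n (symbol x 0, g) (symbol x n, g * cocycle ψ n x) := by
  rw [← natCard_pathSet, Nat.cast_pos]
  have : Nonempty (pathSet φ n (symbol x 0, g) (symbol x n, g * cocycle ψ n x)) :=
    ⟨⟨_, symbol_min_mem_pathSet hφ n x g⟩⟩
  exact Nat.card_pos

theorem isIrreducible_transferOp [Nontrivial G] (hφ : IsEdgeLabel φ ψ)
    (htrans : TransitiveExt ψ) : IsIrreducible (transferOp (adjacency A) φ) := by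
  have hshift := surjective_shift_of_transitiveExt htrans
  obtain ⟨x, g₀, hx⟩ := transitiveExt_iff.1 htrans
  rintro ⟨s, g⟩ ⟨t, h⟩
  obtain ⟨m, -, rfl, rfl⟩ := exists_ge_symbol_eq hφ hshift hx 0 s g
  obtain ⟨n, hmn, rfl, rfl⟩ := exists_ge_symbol_eq hφ hshift hx (m + 1) t h
  obtain ⟨k, rfl⟩ := Nat.exists_eq_add_of_lt hmn
  refine ⟨k + 1, k.succ_pos, ?_⟩
  have hpos := kernel_orbit_pos hφ (k + 1) (shift^[m] x) (g₀ * cocycle ψ m x)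
  rwa [symbol_iterate_shift, symbol_iterate_shift, zero_add, mul_assoc, ← cocycle_add,
    add_comm (k + 1), ← add_assoc] at hpos

end Transitivity

section KestenForCharacters

variable {S G : Type*} [Fintype S] [Group G] {c : Matrix S S ℝ} {φ : S → S → G} {r : ℝ}

lemma isSchurVector_conj {M : Matrix S S ℝ} (hM : ∀ s t, 0 ≤ M s t) (hr : 0 < r) {v d : S → ℝ}
    (hv0 : ∀ s, 0 < v s) (hd0 : ∀ s, 0 < d s) (hv : M *ᵥ v ≤ r • v)
    (hw : (d * d * v) ᵥ* M ≤ r • (d * d * v)) :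
    IsSchurVector (.of fun s t => r⁻¹ * (d s * M s t / d t)) (d * v) where
  nonneg s t := mul_nonneg (inv_nonneg.2 hr.le)
    (div_nonneg (mul_nonneg (hd0 s).le (hM s t)) (hd0 t).le)
  pos s := mul_pos (hd0 s) (hv0 s)
  mulVec_le s := by
    have hds := (hd0 s).le
    calc ∑ t, r⁻¹ * (d s * M s t / d t) * (d t * v t) = r⁻¹ * (d s * (M *ᵥ v) s) := by
          simp only [Matrix.mulVec, dotProduct, Finset.mul_sum]
          refine Finset.sum_congr rfl fun t _ => ?_
          field_simp [(hd0 t).ne']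
      _ ≤ r⁻¹ * (d s * (r * v s)) := by
          gcongr
          exact hv s
      _ = d s * v s := by field_simp
  vecMul_le t := by
    have hdt := hd0 t
    calc ∑ s, d s * v s * (r⁻¹ * (d s * M s t / d t)) = r⁻¹ * (((d * d * v) ᵥ* M) t / d t) := by
          simp only [Matrix.vecMul, dotProduct, Finset.mul_sum, Finset.sum_div, Pi.mul_apply]
          exact Finset.sum_congr rfl fun s _ => by ring
      _ ≤ r⁻¹ * (r * (d t * d t * v t) / d t) := by
          gcongr
          exact hw t
      _ = d t * v t := by field_simp

theorem amenable_of_twist_mulVec_le (hc : ∀ s t, 0 ≤ c s t)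
    (hirr : IsIrreducible (transferOp c φ)) (hr : 0 < r) {χ : G →* {x : ℝ // 0 < x}} {v : S → ℝ}
    (hv0 : ∀ s, 0 < v s) (hv : twist c φ χ *ᵥ v ≤ r • v) {z : S}
    (hgrowth : ∀ q : ℝ, 0 < q → q < r →
      ¬ (fun n => kernel (transferOp c φ) n (z, 1) (z, 1)) =O[atTop] (q ^ ·)) :
    Amenable G := by
  obtain ⟨w, hw0, hw⟩ := exists_left_subeigenvector (isIrreducible_twist hirr hc) hr.le hv0 hv
  obtain ⟨d, hd0, rfl⟩ : ∃ d : S → ℝ, (∀ s, 0 < d s) ∧ w = d * d * v := by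
    refine ⟨fun s => √(w s / v s), fun s => Real.sqrt_pos.2 (div_pos (hw0 s) (hv0 s)), ?_⟩
    ext s
    rw [Pi.mul_apply, Pi.mul_apply, Real.mul_self_sqrt (div_nonneg (hw0 s).le (hv0 s).le),
      div_mul_cancel₀ _ (hv0 s).ne']
  have hF0 (p : S × G) : 0 < d p.1 / χ p.2 := div_pos (hd0 p.1) (χ p.2).2
  have hdoob := transferOp_twist_doob (c := c) (φ := φ) (χ := χ) (fun s => (hd0 s).ne') r⁻¹
  refine amenable_of_not_isBigO (z := z)
    (isSchurVector_conj (twist_nonneg hc) hr hv0 hd0 hv hw)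
    (hirr.doob hF0 (inv_pos.2 hr) hdoob) fun τ hτ0 hτ1 hO => ?_
  refine hgrowth (r * τ) (mul_pos hr hτ0) (mul_lt_of_lt_one_right hr hτ1) ?_
  simp only [kernel_doob (fun p => (hF0 p).ne') hdoob, div_self (hF0 (z, 1)).ne', mul_one] at hO
  simpa only [← mul_assoc, ← mul_pow, mul_inv_cancel₀ hr.ne', one_pow, one_mul] using
    (Asymptotics.isBigO_refl (r ^ · : ℕ → ℝ) atTop).mul hO

end KestenForCharacters

section GurevicEntropy

variable {S G : Type*} [Fintype S] {A : S → S → Bool} [Group G] {ψ : Space A → G}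
  {φ : Symbols A → Symbols A → G}

theorem exp_hGur_le_of_isBigO_kernel (hφ : IsEdgeLabel φ ψ)
    (hirr : IsIrreducible (transferOp (adjacency A) φ)) {q : ℝ} (hq : 0 < q) {p : Symbols A × G}
    (h : (kernel (transferOp (adjacency A) φ) · p p) =O[atTop] (q ^ ·)) :
    Real.exp (hGur ψ) ≤ q := by
  rw [← Real.le_log_iff_exp_le hq]
  exact hGur_le_log_of_isBigO hφ (one_le_of_isBigO_kernel hirr hq.le h) fun s =>
    hirr.kernel_isBigO (monotone_transferOp adjacency_nonneg) hq h (s, 1) (s, 1)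

theorem exp_hGur_le_of_superharmonic (hφ : IsEdgeLabel φ ψ)
    (hirr : IsIrreducible (transferOp (adjacency A) φ)) {r : ℝ} (hr : 0 < r)
    {H : Symbols A × G → ℝ} (hH0 : ∀ p, 0 < H p) (hH : transferOp (adjacency A) φ H ≤ r • H)
    (p : Symbols A × G) : Real.exp (hGur ψ) ≤ r := by
  have hmono := monotone_transferOp (φ := φ) adjacency_nonneg
  refine exp_hGur_le_of_isBigO_kernel (p := p) hφ hirr hr (.of_bound 1 (.of_forall fun n => ?_))
  rw [Real.norm_of_nonneg (kernel_nonneg hmono n p p), Real.norm_of_nonneg (by positivity), one_mul]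
  exact le_of_mul_le_mul_right (kernel_mul_le hmono hr.le (fun x => (hH0 x).le) hH n p p) (hH0 p)

theorem exists_superharmonic_exp_hGur (hφ : IsEdgeLabel φ ψ)
    (hirr : IsIrreducible (transferOp (adjacency A) φ)) (p : Symbols A × G) :
    ∃ H : Symbols A × G → ℝ, (∀ p, 0 < H p) ∧
      transferOp (adjacency A) φ H ≤ Real.exp (hGur ψ) • H :=
  exists_superharmonic hirr (monotone_transferOp adjacency_nonneg) (Real.exp_pos _).le (z := p)
    fun _ hq => isBigO_kernel_of_hGur_lt hφ ((Real.exp_pos _).trans hq)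
      ((Real.lt_log_iff_exp_lt ((Real.exp_pos _).trans hq)).2 hq) p

theorem hGur_abelianization_le_of_amenable (hG : Amenable G) (hφ : IsEdgeLabel φ ψ)
    (hirr : IsIrreducible (transferOp (adjacency A) φ)) (z : Symbols A) :
    hGur (fun x => Abelianization.of (ψ x)) ≤ hGur ψ := by
  obtain ⟨H, hH0, hH⟩ := exists_superharmonic_exp_hGur hφ hirr (z, 1)
  obtain ⟨χ, v, hv0, hv⟩ := exists_character hG hirr adjacency_nonneg (Real.exp_pos _).le hH0 hH
  have hχ : twist (adjacency A) (fun s t => Abelianization.of (φ s t)) (Abelianization.lift χ) =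
      twist (adjacency A) φ χ := by
    simp only [twist, Abelianization.lift_apply_of]
  exact Real.exp_le_exp.1 <| exp_hGur_le_of_superharmonic (hφ.map _)
    (hirr.map adjacency_nonneg (QuotientGroup.mk'_surjective _)) (Real.exp_pos _)
    (fun p => mul_pos (Abelianization.lift χ p.2).2 (hv0 p.1))
    (transferOp_character_mul_le (hχ ▸ hv)) (z, 1)

theorem amenable_of_hGur_abelianization_le
    (hle : hGur (fun x => Abelianization.of (ψ x)) ≤ hGur ψ) (hφ : IsEdgeLabel φ ψ)
    (hirr : IsIrreducible (transferOp (adjacency A) φ)) (z : Symbols A) : Amenable G := by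
  have hirr' := hirr.map adjacency_nonneg
    (QuotientGroup.mk'_surjective _ : Function.Surjective (Abelianization.of (G := G)))
  obtain ⟨H, hH0, hH⟩ := exists_superharmonic_exp_hGur (hφ.map Abelianization.of) hirr' (z, 1)
  have hab : Amenable (Abelianization G) := amenable_of_commGroup
  obtain ⟨χ, v, hv0, hv⟩ := exists_character hab hirr' adjacency_nonneg (Real.exp_pos _).le hH0 hH
  refine amenable_of_twist_mulVec_le (χ := χ.comp Abelianization.of) (z := z) adjacency_nonneg hirr
    (Real.exp_pos _) hv0 hv fun q hq0 hqr hO => ?_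
  exact (exp_hGur_le_of_isBigO_kernel hφ hirr hq0 hO).not_gt
    (hqr.trans_le (Real.exp_le_exp.2 hle))

lemma amenable_of_subsingleton [Subsingleton G] : Amenable G :=
  let : CommGroup G := { ‹Group G› with mul_comm := fun _ _ => Subsingleton.elim _ _ }
  amenable_of_commGroup

lemma hGur_eq_of_subsingleton {S G K : Type*} {A : S → S → Bool} [Group G] [Group K]
    [Subsingleton G] [Subsingleton K] (ψ : Space A → G) (ψ' : Space A → K) : hGur ψ = hGur ψ' := by
  simp only [hGur, eq_iff_true_of_subsingleton, and_true]

end GurevicEntropy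

end SubshiftExtension

open SubshiftExtension

theorem statement2_general {S : Type*} [Finite S] {A : S → S → Bool} {G : Type*} [Group G]
    (ψ : Space A → G) (hψ : TwoCoord ψ) (htrans : TransitiveExt ψ) :
    hGur ψ = hGur (fun x => Abelianization.of (ψ x)) ↔ Amenable G := by
  cases nonempty_fintype S
  rcases subsingleton_or_nontrivial G with _ | _
  · have : Subsingleton (Abelianization G) := (QuotientGroup.mk'_surjective _).subsingleton
    exact iff_of_true (hGur_eq_of_subsingleton ψ _) amenable_of_subsingleton
  obtain ⟨φ, hφ⟩ := exists_isEdgeLabel hψ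
  have hirr : IsIrreducible (transferOp (adjacency A) φ) := isIrreducible_transferOp hφ htrans
  obtain ⟨⟨x, -⟩, -⟩ := htrans
  constructor
  · exact fun h => amenable_of_hGur_abelianization_le h.ge hφ hirr (symbol x 0)
  · exact fun hG => (hGur_le_hGur_map Abelianization.of ψ).antisymm
      (hGur_abelianization_le_of_amenable hG hφ hirr (symbol x 0))

/-- If `T_ψ` is transitive then
`h_Gur(T_ψ) = h_Gur(T_{ψ^{ab}})` if and only if `G` is amenable. -/
theorem statement2
    {S : Type*} [Fintype S] {A : S → S → Bool} (hA : Aperiodic A)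
    {G : Type*} [Group G] [Countable G]
    (ψ : Space A → G) (hψ : TwoCoord ψ)
    (htrans : TransitiveExt ψ) :
    hGur ψ = hGur (fun x => Abelianization.of (ψ x)) ↔ Amenable G :=
  statement2_general ψ hψ htrans
end

section
/- Let σ : Σ⁺ → Σ⁺ be a topologically mixing one-sided subshift of finite type with finite alphabet, G a countable group, and T_ψ the group extension determined by a map ψ depending on two coordinates. If T_ψ is transitive and G is not amenable, then h_Gur(T_ψ) < h_Gur(T_{ψ^ab}). -/
/-!
STATEMENT 3: For a topologically mixing one-sided subshift of finite type with finite
alphabet, a countable group `G` and a transitive group extension `T_ψ` (with `ψ` depending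
on two coordinates), the Gurevič entropies satisfy
if `G` is not amenable then `h_Gur(T_ψ) < h_Gur(T_{ψ^ab})`.
-/

open Filter

open DS

open DS

/-!
Let `λ = exp h_Gur(T_{ψ^ab})`. At level `λ` the transfer operator of the abelianised skew product
still has positive supersolutions. Normalised logarithms of these form a compact convex set, on
which the abelian group acts by commuting affine maps; a common fixed point (Markov–Kakutani)
is an exponential supersolution `(g, i) ↦ χ g * u i`. Conjugating by it, with `χ` pulled back to
`G`, turns the walk on `S × G` into a substochastic one. Non-amenability gives a Poincaré
inequality for its Markov operator `P` on `ℓ²(G)^S`, so that `‖(1 + P) f‖² ≤ 4 r ‖f‖²` for some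
`r < 1`. Since `(1 + P) ^ (2 k)` contains `P ^ k` with the central binomial coefficient, the number
of closed walks of length `k` with trivial label is at most `2 k (λ r) ^ k`.
-/

namespace DS

section FixedPoint

open Function Pointwise Topology

variable {E : Type*} [AddCommGroup E] [Module ℝ E] {C : Set E}

lemma birkhoffAverage_mem {T : E → E} (hconv : Convex ℝ C) (hT : Set.MapsTo T C C) {x : E}
    (hx : x ∈ C) {n : ℕ} (hn : n ≠ 0) : birkhoffAverage ℝ T id n x ∈ C := by
  rw [birkhoffAverage, birkhoffSum, Finset.smul_sum]
  refine hconv.sum_mem (fun _ _ => by positivity) ?_ fun k _ => hT.iterate k hx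
  simp [hn]

variable [TopologicalSpace E] [IsTopologicalAddGroup E] [ContinuousSMul ℝ E] [T2Space E]

lemma exists_isFixedPt_of_mapsTo (hC : IsCompact C) (hconv : Convex ℝ C) (hne : C.Nonempty)
    (T : E →L[ℝ] E) (hT : Set.MapsTo T C C) : ∃ x ∈ C, IsFixedPt T x := by
  obtain ⟨x, hx⟩ := hne
  let a : ℕ → E := fun n => birkhoffAverage ℝ T id n x
  obtain ⟨y, hyC, hy⟩ : ∃ y ∈ C, MapClusterPt y atTop a :=
    hC.exists_mapClusterPt <| tendsto_principal.mpr <|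
      (eventually_ne_atTop 0).mono fun n hn => birkhoffAverage_mem hconv hT hx hn
  have hdiff : Tendsto (fun n => T (a n) - a n) atTop (𝓝 0) := by
    have hbdd : Bornology.IsVonNBounded ℝ (C - C) := (hC.isVonNBounded ℝ).sub (hC.isVonNBounded ℝ)
    refine (hbdd.smul_tendsto_zero (x := fun n => T^[n] x - x)
      (Eventually.of_forall fun n => Set.sub_mem_sub (hT.iterate n hx) hx)
      (tendsto_inv_atTop_nhds_zero_nat (𝕜 := ℝ))).congr fun n => ?_
    have hcomm : T (a n) = birkhoffAverage ℝ T id n (T x) := by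
      simp only [a, birkhoffAverage, birkhoffSum, map_smul, map_sum, id, ← iterate_succ_apply',
        ← iterate_succ_apply]
    rw [hcomm, birkhoffAverage_apply_sub_birkhoffAverage]
    rfl
  have hcluster : MapClusterPt (T y - y) atTop fun n => T (a n) - a n :=
    hy.continuousAt_comp (T.continuous.sub continuous_id).continuousAt
  exact ⟨y, hyC, sub_eq_zero.mp (eq_of_nhds_neBot (ClusterPt.mono hcluster hdiff))⟩

/-- The **Markov–Kakutani fixed point theorem** for continuous linear maps. -/
theorem exists_forall_isFixedPt_of_mapsTo {ι : Type*} (hC : IsCompact C) (hconv : Convex ℝ C)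
    (hne : C.Nonempty) (T : ι → E →L[ℝ] E) (hT : ∀ i, Set.MapsTo (T i) C C)
    (hcomm : ∀ i j x, T i (T j x) = T j (T i x)) : ∃ x ∈ C, ∀ i, IsFixedPt (T i) x := by
  have hclosed : ∀ i, IsClosed (fixedPoints (T i)) := fun i => isClosed_fixedPoints (T i).continuous
  have hfix_conv : ∀ i, Convex ℝ (fixedPoints (T i)) := fun i x hx y hy a b _ _ _ => by
    rw [mem_fixedPoints_iff] at hx hy ⊢
    rw [map_add, map_smul, map_smul, hx, hy]
  have hfinite : ∀ F : Finset ι, (C ∩ ⋂ i ∈ F, fixedPoints (T i)).Nonempty := by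
    classical
    intro F
    induction F using Finset.induction_on with
    | empty => simpa using hne
    | insert j F _ ih =>
      obtain ⟨x, ⟨hxC, hxF⟩, hxj⟩ := exists_isFixedPt_of_mapsTo
        (hC.inter_right (isClosed_biInter fun i _ => hclosed i))
        (hconv.inter (convex_iInter₂ fun i _ => hfix_conv i)) ih (T j) fun x hx => by
          refine ⟨hT j hx.1, Set.mem_iInter₂.mpr fun i hi => ?_⟩
          have hxi : T i x = x := Set.mem_iInter₂.mp hx.2 i hi
          rw [mem_fixedPoints_iff, hcomm, hxi]
      exact ⟨x, hxC, by rw [Finset.set_biInter_insert]; exact ⟨hxj, hxF⟩⟩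
  obtain ⟨x, hxC, hx⟩ := hC.inter_iInter_nonempty _ hclosed hfinite
  exact ⟨x, hxC, fun i => Set.mem_iInter.mp hx i⟩

end FixedPoint

section Amenability

open ENNReal Topology
open scoped InnerProductSpace lp

variable {G : Type*} [Group G] {H : Type*} [NormedAddCommGroup H] [NormedSpace ℝ H]

/-- An isometric representation has almost invariant vectors if every finite set of group elements
moves some nonzero vector by an arbitrarily small proportion of its norm. -/
def HasAlmostInvariantVectors (π : G →* (H →ₗᵢ[ℝ] H)) : Prop :=
  ∀ (F : Finset G) (ε : ℝ), 0 < ε → ∃ v : H, v ≠ 0 ∧ ∀ g ∈ F, ‖π g v - v‖ < ε * ‖v‖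

lemma HasAlmostInvariantVectors.exists_norm_eq_one {π : G →* (H →ₗᵢ[ℝ] H)}
    (hπ : HasAlmostInvariantVectors π) (F : Finset G) {ε : ℝ} (hε : 0 < ε) :
    ∃ v : H, ‖v‖ = 1 ∧ ∀ g ∈ F, ‖π g v - v‖ < ε := by
  obtain ⟨v, hv, h⟩ := hπ F ε hε
  have hv' : 0 < ‖v‖ := norm_pos_iff.mpr hv
  refine ⟨‖v‖⁻¹ • v, norm_smul_inv_norm hv, fun g hg => ?_⟩
  rw [map_smul, ← smul_sub, norm_smul, norm_inv, norm_norm, inv_mul_lt_iff₀ hv', mul_comm]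
  exact h g hg

/-- The isometry `f ↦ f (· * g)` of `ℓ²(G)`. -/
noncomputable def rightTranslation (g : G) : ℓ²(G, ℝ) →ₗᵢ[ℝ] ℓ²(G, ℝ) where
  toFun f := ⟨fun h => f (h * g), by
    have hf : Memℓp (f : G → ℝ) 2 := lp.memℓp f
    change Memℓp (fun h => f (h * g)) 2
    rw [memℓp_gen_iff (by norm_num)] at hf ⊢
    exact hf.comp_injective (mul_left_injective g)⟩
  map_add' _ _ := rfl
  map_smul' _ _ := rfl
  norm_map' f := by
    rw [lp.norm_eq_tsum_rpow (by norm_num), lp.norm_eq_tsum_rpow (by norm_num)]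
    congr 1
    exact (Equiv.mulRight g).tsum_eq fun h => ‖f h‖ ^ (2 : ℝ≥0∞).toReal

lemma rightTranslation_apply (g h : G) (f : ℓ²(G, ℝ)) : rightTranslation g f h = f (h * g) := rfl

variable (G) in
/-- The right regular representation `(ρ_g f)(h) = f (h g)` of `G` on `ℓ²(G)`. -/
noncomputable def rightRegular : G →* (ℓ²(G, ℝ) →ₗᵢ[ℝ] ℓ²(G, ℝ)) where
  toFun := rightTranslation
  map_one' := by ext f h; rw [rightTranslation_apply, mul_one, LinearIsometry.coe_one, id]
  map_mul' g g' := by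
    ext f h
    simp only [LinearIsometry.coe_mul, Function.comp_apply, rightTranslation_apply, mul_assoc]

lemma rightRegular_apply (g h : G) (f : ℓ²(G, ℝ)) : rightRegular G g f h = f (h * g) := rfl

lemma amenable_of_mean (M : ℓ^∞(G, ℝ) →ₗ[ℝ] ℝ)
    (hinv : ∀ (g : G) (x y : ℓ^∞(G, ℝ)), (∀ h, y h = x (h * g)) → M y = M x)
    (hmono : ∀ (c : ℝ) (x : ℓ^∞(G, ℝ)), (∀ g, c ≤ x g) → c ≤ M x) : Amenable G := by
  let coe : ℓ^∞(G, ℝ) →ₗ[ℝ] (G → ℝ) :=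
    { toFun x := x, map_add' _ _ := rfl, map_smul' _ _ := rfl }
  obtain ⟨restrict, hrestrict⟩ := coe.exists_leftInverse_of_injective
    (LinearMap.ker_eq_bot.mpr fun _ _ h => lp.ext h)
  let m : (G → ℝ) →ₗ[ℝ] ℝ := M ∘ₗ restrict
  have hm : ∀ x : ℓ^∞(G, ℝ), m x = M x :=
    fun x => congrArg M (LinearMap.congr_fun hrestrict x)
  refine ⟨m, map_add m, map_smul m, fun x hx => ?_⟩
  obtain ⟨C, hC⟩ := hx.exists_norm_le
  have hmem : ∀ f : G → G, Memℓp (fun h => x (f h)) ∞ := fun f =>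
    memℓp_infty ⟨C, by rintro _ ⟨h, rfl⟩; exact hC _ ⟨f h, rfl⟩⟩
  let x' : ℓ^∞(G, ℝ) := ⟨x, hmem id⟩
  have hx' : m x = M x' := hm x'
  refine ⟨fun g => ?_, ?_, ?_⟩
  · let y : ℓ^∞(G, ℝ) := ⟨fun h => x (h * g), hmem (· * g)⟩
    rw [hx', ← hinv g x' y fun _ => rfl]
    exact hm y
  · exact (hmono _ x' fun g => csInf_le hx.bddBelow ⟨g, rfl⟩).trans_eq hx'.symm
  · rw [hx', ← neg_le_neg_iff, ← map_neg]
    exact hmono _ _ fun g => neg_le_neg (le_csSup hx.bddAbove ⟨g, rfl⟩)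

/-- Pointwise multiplication of square-summable functions by bounded ones. -/
noncomputable def mulL2 (ι : Type*) : ℓ^∞(ι, ℝ) →L[ℝ] ℓ²(ι, ℝ) →L[ℝ] ℓ²(ι, ℝ) :=
  lp.holderL 2 (fun _ => ContinuousLinearMap.mul ℝ ℝ) (K := 1) fun _ => by simp

lemma mulL2_apply {ι : Type*} (x : ℓ^∞(ι, ℝ)) (v : ℓ²(ι, ℝ)) (i : ι) :
    mulL2 ι x v i = x i * v i := rfl

lemma norm_mulL2_apply_le {ι : Type*} (x : ℓ^∞(ι, ℝ)) (v : ℓ²(ι, ℝ)) :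
    ‖mulL2 ι x v‖ ≤ ‖x‖ * ‖v‖ := by
  have hK : ‖mulL2 ι‖ ≤ 1 := lp.norm_holderL_le _ _ _
  calc ‖mulL2 ι x v‖ ≤ ‖mulL2 ι‖ * ‖x‖ * ‖v‖ := (mulL2 ι).le_opNorm₂ x v
    _ ≤ 1 * ‖x‖ * ‖v‖ := by gcongr
    _ = ‖x‖ * ‖v‖ := by rw [one_mul]

/-- The functional `x ↦ ∑ g, x g * (v g) ^ 2` on bounded functions, integration against the
density `v ^ 2`. -/
noncomputable def vectorState {ι : Type*} (v : ℓ²(ι, ℝ)) : StrongDual ℝ (ℓ^∞(ι, ℝ)) :=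
  innerSL ℝ v ∘L (mulL2 ι).flip v

lemma vectorState_apply {ι : Type*} (v : ℓ²(ι, ℝ)) (x : ℓ^∞(ι, ℝ)) :
    vectorState v x = ⟪v, mulL2 ι x v⟫_ℝ := rfl

lemma norm_vectorState_le {ι : Type*} (v : ℓ²(ι, ℝ)) : ‖vectorState v‖ ≤ ‖v‖ ^ 2 := by
  refine ContinuousLinearMap.opNorm_le_bound _ (by positivity) fun x => ?_
  calc ‖⟪v, mulL2 ι x v⟫_ℝ‖ ≤ ‖v‖ * (‖x‖ * ‖v‖) :=
        (norm_inner_le_norm _ _).trans (by gcongr; exact norm_mulL2_apply_le x v)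
    _ = ‖v‖ ^ 2 * ‖x‖ := by ring

lemma abs_vectorState_sub_le {ι : Type*} (v w : ℓ²(ι, ℝ)) (x : ℓ^∞(ι, ℝ)) :
    |vectorState v x - vectorState w x| ≤ (‖v‖ + ‖w‖) * ‖x‖ * ‖v - w‖ := by
  have hsplit : vectorState v x - vectorState w x =
      ⟪v - w, mulL2 ι x v⟫_ℝ + ⟪w, mulL2 ι x (v - w)⟫_ℝ := by
    rw [vectorState_apply, vectorState_apply, inner_sub_left, map_sub, inner_sub_right]
    ring
  have hbound : ∀ a b : ℓ²(ι, ℝ), |⟪a, mulL2 ι x b⟫_ℝ| ≤ ‖a‖ * (‖x‖ * ‖b‖) := fun a b =>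
    (abs_real_inner_le_norm _ _).trans (by gcongr; exact norm_mulL2_apply_le x b)
  rw [hsplit]
  linarith [abs_add_le ⟪v - w, mulL2 ι x v⟫_ℝ ⟪w, mulL2 ι x (v - w)⟫_ℝ, hbound (v - w) v,
    hbound w (v - w)]

lemma mul_norm_sq_le_vectorState {ι : Type*} (v : ℓ²(ι, ℝ)) {x : ℓ^∞(ι, ℝ)} {c : ℝ}
    (hx : ∀ i, c ≤ x i) : c * ‖v‖ ^ 2 ≤ vectorState v x := by
  have hnonneg : 0 ≤ ⟪v, mulL2 ι x v - c • v⟫_ℝ := by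
    rw [lp.inner_eq_tsum]
    refine tsum_nonneg fun i => ?_
    have hi : (mulL2 ι x v - c • v) i = (x i - c) * v i := (sub_mul _ _ _).symm
    calc 0 ≤ (x i - c) * (v i) ^ 2 := mul_nonneg (sub_nonneg.mpr (hx i)) (sq_nonneg _)
      _ = ⟪v i, (mulL2 ι x v - c • v) i⟫_ℝ := by rw [hi, RCLike.inner_apply, conj_trivial]; ring
  rw [inner_sub_right, real_inner_smul_right, real_inner_self_eq_norm_sq] at hnonneg
  exact sub_nonneg.mp hnonneg

lemma vectorState_rightRegular (g : G) (v : ℓ²(G, ℝ)) {x y : ℓ^∞(G, ℝ)}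
    (hxy : ∀ h, y h = x (h * g)) : vectorState (rightRegular G g v) y = vectorState v x := by
  have hmul : mulL2 G y (rightRegular G g v) = rightRegular G g (mulL2 G x v) := by
    ext h
    rw [mulL2_apply, hxy, rightRegular_apply, rightRegular_apply, mulL2_apply]
  rw [vectorState_apply, hmul, LinearIsometry.inner_map_map, vectorState_apply]

theorem amenable_of_hasAlmostInvariantVectors
    (hG : HasAlmostInvariantVectors (rightRegular G)) : Amenable G := by
  classical
  choose v hnorm hv using fun i : Finset G × ℕ =>
    hG.exists_norm_eq_one i.1 (Nat.one_div_pos_of_nat (α := ℝ) (n := i.2))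
  let U : Ultrafilter (Finset G × ℕ) := Ultrafilter.of atTop
  let μ : Finset G × ℕ → WeakDual ℝ (ℓ^∞(G, ℝ)) := fun i => vectorState (v i)
  obtain ⟨M, -, hM⟩ : ∃ M ∈ _, Tendsto μ U (𝓝 M) :=
    (WeakDual.isCompact_closedBall (𝕜 := ℝ) 0 1).ultrafilter_le_nhds' (U.map μ) <|
      Ultrafilter.mem_map.mpr <| Filter.univ_mem' fun i => mem_closedBall_zero_iff.mpr <|
        (norm_vectorState_le (v i)).trans_eq (by rw [hnorm, one_pow])
  have hlim : ∀ x, Tendsto (fun i => vectorState (v i) x) U (𝓝 (M x)) := fun x =>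
    ((WeakDual.eval_continuous x).tendsto M).comp hM
  have hmoved : ∀ g, Tendsto (fun i => ‖rightRegular G g (v i) - v i‖) U (𝓝 0) := fun g => by
    have hsmall : ∀ᶠ i : Finset G × ℕ in atTop,
        ‖rightRegular G g (v i) - v i‖ ≤ 1 / ((i.2 : ℝ) + 1) :=
      (eventually_ge_atTop ({g}, 0)).mono fun i hi =>
        (hv i g (Finset.singleton_subset_iff.mp hi.1)).le
    exact (squeeze_zero' (Eventually.of_forall fun _ => norm_nonneg _) hsmall
      (tendsto_one_div_add_atTop_nhds_zero_nat.comp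
        (prod_atTop_atTop_eq (α := Finset G) (β := ℕ) ▸ tendsto_snd))).mono_left
      (Ultrafilter.of_le _)
  refine amenable_of_mean (M : _ →L[ℝ] ℝ).toLinearMap (fun g x y hxy => ?_) fun c x hx => ?_
  · have hdiff : Tendsto (fun i => vectorState (v i) y - vectorState (v i) x) U (𝓝 0) := by
      refine squeeze_zero_norm (fun i => ?_)
        (by simpa only [mul_zero] using (hmoved g).const_mul (2 * ‖y‖))
      rw [← vectorState_rightRegular g (v i) hxy, norm_sub_rev, Real.norm_eq_abs]
      refine (abs_vectorState_sub_le _ _ _).trans_eq ?_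
      rw [LinearIsometry.norm_map, hnorm]
      norm_num
    exact sub_eq_zero.mp (tendsto_nhds_unique ((hlim y).sub (hlim x)) hdiff)
  · refine ge_of_tendsto' (hlim x) fun i => ?_
    have hi := mul_norm_sq_le_vectorState (v i) hx
    rwa [hnorm, one_pow, mul_one] at hi

end Amenability

section Walks

variable {S G K : Type*} [Group G] [Group K] {A : S → S → Bool} {φ : S → S → G}

/-- `HasWalk A φ n i j g` says that some `A`-admissible walk `i = k₀, k₁, …, kₙ = j` has label
`φ k₀ k₁ * ⋯ * φ kₙ₋₁ kₙ = g`. -/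
inductive HasWalk (A : S → S → Bool) (φ : S → S → G) : ℕ → S → S → G → Prop
  | nil (i : S) : HasWalk A φ 0 i i 1
  | cons {n : ℕ} {i k j : S} {g : G} (hik : A i k = true) (w : HasWalk A φ n k j g) :
      HasWalk A φ (n + 1) i j (φ i k * g)

namespace HasWalk

variable {m n : ℕ} {i j k : S} {g h : G}

lemma append (w : HasWalk A φ m i j g) (w' : HasWalk A φ n j k h) :
    HasWalk A φ (m + n) i k (g * h) := by
  induction w with
  | nil i => simpa using w'
  | cons hik _ ih =>
    rw [Nat.add_right_comm, mul_assoc]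
    exact cons hik (ih w')

lemma map (f : G →* K) (w : HasWalk A φ n i j g) :
    HasWalk A (fun i j => f (φ i j)) n i j (f g) := by
  induction w with
  | nil i => exact f.map_one ▸ nil i
  | cons hik _ ih => exact f.map_mul _ _ ▸ cons hik ih

lemma reflTransGen (w : HasWalk A φ n i j g) :
    Relation.ReflTransGen (fun i j => A i j = true) i j := by
  induction w with
  | nil i => exact .refl
  | cons hik _ ih => exact .head hik ih

end HasWalk

/-- The skew product of the graph of `A` with `G`, in which an edge `i → j` multiplies the `G`-part
by `φ i j` on the right, is irreducible. -/
def IsSkewIrreducible (A : S → S → Bool) (φ : S → S → G) : Prop :=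
  ∀ i j g, ∃ n, HasWalk A φ n i j g

lemma IsSkewIrreducible.map {f : G →* K} (hf : Function.Surjective f)
    (hirr : IsSkewIrreducible A φ) : IsSkewIrreducible A fun i j => f (φ i j) := fun i j k => by
  obtain ⟨g, rfl⟩ := hf k
  obtain ⟨n, w⟩ := hirr i j g
  exact ⟨n, w.map f⟩

variable [Fintype S]

open Classical in
/-- The number of `A`-admissible walks of length `n` from `i` to `j` with label `g`. -/
noncomputable def walkCount (A : S → S → Bool) (φ : S → S → G) : ℕ → S → S → G → ℕ
  | 0, i, j, g => if i = j ∧ g = 1 then 1 else 0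
  | n + 1, i, j, g => ∑ k with A i k = true, walkCount A φ n k j ((φ i k)⁻¹ * g)

lemma walkCount_succ (n : ℕ) (i j : S) (g : G) : walkCount A φ (n + 1) i j g =
    ∑ k with A i k = true, walkCount A φ n k j ((φ i k)⁻¹ * g) := rfl

lemma walkCount_le_card_pow (n : ℕ) (i j : S) (g : G) :
    walkCount A φ n i j g ≤ Fintype.card S ^ n := by
  induction n generalizing i g with
  | zero => rw [walkCount, pow_zero]; split_ifs <;> decide
  | succ n ih =>
    calc walkCount A φ (n + 1) i j g
        ≤ ∑ k with A i k = true, Fintype.card S ^ n := Finset.sum_le_sum fun k _ => ih k _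
      _ ≤ ∑ _k : S, Fintype.card S ^ n := Finset.sum_le_sum_of_subset (Finset.filter_subset _ _)
      _ = Fintype.card S ^ (n + 1) := by
        rw [Finset.sum_const, Finset.card_univ, smul_eq_mul, pow_succ']

lemma HasWalk.walkCount_le {m : ℕ} {i j : S} {g : G} (w : HasWalk A φ m i j g) (n : ℕ) (k : S)
    (h : G) : walkCount A φ n j k h ≤ walkCount A φ (m + n) i k (g * h) := by
  induction w with
  | nil i => rw [zero_add, one_mul]
  | @cons m i i' j g hik _ ih =>
    rw [Nat.add_right_comm, walkCount_succ]
    refine le_trans ?_ (Finset.single_le_sum (fun _ _ => Nat.zero_le _)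
      (Finset.mem_filter.mpr ⟨Finset.mem_univ i', hik⟩))
    rw [mul_assoc, inv_mul_cancel_left]
    exact ih

lemma HasWalk.walkCount_pos {n : ℕ} {i j : S} {g : G} (w : HasWalk A φ n i j g) :
    0 < walkCount A φ n i j g := by
  have h := w.walkCount_le 0 j 1
  rw [mul_one, add_zero, walkCount, if_pos ⟨rfl, rfl⟩] at h
  exact h

end Walks

section DirichletForm

open scoped InnerProductSpace

variable {S : Type*} [Fintype S] {p : S → S → ℝ} {w : S → ℝ}

/-- Nonnegative matrices with row sums at most one. -/
structure IsSubstochastic (p : S → S → ℝ) : Prop where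
  nonneg : ∀ i j, 0 ≤ p i j
  row_sum_le : ∀ i, ∑ j, p i j ≤ 1

/-- The positive weight `w` is an excessive measure of the matrix `p`: `w p ≤ w`. -/
structure IsExcessive (p : S → S → ℝ) (w : S → ℝ) : Prop where
  pos : ∀ i, 0 < w i
  sum_le : ∀ j, ∑ i, w i * p i j ≤ w j

variable {H : Type*} [NormedAddCommGroup H]

/-- The squared norm of `f : S → H` in the Hilbert sum weighted by `w`. -/
noncomputable def weightedNormSq (w : S → ℝ) (f : S → H) : ℝ := ∑ i, w i * ‖f i‖ ^ 2

lemma mul_norm_sq_le_weightedNormSq (hw : ∀ i, 0 ≤ w i) (f : S → H) (i : S) :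
    w i * ‖f i‖ ^ 2 ≤ weightedNormSq w f :=
  Finset.single_le_sum (f := fun i => w i * ‖f i‖ ^ 2)
    (fun i _ => mul_nonneg (hw i) (sq_nonneg _)) (Finset.mem_univ i)

variable [InnerProductSpace ℝ H] {R : S → S → H →ₗᵢ[ℝ] H}

/-- The Dirichlet form of the random walk `p` twisted by the isometries `R`. -/
noncomputable def dirichletForm (w : S → ℝ) (p : S → S → ℝ) (R : S → S → H →ₗᵢ[ℝ] H)
    (f : S → H) : ℝ :=
  ∑ i, w i * ∑ j, p i j * ‖f i - R i j (f j)‖ ^ 2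

/-- The Markov operator of the random walk `p` twisted by the isometries `R`. -/
noncomputable def markovOp (p : S → S → ℝ) (R : S → S → H →ₗᵢ[ℝ] H) : Module.End ℝ (S → H) :=
  LinearMap.pi fun i => ∑ j, p i j • (R i j).toLinearMap ∘ₗ LinearMap.proj j

lemma markovOp_apply (f : S → H) (i : S) : markovOp p R f i = ∑ j, p i j • R i j (f j) := by
  simp [markovOp]

lemma IsSubstochastic.norm_markovOp_sq_le (hp : IsSubstochastic p) (f : S → H) (i : S) :
    ‖markovOp p R f i‖ ^ 2 ≤ ∑ j, p i j * ‖f j‖ ^ 2 := by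
  have hnorm : ‖markovOp p R f i‖ ≤ ∑ j, p i j * ‖f j‖ := by
    rw [markovOp_apply]
    refine (norm_sum_le _ _).trans_eq (Finset.sum_congr rfl fun j _ => ?_)
    rw [norm_smul, Real.norm_of_nonneg (hp.nonneg i j), LinearIsometry.norm_map]
  calc ‖markovOp p R f i‖ ^ 2 ≤ (∑ j, p i j * ‖f j‖) ^ 2 := by gcongr
    _ ≤ (∑ j, p i j) * ∑ j, p i j * ‖f j‖ ^ 2 :=
        Finset.sum_sq_le_sum_mul_sum_of_sq_le_mul _ (fun j _ => hp.nonneg i j)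
          (fun j _ => mul_nonneg (hp.nonneg i j) (sq_nonneg _)) fun j _ => by linarith
    _ ≤ ∑ j, p i j * ‖f j‖ ^ 2 :=
        mul_le_of_le_one_left (Finset.sum_nonneg fun j _ =>
          mul_nonneg (hp.nonneg i j) (sq_nonneg _)) (hp.row_sum_le i)

lemma two_mul_inner_markovOp (f : S → H) (i : S) : 2 * ⟪f i, markovOp p R f i⟫_ℝ =
    (∑ j, p i j) * ‖f i‖ ^ 2 + ∑ j, p i j * ‖f j‖ ^ 2 - ∑ j, p i j * ‖f i - R i j (f j)‖ ^ 2 := by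
  rw [markovOp_apply, inner_sum, Finset.mul_sum, Finset.sum_mul, ← Finset.sum_add_distrib,
    ← Finset.sum_sub_distrib]
  refine Finset.sum_congr rfl fun j _ => ?_
  rw [norm_sub_sq_real, LinearIsometry.norm_map, inner_smul_right]
  ring

lemma IsSubstochastic.norm_add_markovOp_sq_le (hp : IsSubstochastic p) (f : S → H) (i : S) :
    ‖f i + markovOp p R f i‖ ^ 2 ≤
      2 * ‖f i‖ ^ 2 + 2 * ∑ j, p i j * ‖f j‖ ^ 2 - ∑ j, p i j * ‖f i - R i j (f j)‖ ^ 2 := by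
  have hrow : (∑ j, p i j) * ‖f i‖ ^ 2 ≤ ‖f i‖ ^ 2 :=
    mul_le_of_le_one_left (sq_nonneg _) (hp.row_sum_le i)
  rw [norm_add_sq_real, two_mul_inner_markovOp]
  linarith [hp.norm_markovOp_sq_le (R := R) f i]

lemma IsExcessive.weightedNormSq_add_markovOp_le (hw : IsExcessive p w) (hp : IsSubstochastic p)
    (f : S → H) : weightedNormSq w (f + markovOp p R f) ≤
      4 * weightedNormSq w f - dirichletForm w p R f := by
  have hmass : ∑ i, w i * ∑ j, p i j * ‖f j‖ ^ 2 ≤ weightedNormSq w f := by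
    calc ∑ i, w i * ∑ j, p i j * ‖f j‖ ^ 2 = ∑ j, (∑ i, w i * p i j) * ‖f j‖ ^ 2 := by
          simp only [Finset.mul_sum, Finset.sum_mul, mul_assoc]
          exact Finset.sum_comm
      _ ≤ weightedNormSq w f :=
          Finset.sum_le_sum fun j _ => mul_le_mul_of_nonneg_right (hw.sum_le j) (sq_nonneg _)
  calc weightedNormSq w (f + markovOp p R f)
      ≤ ∑ i, w i * (2 * ‖f i‖ ^ 2 + 2 * ∑ j, p i j * ‖f j‖ ^ 2
          - ∑ j, p i j * ‖f i - R i j (f j)‖ ^ 2) :=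
        Finset.sum_le_sum fun i _ =>
          mul_le_mul_of_nonneg_left (hp.norm_add_markovOp_sq_le f i) (hw.pos i).le
    _ = 2 * weightedNormSq w f + 2 * ∑ i, w i * ∑ j, p i j * ‖f j‖ ^ 2 - dirichletForm w p R f := by
        simp only [weightedNormSq, dirichletForm, mul_sub, mul_add, Finset.sum_add_distrib,
          Finset.sum_sub_distrib, mul_left_comm _ (2 : ℝ), ← Finset.mul_sum]
    _ ≤ 4 * weightedNormSq w f - dirichletForm w p R f := by linarith

lemma mul_norm_sub_sq_le_dirichletForm (hw : ∀ i, 0 ≤ w i) (hp : ∀ i j, 0 ≤ p i j) (f : S → H)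
    (i j : S) : w i * p i j * ‖f i - R i j (f j)‖ ^ 2 ≤ dirichletForm w p R f := by
  have hterm : ∀ i j, 0 ≤ p i j * ‖f i - R i j (f j)‖ ^ 2 :=
    fun i j => mul_nonneg (hp i j) (sq_nonneg _)
  calc w i * p i j * ‖f i - R i j (f j)‖ ^ 2 = w i * (p i j * ‖f i - R i j (f j)‖ ^ 2) := by ring
    _ ≤ w i * ∑ j, p i j * ‖f i - R i j (f j)‖ ^ 2 := by
        have := hw i
        gcongr
        exact Finset.single_le_sum (fun j _ => hterm i j) (Finset.mem_univ j)
    _ ≤ dirichletForm w p R f :=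
        Finset.single_le_sum (f := fun i => w i * ∑ j, p i j * ‖f i - R i j (f j)‖ ^ 2)
          (fun i _ => mul_nonneg (hw i) (Finset.sum_nonneg fun j _ => hterm i j))
          (Finset.mem_univ i)

lemma dirichletForm_nonneg (hw : ∀ i, 0 ≤ w i) (hp : ∀ i j, 0 ≤ p i j) (f : S → H) :
    0 ≤ dirichletForm w p R f :=
  Finset.sum_nonneg fun i _ => mul_nonneg (hw i) <|
    Finset.sum_nonneg fun j _ => mul_nonneg (hp i j) (sq_nonneg _)

variable {P : Module.End ℝ (S → H)} {c : ℝ}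

lemma weightedNormSq_pow_le (hc : 0 ≤ c)
    (hP : ∀ f, weightedNormSq w (P f) ≤ c * weightedNormSq w f) (n : ℕ) (f : S → H) :
    weightedNormSq w ((P ^ n) f) ≤ c ^ n * weightedNormSq w f := by
  induction n with
  | zero => simp
  | succ n ih =>
    rw [pow_succ', Module.End.mul_apply, pow_succ', mul_assoc]
    exact (hP _).trans (mul_le_mul_of_nonneg_left ih hc)

lemma norm_pow_single_apply_le [DecidableEq S] (hw : ∀ i, 0 < w i) (hc : 0 ≤ c)
    (hP : ∀ f, weightedNormSq w (P f) ≤ c * weightedNormSq w f) (k : ℕ) (o : S) (v : H) :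
    ‖(P ^ (2 * k)) (Pi.single o v) o‖ ≤ c ^ k * ‖v‖ := by
  set f := (P ^ (2 * k)) (Pi.single o v)
  have hsingle : weightedNormSq w (Pi.single o v) = w o * ‖v‖ ^ 2 := by
    rw [weightedNormSq, Finset.sum_eq_single o (fun i _ hi => by simp [hi]) (by simp),
      Pi.single_eq_same]
  have hsq : w o * ‖f o‖ ^ 2 ≤ w o * (c ^ k * ‖v‖) ^ 2 :=
    calc w o * ‖f o‖ ^ 2 ≤ weightedNormSq w f :=
          mul_norm_sq_le_weightedNormSq (fun i => (hw i).le) f o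
      _ ≤ c ^ (2 * k) * weightedNormSq w (Pi.single o v) := weightedNormSq_pow_le hc hP _ _
      _ = w o * (c ^ k * ‖v‖) ^ 2 := by rw [hsingle]; ring
  exact (sq_le_sq₀ (norm_nonneg _) (by positivity)).mp (le_of_mul_le_mul_left hsq (hw o))

end DirichletForm

section Poincare

variable {S : Type*} [Fintype S] {p : S → S → ℝ} {w : S → ℝ} {G : Type*} [Group G]
  {A : S → S → Bool} {φ : S → S → G} {H : Type*} [NormedAddCommGroup H] [InnerProductSpace ℝ H]
  {π : G →* (H →ₗᵢ[ℝ] H)}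

lemma HasWalk.exists_norm_sub_le_mul_sqrt_dirichletForm (hw : ∀ i, 0 < w i)
    (hp : ∀ i j, 0 ≤ p i j) (hpA : ∀ i j, A i j = true → 0 < p i j) {n : ℕ} {i j : S} {g : G}
    (q : HasWalk A φ n i j g) : ∃ C : ℝ, 0 ≤ C ∧ ∀ f : S → H,
      ‖f i - π g (f j)‖ ≤ C * √(dirichletForm w p (fun i j => π (φ i j)) f) := by
  induction q with
  | nil i => exact ⟨0, le_rfl, fun f => by simp⟩
  | @cons _ i k j g hik _ ih =>
    obtain ⟨C, hC, h⟩ := ih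
    have hpos : 0 < w i * p i k := mul_pos (hw i) (hpA i k hik)
    refine ⟨√((w i * p i k)⁻¹) + C, by positivity, fun f => ?_⟩
    set D := dirichletForm w p (fun i j => π (φ i j)) f
    have hedge : ‖f i - π (φ i k) (f k)‖ ≤ √((w i * p i k)⁻¹) * √D := by
      rw [← Real.sqrt_mul (by positivity)]
      refine Real.le_sqrt_of_sq_le ?_
      rw [inv_mul_eq_div, le_div_iff₀' hpos]
      exact mul_norm_sub_sq_le_dirichletForm (R := fun i j => π (φ i j)) (fun i => (hw i).le) hp
        f i k
    calc ‖f i - π (φ i k * g) (f j)‖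
        = ‖(f i - π (φ i k) (f k)) + π (φ i k) (f k - π g (f j))‖ := by
          rw [map_mul, LinearIsometry.coe_mul, Function.comp_apply, map_sub, sub_add_sub_cancel]
      _ ≤ ‖f i - π (φ i k) (f k)‖ + ‖f k - π g (f j)‖ := by
          rw [← (π (φ i k)).norm_map (f k - π g (f j))]
          exact norm_add_le _ _
      _ ≤ (√((w i * p i k)⁻¹) + C) * √D := by
          rw [add_mul]
          exact add_le_add hedge (h f)

lemma exists_mul_weightedNormSq_le_dirichletForm (hw : ∀ i, 0 < w i) (hp : ∀ i j, 0 ≤ p i j)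
    (hpA : ∀ i j, A i j = true → 0 < p i j) (hirr : IsSkewIrreducible A φ)
    (hπ : ¬ HasAlmostInvariantVectors π) : ∃ c : ℝ, 0 < c ∧ ∀ f : S → H,
      c * weightedNormSq w f ≤ dirichletForm w p (fun i j => π (φ i j)) f := by
  obtain ⟨F, ε, hε, hmove⟩ : ∃ (F : Finset G) (ε : ℝ), 0 < ε ∧
      ∀ v : H, v ≠ 0 → ∃ g ∈ F, ε * ‖v‖ ≤ ‖π g v - v‖ := by
    simpa only [HasAlmostInvariantVectors, not_forall, not_exists, not_and, not_lt, exists_prop]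
      using hπ
  choose n q using hirr
  choose C hC hpath using fun i g =>
    (q i i g).exists_norm_sub_le_mul_sqrt_dirichletForm (π := π) hw hp hpA
  let B : ℝ := ∑ i, ∑ g ∈ F, C i g
  have hCB : ∀ i, ∀ g ∈ F, C i g ≤ B := fun i g hg =>
    (Finset.single_le_sum (fun g _ => hC i g) hg).trans <|
      Finset.single_le_sum (f := fun i => ∑ g ∈ F, C i g)
        (fun i _ => Finset.sum_nonneg fun g _ => hC i g) (Finset.mem_univ i)
  have hW : 0 ≤ ∑ i, w i := Finset.sum_nonneg fun i _ => (hw i).le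
  refine ⟨ε ^ 2 / ((∑ i, w i) * B ^ 2 + 1), by positivity, fun f => ?_⟩
  set D := dirichletForm w p (fun i j => π (φ i j)) f
  have hD : 0 ≤ D := dirichletForm_nonneg (fun i => (hw i).le) hp f
  have hpoint : ∀ i, ε ^ 2 * ‖f i‖ ^ 2 ≤ B ^ 2 * D := fun i => by
    rcases eq_or_ne (f i) 0 with hi | hi
    · rw [hi, norm_zero, zero_pow two_ne_zero, mul_zero]
      exact mul_nonneg (sq_nonneg B) hD
    · obtain ⟨g, hg, hgv⟩ := hmove (f i) hi
      rw [norm_sub_rev] at hgv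
      calc ε ^ 2 * ‖f i‖ ^ 2 = (ε * ‖f i‖) ^ 2 := (mul_pow _ _ _).symm
        _ ≤ (B * √D) ^ 2 := pow_le_pow_left₀ (by positivity) ((hgv.trans (hpath i g f)).trans
            (mul_le_mul_of_nonneg_right (hCB i g hg) (Real.sqrt_nonneg _))) 2
        _ = B ^ 2 * D := by rw [mul_pow, Real.sq_sqrt hD]
  rw [div_mul_eq_mul_div, div_le_iff₀ (by positivity)]
  calc ε ^ 2 * weightedNormSq w f = ∑ i, w i * (ε ^ 2 * ‖f i‖ ^ 2) := by
        rw [weightedNormSq, Finset.mul_sum]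
        exact Finset.sum_congr rfl fun i _ => mul_left_comm _ _ _
    _ ≤ ∑ i, w i * (B ^ 2 * D) :=
        Finset.sum_le_sum fun i _ => mul_le_mul_of_nonneg_left (hpoint i) (hw i).le
    _ = D * ((∑ i, w i) * B ^ 2) := by rw [← Finset.sum_mul]; ring
    _ ≤ D * ((∑ i, w i) * B ^ 2 + 1) := by gcongr; linarith

/-- The trivial bound has `4` in place of `4 * r`. -/
lemma IsExcessive.exists_weightedNormSq_add_markovOp_le (hw : IsExcessive p w)
    (hp : IsSubstochastic p) (hpA : ∀ i j, A i j = true → 0 < p i j)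
    (hirr : IsSkewIrreducible A φ) (hπ : ¬ HasAlmostInvariantVectors π) :
    ∃ r : ℝ, 0 < r ∧ r < 1 ∧ ∀ f : S → H,
      weightedNormSq w ((1 + markovOp p fun i j => π (φ i j)) f) ≤ 4 * r * weightedNormSq w f := by
  obtain ⟨c, hc, hpoincare⟩ :=
    exists_mul_weightedNormSq_le_dirichletForm hw.pos hp.nonneg hpA hirr hπ
  have hc' : 0 < min c 1 := lt_min hc one_pos
  refine ⟨1 - min c 1 / 4, by linarith [min_le_right c 1], by linarith, fun f => ?_⟩
  have hnonneg : 0 ≤ weightedNormSq w f :=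
    Finset.sum_nonneg fun i _ => mul_nonneg (hw.pos i).le (sq_nonneg _)
  have hmin : min c 1 * weightedNormSq w f ≤ c * weightedNormSq w f :=
    mul_le_mul_of_nonneg_right (min_le_left _ _) hnonneg
  have hgap := hw.weightedNormSq_add_markovOp_le (R := fun i j => π (φ i j)) hp f
  rw [LinearMap.add_apply, Module.End.one_apply]
  linarith [hpoincare f]

end Poincare

section WalkCountBound

open scoped lp

variable {S G K : Type*} [Fintype S] [Group G] [Group K] {A : S → S → Bool} {φ : S → S → G}
  {l : ℝ} {χ : G →* ℝ} {u : S → ℝ}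

/-- The positive function `(i, g) ↦ χ g * u i` is a supersolution at level `l` of the transfer
operator of the skew product: `∑ j with A i j, F (j, g * φ i j) ≤ l * F (i, g)`. -/
structure IsExpSupersolution (A : S → S → Bool) (φ : S → S → G) (l : ℝ) (χ : G →* ℝ)
    (u : S → ℝ) : Prop where
  char_pos : ∀ g, 0 < χ g
  pos : ∀ i, 0 < u i
  sum_le : ∀ i, ∑ j with A i j = true, χ (φ i j) * u j ≤ l * u i

lemma IsExpSupersolution.comp {f : G →* K} {χ : K →* ℝ}
    (h : IsExpSupersolution A (fun i j => f (φ i j)) l χ u) :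
    IsExpSupersolution A φ l (χ.comp f) u :=
  ⟨fun g => h.char_pos (f g), h.pos, h.sum_le⟩

/-- The transition matrix of the Doob `h`-transform of the skew product by `(i, g) ↦ χ g * u i`,
normalised by `l`; it does not depend on the `G`-coordinate because `χ` is multiplicative. -/
noncomputable def doobTransform (A : S → S → Bool) (φ : S → S → G) (l : ℝ) (χ : G →* ℝ)
    (u : S → ℝ) (i j : S) : ℝ :=
  if A i j = true then χ (φ i j) * u j / (l * u i) else 0

namespace IsExpSupersolution

lemma doobTransform_pos (h : IsExpSupersolution A φ l χ u) (hl : 0 < l) {i j : S}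
    (hij : A i j = true) : 0 < doobTransform A φ l χ u i j := by
  rw [doobTransform, if_pos hij]
  exact div_pos (mul_pos (h.char_pos _) (h.pos j)) (mul_pos hl (h.pos i))

lemma isSubstochastic_doobTransform (h : IsExpSupersolution A φ l χ u) (hl : 0 < l) :
    IsSubstochastic (doobTransform A φ l χ u) where
  nonneg i j := by
    by_cases hij : A i j = true
    · exact (h.doobTransform_pos hl hij).le
    · rw [doobTransform, if_neg hij]
  row_sum_le i := by
    simp only [doobTransform]
    rw [← Finset.sum_filter, ← Finset.sum_div]
    exact div_le_one_of_le₀ (h.sum_le i) (mul_pos hl (h.pos i)).le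

open Classical in
lemma markovOp_pow_single_apply (h : IsExpSupersolution A φ l χ u) (hl : 0 < l) (n : ℕ)
    (o i : S) (g : G) :
    ((markovOp (doobTransform A φ l χ u) fun i j => rightRegular G (φ i j)) ^ n)
        (Pi.single o (lp.single 2 1 (1 : ℝ))) i g * (χ g * u i * l ^ n) =
      u o * walkCount A φ n i o g⁻¹ := by
  induction n generalizing i g with
  | zero =>
    rw [pow_zero, Module.End.one_apply, walkCount, inv_eq_one]
    by_cases hi : i = o
    · subst hi
      rw [Pi.single_eq_same, lp.single_apply]
      by_cases hg : g = 1
      · subst hg; simp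
      · simp [hg]
    · rw [Pi.single_eq_of_ne hi]
      simp [hi]
  | succ n ih =>
    rw [pow_succ', Module.End.mul_apply, markovOp_apply, lp.coeFn_sum, Finset.sum_apply,
      Finset.sum_mul, walkCount_succ, Nat.cast_sum, Finset.mul_sum, Finset.sum_filter]
    refine Finset.sum_congr rfl fun j _ => ?_
    rw [lp.coeFn_smul, Pi.smul_apply, rightRegular_apply, smul_eq_mul, doobTransform]
    split_ifs with hij
    · rw [← mul_inv_rev, ← ih j (g * φ i j), map_mul]
      have := h.pos i
      field_simp
      ring
    · rw [zero_mul, zero_mul]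

end IsExpSupersolution

lemma centralBinom_mul_le_apply_one_add_pow {V : Type*} [AddCommGroup V] [Module ℝ V]
    (P : Module.End ℝ V) (e : Module.Dual ℝ V) {v : V} (hpos : ∀ n, 0 ≤ e ((P ^ n) v)) (k : ℕ) :
    k.centralBinom * e ((P ^ k) v) ≤ e (((1 + P) ^ (2 * k)) v) := by
  have hbinom : e (((1 + P) ^ (2 * k)) v) =
      ∑ n ∈ Finset.range (2 * k + 1), ((2 * k).choose n : ℝ) * e ((P ^ n) v) := by
    rw [add_comm, (Commute.one_right P).add_pow, LinearMap.sum_apply, map_sum]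
    refine Finset.sum_congr rfl fun n _ => ?_
    rw [one_pow, mul_one, ← nsmul_eq_mul', LinearMap.smul_apply, map_nsmul, nsmul_eq_mul]
  rw [hbinom, Nat.centralBinom_eq_two_mul_choose]
  exact Finset.single_le_sum
    (f := fun n => ((2 * k).choose n : ℝ) * e ((P ^ n) v))
    (fun n _ => mul_nonneg (Nat.cast_nonneg _) (hpos n)) (Finset.mem_range.mpr (by omega))

/-- Comparing `P ^ k` with its term in the binomial expansion of `(1 + P) ^ (2 * k)` loses only a
factor `2 * k`, and turns a spectral gap of `1 + P` into an exponential gain for return counts. -/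
lemma IsExpSupersolution.walkCount_le (h : IsExpSupersolution A φ l χ u) (hl : 0 < l) {w : S → ℝ}
    (hw : ∀ i, 0 < w i) {r : ℝ} (hr : 0 ≤ r)
    (hgap : ∀ f : S → ℓ²(G, ℝ), weightedNormSq w
      ((1 + markovOp (doobTransform A φ l χ u) fun i j => rightRegular G (φ i j)) f) ≤
        4 * r * weightedNormSq w f) (o : S) {k : ℕ} (hk : 0 < k) :
    (walkCount A φ k o o 1 : ℝ) ≤ 2 * k * (l * r) ^ k := by
  classical
  set P := markovOp (doobTransform A φ l χ u) fun i j => rightRegular G (φ i j)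
  let e : Module.Dual ℝ (S → ℓ²(G, ℝ)) := lp.evalₗ (𝕜 := ℝ) _ 2 (1 : G) ∘ₗ LinearMap.proj o
  let v : S → ℓ²(G, ℝ) := Pi.single o (lp.single 2 1 (1 : ℝ))
  have he : ∀ n, e ((P ^ n) v) = walkCount A φ n o o 1 / l ^ n := fun n => by
    have hn := h.markovOp_pow_single_apply hl n o o 1
    rw [map_one, one_mul, inv_one] at hn
    rw [eq_div_iff (pow_pos hl n).ne']
    refine mul_left_cancel₀ (h.pos o).ne' (Eq.trans ?_ hn)
    exact mul_left_comm _ _ _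
  have hcount : (k.centralBinom : ℝ) * (walkCount A φ k o o 1 / l ^ k) ≤ (4 * r) ^ k :=
    calc (k.centralBinom : ℝ) * (walkCount A φ k o o 1 / l ^ k)
        = k.centralBinom * e ((P ^ k) v) := by rw [he]
      _ ≤ e (((1 + P) ^ (2 * k)) v) :=
          centralBinom_mul_le_apply_one_add_pow P e (fun n => by rw [he]; positivity) k
      _ ≤ ‖((1 + P) ^ (2 * k)) v o‖ :=
          (le_abs_self _).trans (lp.norm_apply_le_norm two_ne_zero (((1 + P) ^ (2 * k)) v o) 1)
      _ ≤ (4 * r) ^ k := by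
          refine (norm_pow_single_apply_le hw (by positivity) hgap k o _).trans_eq ?_
          rw [lp.norm_single two_pos, norm_one, mul_one]
  have hbinom : (4 : ℝ) ^ k ≤ 2 * k * k.centralBinom := by
    exact_mod_cast Nat.four_pow_le_two_mul_self_mul_centralBinom k hk
  have hscaled : 4 ^ k * (walkCount A φ k o o 1 / l ^ k) ≤ 4 ^ k * (2 * k * r ^ k) :=
    calc 4 ^ k * (walkCount A φ k o o 1 / l ^ k)
        ≤ 2 * k * k.centralBinom * (walkCount A φ k o o 1 / l ^ k) := by gcongr
      _ ≤ 2 * k * (4 * r) ^ k := by rw [mul_assoc]; gcongr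
      _ = 4 ^ k * (2 * k * r ^ k) := by rw [mul_pow, mul_left_comm]
  have hdiv := le_of_mul_le_mul_left hscaled (by positivity)
  rw [div_le_iff₀ (pow_pos hl k)] at hdiv
  exact hdiv.trans_eq (by rw [mul_pow]; ring)

end WalkCountBound

section ExcessiveMeasure

open scoped Matrix

variable {S : Type*} [Fintype S] {p : S → S → ℝ}

lemma exists_mem_stdSimplex_vecMul_eq_self [DecidableEq S] [Nonempty S] {M : Matrix S S ℝ}
    (hM : M ∈ Matrix.rowStochastic ℝ S) : ∃ x ∈ stdSimplex ℝ S, x ᵥ* M = x := by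
  refine exists_isFixedPt_of_mapsTo (isCompact_stdSimplex ℝ S) (convex_stdSimplex ℝ S)
    ⟨_, single_mem_stdSimplex ℝ (Classical.arbitrary S)⟩ M.vecMulLinear.toContinuousLinearMap
    fun x hx => ⟨Matrix.nonneg_vecMul_of_mem_rowStochastic hM hx.1, ?_⟩
  have hsum : x ⬝ᵥ 1 = 1 := by rw [dotProduct_one, hx.2]
  exact (dotProduct_one _).symm.trans (Matrix.vecMul_dotProduct_one_eq_one_rowStochastic hM hsum)

lemma IsSubstochastic.exists_isExcessive [Nonempty S] (hp : IsSubstochastic p)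
    (hirr : ∀ i j, Relation.ReflTransGen (fun i j => 0 < p i j) i j) :
    ∃ w, IsExcessive p w := by
  classical
  let deficit : S → ℝ := fun i => 1 - ∑ j, p i j
  have hdeficit : ∀ i, 0 ≤ deficit i := fun i => sub_nonneg.mpr (hp.row_sum_le i)
  obtain ⟨w, ⟨hw, hsum⟩, hfix⟩ :=
    exists_mem_stdSimplex_vecMul_eq_self (M := Matrix.of p + Matrix.diagonal deficit) <| by
      refine Matrix.mem_rowStochastic_iff_sum.mpr ⟨fun i j => ?_, fun i => ?_⟩
      · refine add_nonneg (hp.nonneg i j) ?_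
        rw [Matrix.diagonal_apply]
        split_ifs
        exacts [hdeficit i, le_rfl]
      · simp [Finset.sum_add_distrib, Matrix.diagonal_apply, deficit]
  have hle : ∀ j, ∑ i, w i * p i j ≤ w j := fun j => by
    have hj := congrFun hfix j
    rw [Matrix.vecMul_add, Pi.add_apply, Matrix.vecMul_diagonal] at hj
    rw [← hj]
    exact le_add_of_nonneg_right (mul_nonneg (hw j) (hdeficit j))
  obtain ⟨i, hi⟩ : ∃ i, 0 < w i := by
    by_contra! h
    linarith [Finset.sum_nonpos fun i (_ : i ∈ Finset.univ) => h i]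
  refine ⟨w, fun j => ?_, hle⟩
  induction hirr i j with
  | refl => exact hi
  | @tail j k _ hjk ih =>
    calc 0 < w j * p j k := mul_pos ih hjk
      _ ≤ ∑ j, w j * p j k := Finset.single_le_sum (f := fun j => w j * p j k)
          (fun j _ => mul_nonneg (hw j) (hp.nonneg j k)) (Finset.mem_univ j)
      _ ≤ w k := hle k

end ExcessiveMeasure

section NonamenableDecay

variable {S G : Type*} [Fintype S] [Group G] {A : S → S → Bool} {φ : S → S → G} {l : ℝ}
  {χ : G →* ℝ} {u : S → ℝ}

theorem IsExpSupersolution.exists_walkCount_le_of_not_amenable [Nonempty S]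
    (h : IsExpSupersolution A φ l χ u) (hl : 0 < l) (hirr : IsSkewIrreducible A φ)
    (hG : ¬ Amenable G) : ∃ r : ℝ, 0 < r ∧ r < 1 ∧ ∀ o k, 0 < k →
      (walkCount A φ k o o 1 : ℝ) ≤ 2 * k * (l * r) ^ k := by
  have hp := h.isSubstochastic_doobTransform hl
  have hpA : ∀ i j, A i j = true → 0 < doobTransform A φ l χ u i j :=
    fun i j => h.doobTransform_pos hl
  obtain ⟨w, hw⟩ := hp.exists_isExcessive fun i j =>
    let ⟨_, q⟩ := hirr i j 1
    Relation.ReflTransGen.mono hpA _ _ q.reflTransGen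
  obtain ⟨r, hr, hr1, hgap⟩ := hw.exists_weightedNormSq_add_markovOp_le hp hpA hirr
    (mt amenable_of_hasAlmostInvariantVectors hG)
  exact ⟨r, hr, hr1, fun o k => h.walkCount_le hl hw.pos hr.le hgap o⟩

end NonamenableDecay

section Supersolutions

variable {S K : Type*} [Fintype S] [Group K] {A : S → S → Bool} {φ : S → S → K} {o : S} {l : ℝ}

/-- Logarithms of the positive supersolutions at level `l` of the transfer operator of the skew
product, normalised at `(o, 1)`. Passing to logarithms makes the set convex and turns normalised
translations into linear maps. -/
def logSupersolutions (A : S → S → Bool) (φ : S → S → K) (o : S) (l : ℝ) : Set (S × K → ℝ) :=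
  {t | t (o, 1) = 0 ∧
    ∀ i q, ∑ j with A i j = true, Real.exp (t (j, q * φ i j) - t (i, q)) ≤ l}

lemma logSupersolutions_mono : Monotone (logSupersolutions A φ o) :=
  fun _ _ hl _ ht => ⟨ht.1, fun i q => (ht.2 i q).trans hl⟩

lemma isClosed_logSupersolutions : IsClosed (logSupersolutions A φ o l) := by
  have hset : logSupersolutions A φ o l = {t | t (o, 1) = 0} ∩
      ⋂ (i) (q), {t | ∑ j with A i j = true, Real.exp (t (j, q * φ i j) - t (i, q)) ≤ l} := by
    ext t
    simp only [logSupersolutions, Set.mem_inter_iff, Set.mem_iInter, Set.mem_ofPred_eq]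
  rw [hset]
  exact (isClosed_eq (continuous_apply _) continuous_const).inter <| isClosed_iInter fun i =>
    isClosed_iInter fun q => isClosed_le (by fun_prop) continuous_const

lemma convex_logSupersolutions : Convex ℝ (logSupersolutions A φ o l) := by
  refine fun s hs t ht a b ha hb hab => ⟨?_, fun i q => ?_⟩
  · simp [hs.1, ht.1]
  have hexp : ∀ x y x' y' : ℝ, Real.exp (a * x + b * y - (a * x' + b * y')) ≤
      a * Real.exp (x - x') + b * Real.exp (y - y') := fun x y x' y' => by
    have h := convexOn_exp.2 (Set.mem_univ (x - x')) (Set.mem_univ (y - y')) ha hb hab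
    simp only [smul_eq_mul] at h
    rwa [show a * x + b * y - (a * x' + b * y') = a * (x - x') + b * (y - y') by ring]
  calc ∑ j with A i j = true, Real.exp ((a • s + b • t) (j, q * φ i j) - (a • s + b • t) (i, q))
      ≤ ∑ j with A i j = true, (a * Real.exp (s (j, q * φ i j) - s (i, q)) +
          b * Real.exp (t (j, q * φ i j) - t (i, q))) := Finset.sum_le_sum fun j _ => hexp _ _ _ _
    _ ≤ a * l + b * l := by
        rw [Finset.sum_add_distrib, ← Finset.mul_sum, ← Finset.mul_sum]
        exact add_le_add (mul_le_mul_of_nonneg_left (hs.2 i q) ha)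
          (mul_le_mul_of_nonneg_left (ht.2 i q) hb)
    _ = l := by rw [← add_mul, hab, one_mul]

lemma HasWalk.sub_le_of_mem_logSupersolutions {t : S × K → ℝ}
    (ht : t ∈ logSupersolutions A φ o l) {n : ℕ} {i j : S} {g : K} (w : HasWalk A φ n i j g)
    (q : K) : t (j, q * g) - t (i, q) ≤ n * Real.log l := by
  induction w generalizing q with
  | nil i => simp
  | @cons _ i k j g hik _ ih =>
    have hexp : Real.exp (t (k, q * φ i k) - t (i, q)) ≤ l :=
      (Finset.single_le_sum (f := fun j => Real.exp (t (j, q * φ i j) - t (i, q)))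
        (fun _ _ => (Real.exp_pos _).le)
        (Finset.mem_filter.mpr ⟨Finset.mem_univ k, hik⟩)).trans (ht.2 i q)
    have hedge : t (k, q * φ i k) - t (i, q) ≤ Real.log l :=
      (Real.le_log_iff_exp_le ((Real.exp_pos _).trans_le hexp)).mpr hexp
    rw [← mul_assoc, Nat.cast_succ, add_one_mul]
    linarith [ih (q * φ i k)]

lemma isCompact_logSupersolutions (hirr : IsSkewIrreducible A φ) :
    IsCompact (logSupersolutions A φ o l) := by
  choose n w using hirr
  refine (isCompact_univ_pi fun x : S × K => isCompact_Icc (a := -(n x.1 o x.2⁻¹ * Real.log l))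
    (b := n o x.1 x.2 * Real.log l)).of_isClosed_subset isClosed_logSupersolutions ?_
  rintro t ht ⟨i, q⟩ -
  have hup := (w o i q).sub_le_of_mem_logSupersolutions ht 1
  have hdown := (w i o q⁻¹).sub_le_of_mem_logSupersolutions ht q
  rw [one_mul, ht.1, sub_zero] at hup
  rw [mul_inv_cancel, ht.1, zero_sub] at hdown
  exact ⟨neg_le.mp hdown, hup⟩

lemma logSupersolutions_nonempty_of_forall_gt (hirr : IsSkewIrreducible A φ)
    (h : ∀ l' > l, (logSupersolutions A φ o l').Nonempty) :
    (logSupersolutions A φ o l).Nonempty := by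
  have hdir : Directed (· ⊇ ·) fun l' : Set.Ioi l => logSupersolutions A φ o l' := fun a b =>
    ⟨min a b, logSupersolutions_mono (min_le_left _ _), logSupersolutions_mono (min_le_right _ _)⟩
  obtain ⟨t, ht⟩ := IsCompact.nonempty_iInter_of_directed_nonempty_isCompact_isClosed _ hdir
    (fun l' => h l' l'.2) (fun _ => isCompact_logSupersolutions hirr)
    fun _ => isClosed_logSupersolutions
  have ht' : ∀ l' > l, t ∈ logSupersolutions A φ o l' :=
    fun l' hl' => Set.mem_iInter.mp ht ⟨l', hl'⟩
  exact ⟨t, (ht' (l + 1) (lt_add_one l)).1, fun i q => le_of_forall_gt_imp_ge_of_dense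
    fun l' hl' => (ht' l' hl').2 i q⟩

end Supersolutions

section GreenFunction

variable {S K : Type*} [Fintype S] [Group K] {A : S → S → Bool} {φ : S → S → K} {o : S} {l : ℝ}

/-- The Green function of the skew product with pole `(o, 1)`, in the variable `(i, q)` and
discounted by `l`. -/
noncomputable def green (A : S → S → Bool) (φ : S → S → K) (o : S) (l : ℝ) (x : S × K) : ℝ :=
  ∑' n, walkCount A φ n x.1 o x.2⁻¹ * l⁻¹ ^ n

lemma summable_green (hirr : IsSkewIrreducible A φ) (hl : 0 < l)
    (hsum : Summable fun n => walkCount A φ n o o 1 * l⁻¹ ^ n) (i : S) (q : K) :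
    Summable fun n => walkCount A φ n i o q⁻¹ * l⁻¹ ^ n := by
  obtain ⟨m, w⟩ := hirr o i q
  refine Summable.of_nonneg_of_le (fun n => by positivity) (fun n => ?_)
    (((summable_nat_add_iff m).mpr hsum).mul_right (l ^ m))
  have hcount : walkCount A φ n i o q⁻¹ ≤ walkCount A φ (n + m) o o 1 := by
    simpa only [mul_inv_cancel, add_comm] using w.walkCount_le n o q⁻¹
  calc walkCount A φ n i o q⁻¹ * l⁻¹ ^ n ≤ walkCount A φ (n + m) o o 1 * l⁻¹ ^ n := by gcongr
    _ = walkCount A φ (n + m) o o 1 * l⁻¹ ^ (n + m) * l ^ m := by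
        rw [pow_add, inv_pow l m]
        field_simp

lemma green_pos (hirr : IsSkewIrreducible A φ) (hl : 0 < l)
    (hsum : Summable fun n => walkCount A φ n o o 1 * l⁻¹ ^ n) (x : S × K) :
    0 < green A φ o l x := by
  obtain ⟨n, w⟩ := hirr x.1 o x.2⁻¹
  refine (summable_green hirr hl hsum x.1 x.2).tsum_pos (fun n => by positivity) n ?_
  have := w.walkCount_pos
  positivity

lemma sum_green_le (hirr : IsSkewIrreducible A φ) (hl : 0 < l)
    (hsum : Summable fun n => walkCount A φ n o o 1 * l⁻¹ ^ n) (i : S) (q : K) :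
    ∑ j with A i j = true, green A φ o l (j, q * φ i j) ≤ l * green A φ o l (i, q) := by
  have hsummable := summable_green hirr hl hsum
  calc ∑ j with A i j = true, green A φ o l (j, q * φ i j)
      = ∑' n, l * (walkCount A φ (n + 1) i o q⁻¹ * l⁻¹ ^ (n + 1)) := by
        simp only [green]
        rw [← Summable.tsum_finsetSum fun j _ => hsummable j (q * φ i j)]
        refine tsum_congr fun n => ?_
        rw [walkCount_succ, Nat.cast_sum, Finset.sum_mul, Finset.mul_sum]
        refine Finset.sum_congr rfl fun j _ => ?_
        rw [mul_inv_rev, pow_succ]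
        field_simp
    _ = l * ∑' n, walkCount A φ (n + 1) i o q⁻¹ * l⁻¹ ^ (n + 1) := tsum_mul_left
    _ ≤ l * green A φ o l (i, q) := by
        rw [green, (hsummable i q).tsum_eq_zero_add]
        gcongr
        exact le_add_of_nonneg_left (by positivity)

lemma logSupersolutions_nonempty_of_summable (hirr : IsSkewIrreducible A φ) (hl : 0 < l)
    (hsum : Summable fun n => walkCount A φ n o o 1 * l⁻¹ ^ n) :
    (logSupersolutions A φ o l).Nonempty := by
  have hpos := green_pos hirr hl hsum
  refine ⟨fun x => Real.log (green A φ o l x) - Real.log (green A φ o l (o, 1)), sub_self _,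
    fun i q => ?_⟩
  have hratio : ∀ x y, Real.exp (Real.log (green A φ o l x) - Real.log (green A φ o l (o, 1)) -
      (Real.log (green A φ o l y) - Real.log (green A φ o l (o, 1)))) =
      green A φ o l x / green A φ o l y := fun x y => by
    rw [sub_sub_sub_cancel_right, Real.exp_sub, Real.exp_log (hpos x), Real.exp_log (hpos y)]
  simp only [hratio]
  rw [← Finset.sum_div, div_le_iff₀ (hpos _)]
  exact sum_green_le hirr hl hsum i q

end GreenFunction

section AbelianExtensions

variable {S : Type*} {o : S}

/-- Left translation by `f` on functions on `S × K`, renormalised to vanish at `(o, 1)`. -/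
def normalizedTranslation {K : Type*} [Group K] (o : S) (f : K) :
    (S × K → ℝ) →L[ℝ] (S × K → ℝ) where
  toFun t x := t (x.1, f * x.2) - t (o, f)
  map_add' s t := funext fun x => add_sub_add_comm _ _ _ _
  map_smul' c t := funext fun x => (mul_sub c _ _).symm
  cont := by fun_prop

lemma normalizedTranslation_apply {K : Type*} [Group K] (f : K) (t : S × K → ℝ) (x : S × K) :
    normalizedTranslation o f t x = t (x.1, f * x.2) - t (o, f) := rfl

variable {K : Type*} [CommGroup K]

lemma normalizedTranslation_comm (f g : K) (t : S × K → ℝ) :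
    normalizedTranslation o f (normalizedTranslation o g t) =
      normalizedTranslation o g (normalizedTranslation o f t) := by
  ext x
  simp only [normalizedTranslation_apply, mul_left_comm g, mul_comm g f]
  ring

variable [Fintype S] {A : S → S → Bool} {φ : S → S → K} {l : ℝ}

lemma mapsTo_normalizedTranslation (f : K) : Set.MapsTo (normalizedTranslation o f)
    (logSupersolutions A φ o l) (logSupersolutions A φ o l) := fun t ht =>
  ⟨by rw [normalizedTranslation_apply, mul_one, sub_self], fun i q => by
    simpa only [normalizedTranslation_apply, sub_sub_sub_cancel_right, mul_assoc]
      using ht.2 i (f * q)⟩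

/-- A common fixed point of the normalised translations is the logarithm of an exponential
supersolution. -/
theorem exists_isExpSupersolution (hirr : IsSkewIrreducible A φ)
    (hne : (logSupersolutions A φ o l).Nonempty) :
    ∃ (χ : K →* ℝ) (u : S → ℝ), IsExpSupersolution A φ l χ u := by
  obtain ⟨t, ⟨ho, hsum⟩, hfix⟩ := exists_forall_isFixedPt_of_mapsTo
    (isCompact_logSupersolutions hirr) convex_logSupersolutions hne (normalizedTranslation o)
    mapsTo_normalizedTranslation normalizedTranslation_comm
  have hmul : ∀ i f q, t (i, f * q) = t (i, q) + t (o, f) := fun i f q =>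
    sub_eq_iff_eq_add.mp (congrFun (hfix f) (i, q))
  let χ : K →* ℝ :=
    { toFun := fun g => Real.exp (t (o, g))
      map_one' := by rw [ho, Real.exp_zero]
      map_mul' := fun f g => by rw [hmul, Real.exp_add, mul_comm] }
  refine ⟨χ, fun i => Real.exp (t (i, 1)), fun g => Real.exp_pos _, fun i => Real.exp_pos _,
    fun i => ?_⟩
  rw [← div_le_iff₀ (Real.exp_pos _), Finset.sum_div]
  refine (Finset.sum_congr rfl fun j _ => ?_).trans_le (hsum i 1)
  rw [one_mul, ← mul_one (φ i j), hmul j (φ i j) 1, Real.exp_sub, Real.exp_add, mul_one, mul_comm]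
  rfl

end AbelianExtensions

section PeriodicPoints

variable {S : Type*} {A : S → S → Bool}

@[ext]
lemma space_ext {x y : Space A} (hxy : ∀ k, x.1 k = y.1 k) : x = y :=
  Subtype.ext (funext hxy)

lemma shift_iterate_apply (n : ℕ) (x : Space A) (k : ℕ) : (shift^[n] x).1 k = x.1 (k + n) := by
  induction n generalizing x with
  | zero => rfl
  | succ _ ih => exact ih (shift x)

lemma apply_eq_of_shift_iterate_eq {n : ℕ} {x z : Space A} (hxz : shift^[n] x = z) :
    x.1 n = z.1 0 := by
  rw [← hxz, shift_iterate_apply, Nat.zero_add]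

lemma exists_space_apply_zero_eq (hA : ∀ i, ∃ j, A i j = true) (i : S) :
    ∃ x : Space A, x.1 0 = i := by
  choose next hnext using hA
  refine ⟨⟨fun n => next^[n] i, fun n => ?_⟩, rfl⟩
  simpa only [Function.iterate_succ_apply'] using hnext _

/-- The point obtained by writing the symbol `i` in front of `x`. -/
def prepend (i : S) (x : Space A) (hix : A i (x.1 0) = true) : Space A :=
  ⟨fun k => k.casesOn i x.1, fun k => k.casesOn hix x.2⟩

/-- The point that follows `x` up to time `n` and then continues as `z`. -/
def splice (n : ℕ) (x z : Space A) (hxz : x.1 n = z.1 0) : Space A :=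
  ⟨fun k => if k < n then x.1 k else z.1 (k - n), fun k => by
    rcases lt_trichotomy (k + 1) n with hk | rfl | hk
    · simpa only [hk, (Nat.lt_succ_self k).trans hk, if_true] using x.2 k
    · simpa only [Nat.lt_succ_self, lt_irrefl, if_true, if_false, Nat.sub_self, ← hxz] using x.2 k
    · simpa only [hk.not_gt, (Nat.lt_succ_iff.1 hk).not_gt, if_false,
        Nat.sub_add_comm (Nat.lt_succ_iff.1 hk)] using z.2 (k - n)⟩

lemma shift_iterate_splice {n : ℕ} {x z : Space A} (hxz : x.1 n = z.1 0) :
    shift^[n] (splice n x z hxz) = z := by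
  ext k
  rw [shift_iterate_apply]
  simp [splice]

/-- The `n`-periodic point that repeats the first `n` symbols of `x`. -/
def periodize (n : ℕ) (x : Space A) (hx : x.1 n = x.1 0) : Space A :=
  ⟨fun k => x.1 (k % n), fun k => by
    have hmod : x.1 ((k + 1) % n) = x.1 (k % n + 1) := by
      rw [← Nat.mod_add_mod]
      rcases n.eq_zero_or_pos with rfl | hn
      · rw [Nat.mod_zero]
      rcases (Nat.succ_le_of_lt (Nat.mod_lt k hn)).lt_or_eq with hlt | heq
      · rw [Nat.mod_eq_of_lt hlt]
      · rw [← Nat.succ_eq_add_one, heq, Nat.mod_self, hx]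
    simpa only [hmod] using x.2 (k % n)⟩

lemma shift_iterate_periodize {n : ℕ} {x : Space A} (hx : x.1 n = x.1 0) :
    shift^[n] (periodize n x hx) = periodize n x hx := by
  ext k
  rw [shift_iterate_apply]
  exact congrArg x.1 (Nat.add_mod_right k n)

lemma finite_setOf_shift_iterate_eq [Finite S] (n : ℕ) (z : Space A) :
    {x : Space A | shift^[n] x = z}.Finite := by
  refine Set.Finite.of_injOn (f := fun x (k : Fin n) => x.1 k) (Set.mapsTo_univ _ _)
    (fun x hx y hy hxy => ?_) Set.finite_univ
  ext k
  rcases lt_or_ge k n with hk | hk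
  · exact congrFun hxy ⟨k, hk⟩
  · rw [← Nat.sub_add_cancel hk, ← shift_iterate_apply, ← shift_iterate_apply]
    exact congrArg (fun w : Space A => w.1 (k - n)) (hx.trans hy.symm)

variable {G : Type*} [Group G] {ψ : Space A → G}

lemma TwoCoord.exists_eq (hψ : TwoCoord ψ) :
    ∃ φ : S → S → G, ∀ x, ψ x = φ (x.1 0) (x.1 1) := by
  obtain ⟨φ, hφ⟩ := (Function.factorsThrough_iff ψ (f := fun x : Space A => (x.1 0, x.1 1))).1
    fun x y hxy => hψ x y (congrArg Prod.fst hxy) (congrArg Prod.snd hxy)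
  exact ⟨fun i j => φ (i, j), congrFun hφ⟩

lemma TwoCoord.cocycle_congr (hψ : TwoCoord ψ) {n : ℕ} {x y : Space A}
    (hxy : ∀ k ≤ n, x.1 k = y.1 k) : cocycle ψ n x = cocycle ψ n y := by
  induction n generalizing x y with
  | zero => rfl
  | succ n ih =>
    rw [cocycle, cocycle, hψ x y (hxy 0 (by omega)) (hxy 1 (by omega)),
      ih (x := shift x) (y := shift y) fun k hk => hxy (k + 1) (by omega)]

lemma TwoCoord.cocycle_splice (hψ : TwoCoord ψ) {n : ℕ} {x z : Space A} (hxz : x.1 n = z.1 0) :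
    cocycle ψ n (splice n x z hxz) = cocycle ψ n x :=
  hψ.cocycle_congr fun k hk => by
    rcases hk.lt_or_eq with hk | rfl <;> simp [splice, *]

lemma TwoCoord.cocycle_periodize (hψ : TwoCoord ψ) {n : ℕ} {x : Space A} (hx : x.1 n = x.1 0) :
    cocycle ψ n (periodize n x hx) = cocycle ψ n x :=
  hψ.cocycle_congr fun k hk => by
    rcases hk.lt_or_eq with hk | rfl
    · exact congrArg x.1 (Nat.mod_eq_of_lt hk)
    · exact (congrArg x.1 (Nat.mod_self k)).trans hx.symm

/-- Periodic points of period `n` through the symbol `z 0` correspond to the `n`-th preimages of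
`z` that start with this symbol. -/
def periodicEquivPreimage (hψ : TwoCoord ψ) {n : ℕ} (hn : 0 < n) (z : Space A) (g : G) :
    {x : Space A // (shift^[n] x = x ∧ cocycle ψ n x = g) ∧ x.1 0 = z.1 0} ≃
      {x : Space A // x.1 0 = z.1 0 ∧ shift^[n] x = z ∧ cocycle ψ n x = g} where
  toFun x :=
    have hxz : x.1.1 n = z.1 0 := (apply_eq_of_shift_iterate_eq x.2.1.1).trans x.2.2
    ⟨splice n x.1 z hxz, (if_pos hn).trans x.2.2, shift_iterate_splice hxz,
      (hψ.cocycle_splice hxz).trans x.2.1.2⟩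
  invFun y :=
    have hy : y.1.1 n = y.1.1 0 := (apply_eq_of_shift_iterate_eq y.2.2.1).trans y.2.1.symm
    ⟨periodize n y.1 hy, ⟨shift_iterate_periodize hy, (hψ.cocycle_periodize hy).trans y.2.2.2⟩,
      (congrArg y.1.1 (Nat.zero_mod n)).trans y.2.1⟩
  left_inv x := by
    have hx : Function.Periodic x.1.1 n := fun k => by rw [← shift_iterate_apply, x.2.1.1]
    ext k
    exact (if_pos (Nat.mod_lt k hn)).trans (hx.map_mod_nat k)
  right_inv y := by
    ext k
    rcases lt_or_ge k n with hk | hk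
    · exact (if_pos hk).trans (congrArg y.1.1 (Nat.mod_eq_of_lt hk))
    · refine (if_neg hk.not_gt).trans ?_
      have hz := shift_iterate_apply n y.1 (k - n)
      rwa [y.2.2.1, Nat.sub_add_cancel hk] at hz

end PeriodicPoints

section WalksOfPoints

variable {S : Type*} {A : S → S → Bool} {G : Type*} [Group G] {φ : S → S → G} {ψ : Space A → G}

lemma T_iterate (n : ℕ) (p : Space A × G) :
    (T ψ)^[n] p = (shift^[n] p.1, p.2 * cocycle ψ n p.1) := by
  induction n generalizing p with
  | zero => simp only [Function.iterate_zero_apply, cocycle, mul_one]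
  | succ n ih => simp only [Function.iterate_succ_apply, ih, T, cocycle, mul_assoc]

lemma hasWalk_cocycle (hψ : ∀ x, ψ x = φ (x.1 0) (x.1 1)) (n : ℕ) (x : Space A) :
    HasWalk A φ n (x.1 0) (x.1 n) (cocycle ψ n x) := by
  induction n generalizing x with
  | zero => exact .nil _
  | succ n ih =>
    rw [cocycle, hψ]
    exact .cons (x.2 0) (ih (shift x))

lemma exists_rel_of_transGen {α : Type*} {r : α → α → Prop} {a b : α}
    (hab : Relation.TransGen r a b) : ∃ c, r a c :=
  let ⟨c, hac, _⟩ := Relation.TransGen.head'_iff.1 hab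
  ⟨c, hac⟩

lemma exists_hasWalk_of_transGen (φ : S → S → G) {i j : S}
    (hij : Relation.TransGen (fun i j => A i j = true) i j) : ∃ n g, HasWalk A φ n i j g := by
  induction hij using Relation.TransGen.head_induction_on with
  | single h => exact ⟨_, _, .cons h (.nil _)⟩
  | head h _ ih =>
    obtain ⟨n, g, w⟩ := ih
    exact ⟨_, _, .cons h w⟩

lemma TransitiveExt.isSkewIrreducible (ht : TransitiveExt ψ)
    (hA : ∀ i j, Relation.TransGen (fun i j => A i j = true) i j)
    (hψ : ∀ x, ψ x = φ (x.1 0) (x.1 1)) : IsSkewIrreducible A φ := by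
  intro i j g
  obtain ⟨⟨x, g₀⟩, horbit⟩ := ht
  obtain ⟨m, h, w⟩ := exists_hasWalk_of_transGen φ (hA i (x.1 0))
  obtain ⟨y, rfl⟩ := exists_space_apply_zero_eq (fun i => exists_rel_of_transGen (hA i i)) j
  obtain ⟨n, hn, hng⟩ := horbit 1 y (g₀ * (h⁻¹ * g))
  have hend : x.1 n = y.1 0 := by
    have := hn 0 one_pos
    rwa [T_iterate, shift_iterate_apply, Nat.zero_add] at this
  have hcocycle : cocycle ψ n x = h⁻¹ * g := by
    rw [T_iterate] at hng
    exact mul_left_cancel hng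
  have w' := w.append (hasWalk_cocycle hψ n x)
  rw [hend, hcocycle, mul_inv_cancel_left] at w'
  exact ⟨m + n, w'⟩

/-- Removing the first symbol of a point of the `(n + 1)`-st preimage of `z`. -/
def preimageSuccEquiv (hψ : ∀ x, ψ x = φ (x.1 0) (x.1 1)) (n : ℕ) (i : S) (z : Space A) (g : G) :
    {x : Space A // x.1 0 = i ∧ shift^[n + 1] x = z ∧ cocycle ψ (n + 1) x = g} ≃
      Σ k : {k // A i k = true},
        {x : Space A // x.1 0 = k ∧ shift^[n] x = z ∧ cocycle ψ n x = (φ i k)⁻¹ * g} where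
  toFun x := ⟨⟨x.1.1 1, by have := x.1.2 0; rwa [x.2.1] at this⟩, shift x.1, rfl, x.2.2.1, by
    have hg := x.2.2.2
    rw [cocycle, hψ, x.2.1] at hg
    exact eq_inv_mul_of_mul_eq hg⟩
  invFun y := ⟨prepend i y.2.1 (by rw [y.2.2.1]; exact y.1.2), rfl, y.2.2.2.1, by
    rw [cocycle, hψ]
    change φ i (y.2.1.1 0) * cocycle ψ n y.2.1 = g
    rw [y.2.2.1, y.2.2.2.2, mul_inv_cancel_left]⟩
  left_inv := by
    rintro ⟨x, rfl, hx⟩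
    ext k
    cases k <;> rfl
  right_inv := by
    rintro ⟨⟨k, hk⟩, y, hy₀, hy⟩
    obtain rfl : y.1 0 = k := hy₀
    rfl

variable [Fintype S]

lemma walkCount_eq_card_preimage (hψ : ∀ x, ψ x = φ (x.1 0) (x.1 1)) (n : ℕ) (i : S)
    (z : Space A) (g : G) : walkCount A φ n i (z.1 0) g =
      Nat.card {x : Space A // x.1 0 = i ∧ shift^[n] x = z ∧ cocycle ψ n x = g} := by
  induction n generalizing i g with
  | zero =>
    rw [walkCount]
    split_ifs with h
    · have : Unique {x : Space A // x.1 0 = i ∧ shift^[0] x = z ∧ cocycle ψ 0 x = g} :=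
        ⟨⟨⟨z, h.1.symm, rfl, h.2.symm⟩⟩, fun x => Subtype.ext x.2.2.1⟩
      exact Nat.card_unique.symm
    · have : IsEmpty {x : Space A // x.1 0 = i ∧ shift^[0] x = z ∧ cocycle ψ 0 x = g} :=
        ⟨fun ⟨x, hi, hz, hg⟩ => h ⟨hi.symm.trans (congrArg (fun y : Space A => y.1 0) hz), hg.symm⟩⟩
      exact Nat.card_of_isEmpty.symm
  | succ n ih =>
    have hfin (k : S) (h : G) :
        Finite {x : Space A // x.1 0 = k ∧ shift^[n] x = z ∧ cocycle ψ n x = h} :=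
      ((finite_setOf_shift_iterate_eq n z).subset fun x hx => hx.2.1).to_subtype
    rw [walkCount_succ, Nat.card_congr (preimageSuccEquiv hψ n i z g), Nat.card_sigma,
      Finset.sum_subtype (p := fun k => A i k = true) _ (by simp)]
    exact Finset.sum_congr rfl fun k _ => ih _ _

lemma card_periodic_eq_sum_walkCount (hA : ∀ i, ∃ j, A i j = true)
    (hψ : ∀ x, ψ x = φ (x.1 0) (x.1 1)) {n : ℕ} (hn : 0 < n) (g : G) :
    Nat.card {x : Space A // shift^[n] x = x ∧ cocycle ψ n x = g} =
      ∑ i, walkCount A φ n i i g := by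
  have htwo : TwoCoord ψ := fun x y h₀ h₁ => by rw [hψ, hψ, h₀, h₁]
  choose z hz using exists_space_apply_zero_eq hA
  have hfin (i : S) : Finite {x : Space A // x.1 0 = (z i).1 0 ∧ shift^[n] x = z i ∧
      cocycle ψ n x = g} :=
    ((finite_setOf_shift_iterate_eq n (z i)).subset fun x hx => hx.2.1).to_subtype
  let e : {x : Space A // shift^[n] x = x ∧ cocycle ψ n x = g} ≃
      Σ i, {x : Space A // x.1 0 = (z i).1 0 ∧ shift^[n] x = z i ∧ cocycle ψ n x = g} :=
    (Equiv.sigmaFiberEquiv fun x => x.1.1 0).symm.trans <| Equiv.sigmaCongrRight fun i =>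
      (Equiv.subtypeSubtypeEquivSubtypeInter _ fun x : Space A => x.1 0 = i).trans <|
        (Equiv.subtypeEquivRight fun x => by rw [hz]).trans (periodicEquivPreimage htwo hn (z i) g)
  rw [Nat.card_congr e, Nat.card_sigma]
  refine Finset.sum_congr rfl fun i _ => ?_
  rw [← walkCount_eq_card_preimage hψ, hz]

end WalksOfPoints

section LogGrowth

variable {a : ℕ → ℕ} {C s b : ℝ}

lemma eventually_const_mul_mul_pow_le_pow (C : ℝ) (hs : 0 ≤ s) (hsb : s < b) :
    ∀ᶠ n : ℕ in atTop, C * n * s ^ n ≤ b ^ n := by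
  have hb : 0 < b := hs.trans_lt hsb
  have hlim : Tendsto (fun n : ℕ => C * (n * (s / b) ^ n)) atTop (nhds (C * 0)) :=
    (tendsto_self_mul_const_pow_of_lt_one (by positivity) ((div_lt_one hb).2 hsb)).const_mul C
  rw [mul_zero] at hlim
  filter_upwards [hlim.eventually_le_const one_pos] with n hn
  rwa [div_pow, ← mul_div_assoc, ← mul_div_assoc, div_le_one (by positivity), ← mul_assoc] at hn

lemma log_div_le_log {m n : ℕ} (hb : 1 ≤ b) (hm : (m : ℝ) ≤ b ^ n) :
    Real.log m / n ≤ Real.log b := by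
  have hlog : 0 ≤ Real.log b := Real.log_nonneg hb
  refine div_le_of_le_mul₀ n.cast_nonneg hlog ?_
  rcases m.eq_zero_or_pos with rfl | hm₀
  · simpa only [Nat.cast_zero, Real.log_zero] using by positivity
  · rw [mul_comm, ← Real.log_pow]
    exact Real.log_le_log (Nat.cast_pos.2 hm₀) hm

lemma eventually_log_div_le_log (hs : 0 ≤ s) (hsb : s < b) (hb : 1 ≤ b)
    (ha : ∀ᶠ n in atTop, (a n : ℝ) ≤ C * n * s ^ n) :
    ∀ᶠ n : ℕ in atTop, Real.log (a n) / n ≤ Real.log b := by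
  filter_upwards [ha, eventually_const_mul_mul_pow_le_pow C hs hsb] with n hn hnb
  exact log_div_le_log hb (hn.trans hnb)

lemma limsup_log_div_le (hs : 0 ≤ s) (ha : ∀ᶠ n in atTop, (a n : ℝ) ≤ C * n * s ^ n)
    (hpos : ∃ᶠ n in atTop, 0 < a n) :
    limsup (fun n : ℕ => Real.log (a n) / n) atTop ≤ Real.log s := by
  have hs₁ : 1 ≤ s := by
    by_contra! hlt
    obtain ⟨b, hsb, hb⟩ := exists_between hlt
    obtain ⟨n, hn, hna, hnb, hn₀⟩ := (hpos.and_eventually (ha.and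
      ((eventually_const_mul_mul_pow_le_pow C hs hsb).and (eventually_ne_atTop 0)))).exists
    have hone : (1 : ℝ) ≤ a n := Nat.one_le_cast.2 hn
    linarith [pow_lt_one₀ (hs.trans hsb.le) hb hn₀]
  refine le_of_forall_gt fun c hc => ?_
  obtain ⟨c', hc', hc'c⟩ := exists_between hc
  have hsc : s < Real.exp c' := (Real.log_lt_iff_lt_exp (by linarith)).1 hc'
  refine (limsup_le_of_le ?_ (eventually_log_div_le_log hs hsc (by linarith) ha)).trans_lt
    (by rwa [Real.log_exp])
  exact (isBoundedUnder_of ⟨0, fun n => by positivity⟩ :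
    IsBoundedUnder (· ≥ ·) atTop _).isCoboundedUnder_le

lemma summable_mul_inv_pow_of_limsup_log_div_lt {l : ℝ} (hs : 0 ≤ s)
    (ha : ∀ᶠ n in atTop, (a n : ℝ) ≤ C * n * s ^ n) (hl : 0 < l)
    (hlim : limsup (fun n : ℕ => Real.log (a n) / n) atTop < Real.log l) :
    Summable fun n => (a n : ℝ) * l⁻¹ ^ n := by
  obtain ⟨c, hc, hcl⟩ := exists_between hlim
  have hbdd : IsBoundedUnder (· ≤ ·) atTop fun n : ℕ => Real.log (a n) / n :=
    isBoundedUnder_of_eventually_le (eventually_log_div_le_log hs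
      (lt_of_le_of_lt (le_max_left s 1) (lt_add_one _)) (by linarith [le_max_right s 1]) ha)
  have hle : ∀ᶠ n : ℕ in atTop, (a n : ℝ) ≤ Real.exp c ^ n := by
    filter_upwards [eventually_lt_of_limsup_lt hc hbdd, eventually_gt_atTop 0] with n hn hn₀
    rw [div_lt_iff₀ (Nat.cast_pos.2 hn₀)] at hn
    rw [← Real.exp_nat_mul, mul_comm]
    rcases (a n).eq_zero_or_pos with h₀ | h₀
    · simpa only [h₀, Nat.cast_zero] using (Real.exp_pos _).le
    · exact ((Real.log_lt_iff_lt_exp (Nat.cast_pos.2 h₀)).1 hn).le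
  have hratio : Real.exp c / l < 1 := (div_lt_one hl).2 ((Real.lt_log_iff_exp_lt hl).1 hcl)
  refine (summable_geometric_of_lt_one (by positivity) hratio).of_norm_bounded_eventually_nat ?_
  filter_upwards [hle] with n hn
  rw [Real.norm_of_nonneg (by positivity), div_eq_mul_inv, mul_pow]
  gcongr

end LogGrowth

section GurevicEntropy

variable {S : Type*} [Fintype S] {A : S → S → Bool} {G : Type*} [Group G] {φ : S → S → G}
  {ψ : Space A → G}

lemma hGur_eq_limsup_sum_walkCount (hA : ∀ i, ∃ j, A i j = true)
    (hψ : ∀ x, ψ x = φ (x.1 0) (x.1 1)) :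
    hGur ψ = limsup (fun n : ℕ => Real.log (∑ i, walkCount A φ n i i 1 : ℕ) / n) atTop := by
  refine limsup_congr ?_
  filter_upwards [eventually_gt_atTop 0] with n hn
  rw [card_periodic_eq_sum_walkCount hA hψ hn]

lemma IsSkewIrreducible.frequently_walkCount_pos (hirr : IsSkewIrreducible A φ)
    (hA : ∀ i, ∃ j, A i j = true) (i : S) : ∃ᶠ n in atTop, 0 < walkCount A φ n i i 1 := by
  have hwalk (N : ℕ) : ∃ n ≥ N, HasWalk A φ n i i 1 := by
    induction N with
    | zero => exact ⟨0, le_rfl, .nil i⟩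
    | succ N ih =>
      obtain ⟨n, hn, w⟩ := ih
      obtain ⟨j, hij⟩ := hA i
      obtain ⟨m, v⟩ := hirr j i (φ i j)⁻¹
      refine ⟨m + 1 + n, by omega, ?_⟩
      simpa only [mul_inv_cancel, mul_one] using (HasWalk.cons hij v).append w
  refine frequently_atTop.2 fun N => ?_
  obtain ⟨n, hn, w⟩ := hwalk N
  exact ⟨n, hn, w.walkCount_pos⟩

lemma IsSkewIrreducible.hGur_le_log [Nonempty S] (hirr : IsSkewIrreducible A φ)
    (hA : ∀ i, ∃ j, A i j = true) (hψ : ∀ x, ψ x = φ (x.1 0) (x.1 1)) {C s : ℝ} (hs : 0 ≤ s)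
    (hcount : ∀ i n, 0 < n → (walkCount A φ n i i 1 : ℝ) ≤ C * n * s ^ n) :
    hGur ψ ≤ Real.log s := by
  obtain ⟨o⟩ := ‹Nonempty S›
  rw [hGur_eq_limsup_sum_walkCount hA hψ]
  refine limsup_log_div_le (C := Fintype.card S * C) hs ?_ ?_
  · filter_upwards [eventually_gt_atTop 0] with n hn
    push_cast
    refine (Finset.sum_le_card_nsmul _ _ _ fun i _ => hcount i n hn).trans_eq ?_
    rw [nsmul_eq_mul, Finset.card_univ, mul_assoc, mul_assoc, mul_assoc]
  · exact (hirr.frequently_walkCount_pos hA o).mono fun n hn =>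
      hn.trans_le (Finset.single_le_sum (f := fun i => walkCount A φ n i i 1)
        (fun _ _ => Nat.zero_le _) (Finset.mem_univ o))

lemma summable_walkCount_mul_inv_pow (hA : ∀ i, ∃ j, A i j = true)
    (hψ : ∀ x, ψ x = φ (x.1 0) (x.1 1)) (i : S) {l : ℝ} (hl : Real.exp (hGur ψ) < l) :
    Summable fun n => (walkCount A φ n i i 1 : ℝ) * l⁻¹ ^ n := by
  have hl₀ : 0 < l := (Real.exp_pos _).trans hl
  have hlim := (Real.lt_log_iff_exp_lt hl₀).2 hl
  rw [hGur_eq_limsup_sum_walkCount hA hψ] at hlim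
  have hbound : ∀ᶠ n in atTop, ((∑ j, walkCount A φ n j j 1 : ℕ) : ℝ) ≤
      Fintype.card S * n * (Fintype.card S : ℝ) ^ n := by
    filter_upwards [eventually_ge_atTop 1] with n hn
    have hsum := Finset.sum_le_card_nsmul Finset.univ (fun j => walkCount A φ n j j 1) _
      fun j _ => walkCount_le_card_pow n j j 1
    rw [smul_eq_mul, Finset.card_univ] at hsum
    exact_mod_cast hsum.trans (Nat.mul_le_mul_right _ (Nat.le_mul_of_pos_right _ hn))
  refine (summable_mul_inv_pow_of_limsup_log_div_lt (Nat.cast_nonneg _) hbound hl₀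
    hlim).of_nonneg_of_le (fun n => by positivity) fun n => ?_
  gcongr
  exact Finset.single_le_sum (f := fun j => walkCount A φ n j j 1)
    (fun _ _ => Nat.zero_le _) (Finset.mem_univ i)

end GurevicEntropy

lemma Aperiodic.transGen {S : Type*} {A : S → S → Bool} (hA : Aperiodic A) (i j : S) :
    Relation.TransGen (fun i j => A i j = true) i j := by
  obtain ⟨N, hN, hword⟩ := hA
  obtain ⟨w, rfl, rfl, hw⟩ := hword i j
  clear hword
  induction N, hN using Nat.le_induction with
  | base => exact .single (hw 0 one_pos)
  | succ n _ ih => exact (ih fun k hk => hw k (hk.trans n.lt_succ_self)).tail (hw n n.lt_succ_self)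

end DS

theorem statement3_general
    {S : Type*} [Finite S] {A : S → S → Bool}
    (hA : ∀ i j, Relation.TransGen (fun i j => A i j = true) i j)
    {G : Type*} [Group G] (ψ : Space A → G) (hψ : TwoCoord ψ)
    (htrans : TransitiveExt ψ) (hna : ¬ Amenable G) :
    hGur ψ < hGur (fun x => Abelianization.of (ψ x)) := by
  cases nonempty_fintype S
  have hS : Nonempty S := ⟨htrans.choose.1.1 0⟩
  obtain ⟨o⟩ := id hS
  obtain ⟨φ, hφ⟩ := hψ.exists_eq
  have hsucc (i : S) : ∃ j, A i j = true := exists_rel_of_transGen (hA i i)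
  have hirr := htrans.isSkewIrreducible hA hφ
  have hirr_ab := hirr.map (f := Abelianization.of) QuotientGroup.mk_surjective
  have hφ_ab (x : Space A) : Abelianization.of (ψ x) = Abelianization.of (φ (x.1 0) (x.1 1)) := by
    rw [hφ]
  set l := Real.exp (hGur fun x => Abelianization.of (ψ x))
  have hl : 0 < l := Real.exp_pos _
  have hne := logSupersolutions_nonempty_of_forall_gt (o := o) hirr_ab fun l' hl' =>
    logSupersolutions_nonempty_of_summable hirr_ab (hl.trans hl')
      (summable_walkCount_mul_inv_pow hsucc hφ_ab o hl')
  obtain ⟨χ, u, hu⟩ := exists_isExpSupersolution hirr_ab hne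
  obtain ⟨r, hr₀, hr₁, hcount⟩ := hu.comp.exists_walkCount_le_of_not_amenable hl hirr hna
  calc hGur ψ ≤ Real.log (l * r) := hirr.hGur_le_log hsucc hφ (by positivity) hcount
    _ < Real.log l := Real.log_lt_log (by positivity) (mul_lt_of_lt_one_right hl hr₁)
    _ = hGur _ := Real.log_exp _

/-- If `T_ψ` is transitive and `G` is not amenable, then
`h_Gur(T_ψ) < h_Gur(T_{ψ^{ab}})`. -/
theorem statement3
    {S : Type*} [Fintype S] {A : S → S → Bool} (hA : Aperiodic A)
    {G : Type*} [Group G] [Countable G]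
    (ψ : Space A → G) (hψ : TwoCoord ψ)
    (htrans : TransitiveExt ψ) (hna : ¬ Amenable G) :
    hGur ψ < hGur (fun x => Abelianization.of (ψ x)) :=
  statement3_general hA.transGen ψ hψ htrans hna
end
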